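/- arXiv:1308.3956 — 2 statements merged into one kernel-verified Lean document; each statement's English description precedes it below -/
import Mathlib

section
/- There exists a constant C > 0 such that the following holds for every integer n ≥ 2 and every integer b ≥ 1 with m = b². Let x_1,…,x_n and y_1,…,y_n be 2n mutually independent uniformly distributed random points in the unit square [0,1]² ⊂ ℝ², partition [0,1]² into m congruent squares q_1,…,q_m of side 1/b (taken half-open so each point lies in exactly one square), and for each square q_i let A_i := { j : x_j ∈ q_i } and B_i := { j : y_j ∈ q_i }. Let L_i be the minimum of Σ ‖x_j − y_{φ(j)}‖₂ over all partial matchings φ of size min(|A_i|, |B_i|) between A_i and B_i (i.e., injections from the smaller of the two sets into the other, summing the distances of matched pairs), and let L := Σ_{i=1}^m L_i. Then E[L] ≤ C·sqrt( n·log n ). -/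
open MeasureTheory

/-- The closed unit square `[0,1]² ⊂ ℝ²` (with the Euclidean norm). -/
def unitSquare : Set (EuclideanSpace ℝ (Fin 2)) :=
  {p | ∀ i, p i ∈ Set.Icc (0 : ℝ) 1}

/-- The uniform probability measure on the unit square. -/
noncomputable def unifSquare : Measure (EuclideanSpace ℝ (Fin 2)) :=
  volume.restrict unitSquare

/-- The `m = b²` half-open congruent squares of side `1/b` partitioning the unit square:
`gridSquare b (i, j) = [i/b, (i+1)/b) × [j/b, (j+1)/b)` (so every point lies in at most one
square, and almost every point of the unit square lies in exactly one). -/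
def gridSquare (b : ℕ) (ij : Fin b × Fin b) : Set (EuclideanSpace ℝ (Fin 2)) :=
  {p | p 0 ∈ Set.Ico ((ij.1 : ℝ) / b) (((ij.1 : ℝ) + 1) / b) ∧
       p 1 ∈ Set.Ico ((ij.2 : ℝ) / b) (((ij.2 : ℝ) + 1) / b)}

/-- `M` is a maximal local matching between the index sets `A` (robots) and `B` (targets):
a set of robot–target index pairs with all robot indices in `A` and all target indices in `B`,
no robot index and no target index repeated, of the maximum possible size
`min (#A) (#B)`. -/
def IsMaxLocalMatching {n : ℕ} (A B : Set (Fin n)) (M : Finset (Fin n × Fin n)) : Prop :=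
  (∀ p ∈ M, p.1 ∈ A ∧ p.2 ∈ B) ∧
  (∀ p ∈ M, ∀ q ∈ M, p.1 = q.1 → p = q) ∧
  (∀ p ∈ M, ∀ q ∈ M, p.2 = q.2 → p = q) ∧
  M.card = min (Nat.card A) (Nat.card B)

/-- The minimum total Euclidean distance `L_i` of a maximal local matching between the robots
with index in `A` (at positions `x`) and the targets with index in `B` (at positions `y`). -/
noncomputable def minLocalCost {n : ℕ} (x y : Fin n → EuclideanSpace ℝ (Fin 2))
    (A B : Set (Fin n)) : ℝ :=
  sInf {v : ℝ | ∃ M : Finset (Fin n × Fin n),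
    IsMaxLocalMatching A B M ∧ v = ∑ p ∈ M, ‖x p.1 - y p.2‖}



lemma hall_dual {ι κ : Type} [Fintype ι] [Fintype κ] [DecidableEq ι] [DecidableEq κ]
    (h : Fintype.card ι = Fintype.card κ) (c : ι → κ → ℤ) (hc : ∀ i j, 0 ≤ c i j) :
    ∃ (φ : ι → κ) (u : ι → ℤ) (v : κ → ℤ), Function.Bijective φ ∧
      (∀ i j, u i + v j ≤ c i j) ∧ ∀ i, u i + v (φ i) = c i (φ i) := by
  classical
  let e : ι ≃ κ := Fintype.equivOfCardEq h
  obtain ⟨s, ⟨u, v, huv, hs⟩, hmax⟩ := Int.exists_greatest_of_bdd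
    (P := fun s => ∃ (u : ι → ℤ) (v : κ → ℤ), (∀ i j, u i + v j ≤ c i j) ∧
      s = ∑ i, u i + ∑ j, v j)
    ⟨∑ i, c i (e i), by
      rintro z ⟨u, v, huv, rfl⟩
      rw [← Equiv.sum_comp e v, ← Finset.sum_add_distrib]
      exact Finset.sum_le_sum fun i _ => huv i (e i)⟩
    ⟨0, 0, 0, by simpa using hc, by simp⟩
  let t : ι → Finset κ := fun i => Finset.univ.filter fun j => u i + v j = c i j
  have hall : ∀ S : Finset ι, S.card ≤ (S.biUnion t).card := by
    intro S
    by_contra hlt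
    push Not at hlt
    have := hmax (∑ i, (u i + if i ∈ S then 1 else 0) +
        ∑ j, (v j - if j ∈ S.biUnion t then 1 else 0))
      ⟨fun i => u i + if i ∈ S then 1 else 0, fun j => v j - if j ∈ S.biUnion t then 1 else 0,
        ?_, rfl⟩
    · rw [Finset.sum_add_distrib, Finset.sum_sub_distrib, Finset.sum_ite_mem,
        Finset.sum_ite_mem] at this
      simp only [Finset.univ_inter, Finset.sum_const, nsmul_eq_mul, mul_one] at this
      omega
    · intro i j
      have h1 := huv i j
      by_cases hi : i ∈ S
      · by_cases hj : j ∈ S.biUnion t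
        · simp only [hi, hj, if_true]; omega
        · have : u i + v j ≠ c i j := by
            intro h2
            exact hj (Finset.mem_biUnion.2 ⟨i, hi, by simp [t, h2]⟩)
          simp only [hi, hj, if_true, if_false]; omega
      · simp only [hi, if_false]
        split_ifs <;> omega
  obtain ⟨φ, hφ, hφt⟩ := (Finset.all_card_le_biUnion_card_iff_exists_injective t).1 hall
  refine ⟨φ, u, v, (Fintype.bijective_iff_injective_and_card φ).2 ⟨hφ, h⟩, huv, fun i => ?_⟩
  have := hφt i
  simpa [t] using this

/-- grid distance -/
def gd (z w : ℕ × ℕ) : ℤ := |(z.1 : ℤ) - w.1| + |(z.2 : ℤ) - w.2|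

lemma exists_potential {ι κ : Type} [Fintype ι] [Fintype κ] [DecidableEq ι] [DecidableEq κ]
    (h : Fintype.card ι = Fintype.card κ) (x : ι → ℕ × ℕ) (y : κ → ℕ × ℕ) :
    ∃ (φ : ι → κ) (f : ℕ × ℕ → ℤ), Function.Bijective φ ∧
      (∀ a b, |f (a + 1, b) - f (a, b)| ≤ 1) ∧ (∀ a b, |f (a, b + 1) - f (a, b)| ≤ 1) ∧
      ∑ i, gd (x i) (y (φ i)) ≤ ∑ i, f (x i) - ∑ j, f (y j) := by
  classical
  obtain ⟨φ, u, v, hφ, huv, ht⟩ := hall_dual h (fun i j => gd (x i) (y j))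
    (fun i j => by unfold gd; positivity)
  rcases isEmpty_or_nonempty κ with hκ | hκ
  · have : IsEmpty ι := by
      rw [← Fintype.card_eq_zero_iff, h, Fintype.card_eq_zero_iff]; exact hκ
    exact ⟨φ, fun _ => 0, hφ, by simp, by simp, by simp⟩
  let f : ℕ × ℕ → ℤ := fun z => Finset.univ.inf' Finset.univ_nonempty fun j => gd z (y j) - v j
  have hlip : ∀ z w, f z ≤ f w + gd z w := by
    intro z w
    obtain ⟨j, -, hj⟩ := Finset.exists_mem_eq_inf' Finset.univ_nonempty fun j => gd w (y j) - v j
    have h1 : f z ≤ gd z (y j) - v j := Finset.inf'_le _ (Finset.mem_univ j)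
    have h2 : f w = gd w (y j) - v j := hj
    have h3 : gd z (y j) ≤ gd z w + gd w (y j) := by
      unfold gd
      have := abs_sub_le (z.1 : ℤ) w.1 (y j).1
      have := abs_sub_le (z.2 : ℤ) w.2 (y j).2
      linarith
    linarith
  refine ⟨φ, f, hφ, ?_, ?_, ?_⟩
  · intro a b
    have h1 := hlip (a + 1, b) (a, b)
    have h2 := hlip (a, b) (a + 1, b)
    simp [gd] at h1 h2
    rw [abs_le]; constructor <;> linarith
  · intro a b
    have h1 := hlip (a, b + 1) (a, b)
    have h2 := hlip (a, b) (a, b + 1)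
    simp [gd] at h1 h2
    rw [abs_le]; constructor <;> linarith
  · have h1 : ∑ i, gd (x i) (y (φ i)) = ∑ i, u i + ∑ j, v j := by
      rw [← Equiv.sum_comp (Equiv.ofBijective φ hφ) v, ← Finset.sum_add_distrib]
      exact Finset.sum_congr rfl fun i _ => (ht i).symm
    have h2 : ∑ i, u i ≤ ∑ i, f (x i) := Finset.sum_le_sum fun i _ =>
      Finset.le_inf' _ _ fun j _ => by have := huv i j; linarith
    have h3 : ∑ j, f (y j) ≤ ∑ j, - v j := Finset.sum_le_sum fun j _ => by
      refine (Finset.inf'_le _ (Finset.mem_univ j)).trans ?_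
      simp [gd]
    rw [Finset.sum_neg_distrib] at h3
    linarith

/-- one-dimensional averaging kernel -/
noncomputable def ak (k z t : ℕ) : ℝ := if t / 2 ^ k = z / 2 ^ k then (1 / 2 : ℝ) ^ k else 0

noncomputable def Hk (k z m : ℕ) : ℝ := ∑ t ∈ Finset.range m, ak k z t

noncomputable def phi (k z t : ℕ) : ℝ := -(Hk k z (t + 1) - Hk (k + 1) z (t + 1))

lemma ak_nonneg (k z t : ℕ) : 0 ≤ ak k z t := by unfold ak; split_ifs <;> positivity

lemma ak_le (k z t : ℕ) : ak k z t ≤ (1 / 2 : ℝ) ^ k := by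
  unfold ak; split_ifs
  · exact le_rfl
  · positivity

lemma ak_symm (k z t : ℕ) : ak k z t = ak k t z := by unfold ak; simp [eq_comm]

lemma Hk_full (k z m : ℕ) (hm : (z / 2 ^ k + 1) * 2 ^ k ≤ m) : Hk k z m = 1 := by
  have h0 : (Finset.range m).filter (fun t => t / 2 ^ k = z / 2 ^ k)
      = Finset.Ico (z / 2 ^ k * 2 ^ k) ((z / 2 ^ k + 1) * 2 ^ k) := by
    ext t
    simp only [Finset.mem_filter, Finset.mem_range, Finset.mem_Ico]
    rw [Nat.div_eq_iff (by positivity)]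
    have : 1 ≤ 2 ^ k := Nat.one_le_two_pow
    rw [add_mul] at *
    omega
  unfold Hk ak
  rw [← Finset.sum_filter, h0, Finset.sum_const, Nat.card_Ico]
  have : (z / 2 ^ k + 1) * 2 ^ k - z / 2 ^ k * 2 ^ k = 2 ^ k := by
    rw [add_mul]; omega
  rw [this]
  simp

lemma Hk_nonneg (k z m : ℕ) : 0 ≤ Hk k z m := Finset.sum_nonneg fun _ _ => ak_nonneg _ _ _

lemma Hk_le_one (k z m : ℕ) : Hk k z m ≤ 1 := by
  rw [← Hk_full k z (max m ((z / 2 ^ k + 1) * 2 ^ k)) (le_max_right _ _)]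
  exact Finset.sum_le_sum_of_subset_of_nonneg
    (Finset.range_subset_range.2 (le_max_left _ _)) fun _ _ _ => ak_nonneg _ _ _

lemma Hk_zero (k z m : ℕ) (hm : m ≤ z / 2 ^ k * 2 ^ k) : Hk k z m = 0 := by
  refine Finset.sum_eq_zero fun t ht => ?_
  unfold ak
  rw [if_neg]
  intro h
  have h2 : t < m := Finset.mem_range.1 ht
  rw [← h] at hm
  have := Nat.div_mul_le_self t (2 ^ k)
  omega

lemma abs_phi_le (k z t : ℕ) : |phi k z t| ≤ 1 := by
  unfold phi
  have h1 := Hk_nonneg k z (t + 1)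
  have h2 := Hk_nonneg (k + 1) z (t + 1)
  have h3 := Hk_le_one k z (t + 1)
  have h4 := Hk_le_one (k + 1) z (t + 1)
  rw [abs_le]; constructor <;> linarith

lemma phi_eq_zero (k z t : ℕ) (h : t / 2 ^ (k + 1) ≠ z / 2 ^ (k + 1)) : phi k z t = 0 := by
  have e : 2 ^ (k + 1) = 2 ^ k * 2 := pow_succ 2 k
  have hz : z / 2 ^ (k + 1) = z / 2 ^ k / 2 := by rw [e, Nat.div_div_eq_div_mul]
  have h1 : z / 2 ^ (k + 1) * 2 ^ (k + 1) ≤ z / 2 ^ k * 2 ^ k := by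
    rw [hz, e, mul_comm (2 ^ k) 2, ← mul_assoc]
    exact Nat.mul_le_mul_right _ (Nat.div_mul_le_self _ _)
  have h2 : (z / 2 ^ k + 1) * 2 ^ k ≤ (z / 2 ^ (k + 1) + 1) * 2 ^ (k + 1) := by
    rw [hz, e, mul_comm (2 ^ k) 2, ← mul_assoc]
    exact Nat.mul_le_mul_right _ (by omega)
  unfold phi
  rcases lt_or_gt_of_ne h with h | h
  · have : t + 1 ≤ z / 2 ^ (k + 1) * 2 ^ (k + 1) := by
      rw [Nat.div_lt_iff_lt_mul (by positivity)] at h; omega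
    rw [Hk_zero k z _ (this.trans h1), Hk_zero _ _ _ this]; simp
  · have : (z / 2 ^ (k + 1) + 1) * 2 ^ (k + 1) ≤ t + 1 := by
      have h3 : z / 2 ^ (k + 1) + 1 ≤ t / 2 ^ (k + 1) := h
      rw [Nat.le_div_iff_mul_le (by positivity)] at h3; omega
    rw [Hk_full k z _ (h2.trans this), Hk_full _ _ _ this]; simp

lemma Hk_N (b K k z : ℕ) (hk : k ≤ K) (hz : z < b * 2 ^ K) : Hk k z (b * 2 ^ K) = 1 := by
  apply Hk_full
  obtain ⟨l, rfl⟩ := Nat.exists_eq_add_of_le hk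
  have e : b * 2 ^ (k + l) = b * 2 ^ l * 2 ^ k := by rw [pow_add]; ring
  rw [e] at hz ⊢
  exact Nat.mul_le_mul_right _ ((Nat.div_lt_iff_lt_mul (by positivity)).2 hz)

lemma sum_phi (b K k t : ℕ) (hk : k < K) (ht : t < b * 2 ^ K) :
    ∑ z ∈ Finset.range (b * 2 ^ K), phi k z t = 0 := by
  have h : ∀ j, j ≤ K → ∑ z ∈ Finset.range (b * 2 ^ K), Hk j z (t + 1) = t + 1 := by
    intro j hj
    unfold Hk
    rw [Finset.sum_comm]
    have : ∀ s ∈ Finset.range (t + 1), ∑ z ∈ Finset.range (b * 2 ^ K), ak j z s = 1 := by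
      intro s hs
      have hs' := Finset.mem_range.1 hs
      rw [← Hk_N b K j s hj (by omega)]
      exact Finset.sum_congr rfl fun z _ => ak_symm _ _ _
    rw [Finset.sum_congr rfl this]; simp
  unfold phi
  rw [Finset.sum_neg_distrib, Finset.sum_sub_distrib, h k hk.le, h (k + 1) hk]; simp

lemma abel (e g : ℕ → ℝ) (m : ℕ) : ∑ t ∈ Finset.range m, e t * g t =
    (∑ t ∈ Finset.range m, e t) * g m -
      ∑ t ∈ Finset.range m, (∑ s ∈ Finset.range (t + 1), e s) * (g (t + 1) - g t) := by
  induction m with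
  | zero => simp
  | succ m ih =>
    rw [Finset.sum_range_succ, ih, Finset.sum_range_succ _ m,
      Finset.sum_range_succ (fun t => (∑ s ∈ Finset.range (t + 1), e s) * (g (t + 1) - g t))]
    rw [Finset.sum_range_succ _ m]
    ring

lemma ak_diff (b K k z : ℕ) (hk : k < K) (hz : z < b * 2 ^ K) (g : ℕ → ℝ) :
    ∑ t ∈ Finset.range (b * 2 ^ K), ak k z t * g t
      - ∑ t ∈ Finset.range (b * 2 ^ K), ak (k + 1) z t * g t
    = ∑ t ∈ Finset.range (b * 2 ^ K), phi k z t * (g (t + 1) - g t) := by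
  rw [abel (ak k z) g, abel (ak (k + 1) z) g]
  have h1 := Hk_N b K k z hk.le hz
  have h2 := Hk_N b K (k + 1) z hk hz
  unfold Hk at h1 h2
  rw [h1, h2]
  unfold phi Hk
  simp only [neg_mul, sub_mul, Finset.sum_neg_distrib, Finset.sum_sub_distrib]
  ring

lemma ak_zero_sum (N z : ℕ) (hz : z < N) (g : ℕ → ℝ) :
    ∑ t ∈ Finset.range N, ak 0 z t * g t = g z := by
  unfold ak
  simp [hz]

/-- two-dimensional averages -/
noncomputable def Pk (N k l : ℕ) (f : ℕ × ℕ → ℝ) (z : ℕ × ℕ) : ℝ :=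
  ∑ s ∈ Finset.range N, ∑ t ∈ Finset.range N, ak k z.1 s * ak l z.2 t * f (s, t)

noncomputable def psx (K : ℕ) (R z : ℕ × ℕ) : ℝ :=
  ∑ k ∈ Finset.range K, phi k z.1 R.1 * ak k z.2 R.2

noncomputable def psy (K : ℕ) (R z : ℕ × ℕ) : ℝ :=
  ∑ k ∈ Finset.range K, ak (k + 1) z.1 R.1 * phi k z.2 R.2

lemma Pk_zero (N : ℕ) (f : ℕ × ℕ → ℝ) (z : ℕ × ℕ) (h1 : z.1 < N) (h2 : z.2 < N) :
    Pk N 0 0 f z = f z := by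
  unfold Pk
  have : ∀ s ∈ Finset.range N, ∑ t ∈ Finset.range N, ak 0 z.1 s * ak 0 z.2 t * f (s, t)
      = ak 0 z.1 s * f (s, z.2) := by
    intro s _
    rw [← ak_zero_sum N z.2 h2 (fun t => f (s, t)), Finset.mul_sum]
    exact Finset.sum_congr rfl fun t _ => by ring
  rw [Finset.sum_congr rfl this, ak_zero_sum N z.1 h1 (fun s => f (s, z.2))]

lemma Pk_diff1 (b K k l : ℕ) (hk : k < K) (f : ℕ × ℕ → ℝ) (z : ℕ × ℕ) (h1 : z.1 < b * 2 ^ K) :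
    Pk (b * 2 ^ K) k l f z - Pk (b * 2 ^ K) (k + 1) l f z
    = ∑ s ∈ Finset.range (b * 2 ^ K), ∑ t ∈ Finset.range (b * 2 ^ K),
      phi k z.1 s * ak l z.2 t * (f (s + 1, t) - f (s, t)) := by
  unfold Pk
  rw [Finset.sum_comm (f := fun s t => ak k z.1 s * ak l z.2 t * f (s, t)),
    Finset.sum_comm (f := fun s t => ak (k + 1) z.1 s * ak l z.2 t * f (s, t)),
    Finset.sum_comm (f := fun s t => phi k z.1 s * ak l z.2 t * (f (s + 1, t) - f (s, t))),
    ← Finset.sum_sub_distrib]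
  refine Finset.sum_congr rfl fun t _ => ?_
  have := ak_diff b K k z.1 hk h1 (fun s => ak l z.2 t * f (s, t))
  simp only [mul_assoc, mul_sub] at this ⊢
  exact this

lemma Pk_diff2 (b K k l : ℕ) (hk : k < K) (f : ℕ × ℕ → ℝ) (z : ℕ × ℕ) (h1 : z.2 < b * 2 ^ K) :
    Pk (b * 2 ^ K) l k f z - Pk (b * 2 ^ K) l (k + 1) f z
    = ∑ s ∈ Finset.range (b * 2 ^ K), ∑ t ∈ Finset.range (b * 2 ^ K),
      ak l z.1 s * phi k z.2 t * (f (s, t + 1) - f (s, t)) := by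
  unfold Pk
  rw [← Finset.sum_sub_distrib]
  refine Finset.sum_congr rfl fun s _ => ?_
  have := ak_diff b K k z.2 hk h1 (fun t => ak l z.1 s * f (s, t))
  simp only [mul_assoc, mul_sub, mul_left_comm (ak l z.1 s)] at this ⊢
  exact this

lemma repr_f (b K : ℕ) (f : ℕ × ℕ → ℝ) (z : ℕ × ℕ) (h1 : z.1 < b * 2 ^ K)
    (h2 : z.2 < b * 2 ^ K) :
    f z = Pk (b * 2 ^ K) K K f z +
      ∑ s ∈ Finset.range (b * 2 ^ K), ∑ t ∈ Finset.range (b * 2 ^ K),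
        (psx K (s, t) z * (f (s + 1, t) - f (s, t)) +
          psy K (s, t) z * (f (s, t + 1) - f (s, t))) := by
  have h : f z - Pk (b * 2 ^ K) K K f z = ∑ k ∈ Finset.range K,
      (Pk (b * 2 ^ K) k k f z - Pk (b * 2 ^ K) (k + 1) (k + 1) f z) := by
    rw [Finset.sum_range_sub' (fun k => Pk (b * 2 ^ K) k k f z), Pk_zero _ _ _ h1 h2]
  have h' : ∀ k ∈ Finset.range K,
      (Pk (b * 2 ^ K) k k f z - Pk (b * 2 ^ K) (k + 1) (k + 1) f z) =
      ∑ s ∈ Finset.range (b * 2 ^ K), ∑ t ∈ Finset.range (b * 2 ^ K),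
      (phi k z.1 s * ak k z.2 t * (f (s + 1, t) - f (s, t)) +
       ak (k + 1) z.1 s * phi k z.2 t * (f (s, t + 1) - f (s, t))) := by
    intro k hk
    have hk := Finset.mem_range.1 hk
    have e1 := Pk_diff1 b K k k hk f z h1
    have e2 := Pk_diff2 b K k (k + 1) hk f z h2
    simp only [Finset.sum_add_distrib]
    rw [← e1, ← e2]; ring
  rw [Finset.sum_congr rfl h', Finset.sum_comm] at h
  rw [← sub_eq_iff_eq_add', h]
  refine Finset.sum_congr rfl fun s _ => ?_
  rw [Finset.sum_comm]
  refine Finset.sum_congr rfl fun t _ => ?_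
  rw [Finset.sum_add_distrib]
  unfold psx psy
  rw [Finset.sum_mul, Finset.sum_mul]

lemma Pk_congr (N K : ℕ) (f : ℕ × ℕ → ℝ) (z w : ℕ × ℕ) (h1 : z.1 / 2 ^ K = w.1 / 2 ^ K)
    (h2 : z.2 / 2 ^ K = w.2 / 2 ^ K) : Pk N K K f z = Pk N K K f w := by
  unfold Pk ak; rw [h1, h2]


def blk (K : ℕ) (z : ℕ × ℕ) : ℕ × ℕ := (z.1 / 2 ^ K, z.2 / 2 ^ K)

lemma blk_mono {k K : ℕ} (hk : k ≤ K) {z w : ℕ × ℕ} (h : blk k z = blk k w) :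
    blk K z = blk K w := by
  obtain ⟨l, rfl⟩ := Nat.exists_eq_add_of_le hk
  unfold blk at *
  simp only [Prod.mk.injEq] at h ⊢
  rw [pow_add, ← Nat.div_div_eq_div_mul, ← Nat.div_div_eq_div_mul, ← Nat.div_div_eq_div_mul,
    ← Nat.div_div_eq_div_mul, h.1, h.2]
  exact ⟨rfl, rfl⟩

noncomputable def uk (R z : ℕ × ℕ) (k : ℕ) : ℝ := if blk (k + 1) z = blk (k + 1) R then 1 else 0

lemma ak_eq_zero' (k z t : ℕ) (h : t / 2 ^ (k + 1) ≠ z / 2 ^ (k + 1)) : ak k z t = 0 := by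
  unfold ak
  rw [if_neg]
  intro h'
  apply h
  rw [pow_succ, ← Nat.div_div_eq_div_mul, ← Nat.div_div_eq_div_mul, h']

lemma abs_psx_le (K : ℕ) (R z : ℕ × ℕ) :
    |psx K R z| ≤ ∑ k ∈ Finset.range K, (1 / 2 : ℝ) ^ k * uk R z k := by
  unfold psx
  refine (Finset.abs_sum_le_sum_abs _ _).trans (Finset.sum_le_sum fun k _ => ?_)
  unfold uk blk
  split_ifs with h
  · rw [abs_mul, abs_of_nonneg (ak_nonneg _ _ _), mul_one]
    have := abs_phi_le k z.1 R.1
    have := ak_le k z.2 R.2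
    have := ak_nonneg k z.2 R.2
    nlinarith
  · simp only [Prod.mk.injEq, not_and_or] at h
    rcases h with h | h
    · rw [phi_eq_zero _ _ _ (Ne.symm h)]; simp
    · rw [ak_eq_zero' _ _ _ (Ne.symm h)]; simp

lemma abs_psy_le (K : ℕ) (R z : ℕ × ℕ) :
    |psy K R z| ≤ ∑ k ∈ Finset.range K, (1 / 2 : ℝ) ^ k * uk R z k := by
  unfold psy
  refine (Finset.abs_sum_le_sum_abs _ _).trans (Finset.sum_le_sum fun k _ => ?_)
  unfold uk blk
  split_ifs with h
  · rw [abs_mul, abs_of_nonneg (ak_nonneg _ _ _), mul_one]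
    have := abs_phi_le k z.2 R.2
    have h1 := ak_le (k + 1) z.1 R.1
    have := ak_nonneg (k + 1) z.1 R.1
    rw [pow_succ] at h1
    have : (0 : ℝ) < (1 / 2) ^ k := by positivity
    nlinarith
  · simp only [Prod.mk.injEq, not_and_or] at h
    rcases h with h | h
    · have : ak (k + 1) z.1 R.1 = 0 := by unfold ak; rw [if_neg (Ne.symm h)]
      rw [this]; simp
    · rw [phi_eq_zero _ _ _ (Ne.symm h)]; simp

lemma ps_zero_aux (K : ℕ) (R z : ℕ × ℕ) (h : blk K z ≠ blk K R) :
    ∑ k ∈ Finset.range K, (1 / 2 : ℝ) ^ k * uk R z k = 0 := by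
  refine Finset.sum_eq_zero fun k hk => ?_
  unfold uk
  rw [if_neg]; · simp
  intro h'
  exact h (blk_mono (Finset.mem_range.1 hk) h')

lemma psx_zero (K : ℕ) (R z : ℕ × ℕ) (h : blk K z ≠ blk K R) : psx K R z = 0 := by
  have := abs_psx_le K R z
  rw [ps_zero_aux K R z h] at this
  exact abs_nonpos_iff.1 this

lemma psy_zero (K : ℕ) (R z : ℕ × ℕ) (h : blk K z ≠ blk K R) : psy K R z = 0 := by
  have := abs_psy_le K R z
  rw [ps_zero_aux K R z h] at this
  exact abs_nonpos_iff.1 this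

lemma geom_sq (K : ℕ) : ∀ e : ℕ → ℝ, (∀ k, e k = 0 ∨ e k = 1) →
    (∑ k ∈ Finset.range K, (1 / 2 : ℝ) ^ k * e k) ^ 2 ≤
      4 * ∑ k ∈ Finset.range K, (1 / 4 : ℝ) ^ k * e k := by
  induction K with
  | zero => simp
  | succ K ih =>
    intro e he
    have h0 : ∀ k, 0 ≤ e k := fun k => by rcases he k with h | h <;> simp [h]
    have h1 : ∀ k, e k ≤ 1 := fun k => by rcases he k with h | h <;> simp [h]
    rcases he 0 with h | h
    · have := ih (fun k => e (k + 1)) fun k => he _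
      rw [Finset.sum_range_succ', Finset.sum_range_succ', h]
      have e1 : ∀ c : ℝ, ∑ k ∈ Finset.range K, c ^ (k + 1) * e (k + 1)
          = c * ∑ k ∈ Finset.range K, c ^ k * e (k + 1) := by
        intro c; rw [Finset.mul_sum]; exact Finset.sum_congr rfl fun k _ => by ring
      rw [e1, e1]
      nlinarith
    · have hS : ∑ k ∈ Finset.range (K + 1), (1 / 2 : ℝ) ^ k * e k ≤ 2 := by
        refine le_trans ?_ (sum_geometric_two_le (K + 1))
        exact Finset.sum_le_sum fun k _ => mul_le_of_le_one_right (by positivity) (h1 k)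
      have hS0 : 0 ≤ ∑ k ∈ Finset.range (K + 1), (1 / 2 : ℝ) ^ k * e k :=
        Finset.sum_nonneg fun k _ => mul_nonneg (by positivity) (h0 k)
      have hT : 1 ≤ ∑ k ∈ Finset.range (K + 1), (1 / 4 : ℝ) ^ k * e k := by
        have := Finset.single_le_sum (f := fun k => (1 / 4 : ℝ) ^ k * e k)
          (fun k _ => mul_nonneg (by positivity) (h0 k)) (Finset.mem_range.2 (Nat.succ_pos K))
        simpa [h] using this
      nlinarith

lemma sum_uk (b K k : ℕ) (hk : k < K) (R : ℕ × ℕ) (h1 : R.1 < b * 2 ^ K) (h2 : R.2 < b * 2 ^ K) :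
    ∑ s ∈ Finset.range (b * 2 ^ K), ∑ t ∈ Finset.range (b * 2 ^ K), uk R (s, t) k
      = 4 ^ (k + 1) := by
  have e1 := Hk_N b K (k + 1) R.1 hk h1
  have e2 := Hk_N b K (k + 1) R.2 hk h2
  have : ∀ s t, uk R (s, t) k = 4 ^ (k + 1) * (ak (k + 1) R.1 s * ak (k + 1) R.2 t) := by
    intro s t
    unfold uk blk ak
    have h4 : (4 : ℝ) ^ (k + 1) * ((1 / 2) ^ (k + 1) * (1 / 2) ^ (k + 1)) = 1 := by
      rw [← mul_pow, ← mul_pow]; norm_num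
    by_cases ha : s / 2 ^ (k + 1) = R.1 / 2 ^ (k + 1) <;>
    by_cases hb : t / 2 ^ (k + 1) = R.2 / 2 ^ (k + 1)
    · simp only [ha, hb, if_true, h4]
    all_goals simp [ha, hb]
  simp only [this, ← Finset.mul_sum]
  unfold Hk at e1 e2
  rw [e2]
  simp [e1]

lemma sum_ps_aux (b K : ℕ) (R : ℕ × ℕ) (h1 : R.1 < b * 2 ^ K) (h2 : R.2 < b * 2 ^ K)
    (ψ : ℕ × ℕ → ℝ) (hψ : ∀ z, |ψ z| ≤ ∑ k ∈ Finset.range K, (1 / 2 : ℝ) ^ k * uk R z k) :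
    ∑ s ∈ Finset.range (b * 2 ^ K), ∑ t ∈ Finset.range (b * 2 ^ K), ψ (s, t) ^ 2 ≤ 16 * K := by
  calc _ ≤ ∑ s ∈ Finset.range (b * 2 ^ K), ∑ t ∈ Finset.range (b * 2 ^ K),
        4 * ∑ k ∈ Finset.range K, (1 / 4 : ℝ) ^ k * uk R (s, t) k := by
        refine Finset.sum_le_sum fun s _ => Finset.sum_le_sum fun t _ => ?_
        refine le_trans ?_ (geom_sq K (uk R (s, t)) fun k => ?_)
        · rw [← sq_abs]
          exact pow_le_pow_left₀ (abs_nonneg _) (hψ _) 2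
        · unfold uk; split_ifs <;> simp
    _ = ∑ k ∈ Finset.range K, 4 * (1 / 4 : ℝ) ^ k * ∑ s ∈ Finset.range (b * 2 ^ K),
        ∑ t ∈ Finset.range (b * 2 ^ K), uk R (s, t) k := by
        simp only [Finset.mul_sum]
        rw [Finset.sum_comm (s := Finset.range K)]
        refine Finset.sum_congr rfl fun s _ => ?_
        rw [Finset.sum_comm]
        simp only [mul_assoc]
    _ = ∑ k ∈ Finset.range K, 16 := by
        refine Finset.sum_congr rfl fun k hk => ?_
        rw [sum_uk b K k (Finset.mem_range.1 hk) R h1 h2, mul_assoc, pow_succ, ← mul_assoc _ _ 4,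
          ← mul_pow]
        norm_num
    _ = 16 * K := by simp [mul_comm]

lemma sum_psx (b K : ℕ) (R : ℕ × ℕ) (h1 : R.1 < b * 2 ^ K) :
    ∑ s ∈ Finset.range (b * 2 ^ K), ∑ t ∈ Finset.range (b * 2 ^ K), psx K R (s, t) = 0 := by
  rw [Finset.sum_comm]
  refine Finset.sum_eq_zero fun t _ => ?_
  unfold psx
  rw [Finset.sum_comm]
  refine Finset.sum_eq_zero fun k hk => ?_
  simp only
  rw [← Finset.sum_mul, sum_phi b K k R.1 (Finset.mem_range.1 hk) h1, zero_mul]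

lemma sum_psy (b K : ℕ) (R : ℕ × ℕ) (h2 : R.2 < b * 2 ^ K) :
    ∑ s ∈ Finset.range (b * 2 ^ K), ∑ t ∈ Finset.range (b * 2 ^ K), psy K R (s, t) = 0 := by
  refine Finset.sum_eq_zero fun s _ => ?_
  unfold psy
  rw [Finset.sum_comm]
  refine Finset.sum_eq_zero fun k hk => ?_
  simp only
  rw [← Finset.mul_sum, sum_phi b K k R.2 (Finset.mem_range.1 hk) h2, mul_zero]

/-! ### variance -/

lemma sum_update {n : ℕ} {G : Type} [Fintype G] (i : Fin n) (h : (Fin n → G) → ℝ) :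
    ∑ x : Fin n → G, ∑ z : G, h (Function.update x i z) = Fintype.card G * ∑ x, h x := by
  classical
  let F : (Fin n → G) × G → (Fin n → G) × G := fun p => (Function.update p.1 i p.2, p.1 i)
  have hF : Function.Involutive F := by
    rintro ⟨x, z⟩; simp [F]
  rw [← Fintype.sum_prod_type' (f := fun x z => h (Function.update x i z))]
  have := Equiv.sum_comp hF.toPerm (fun p => h p.1)
  simp only [Function.Involutive.coe_toPerm, F] at this
  rw [this, Fintype.sum_prod_type]
  simp [Finset.mul_sum]

lemma variance_bound {n : ℕ} {G Q : Type} [Fintype G] [DecidableEq Q] (r : G → Q) (q₀ : Q)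
    (ψ : G → ℝ) (h0 : ∑ z, ψ z = 0) (hq : ∀ z, ψ z ≠ 0 → r z = q₀)
    (w : (Fin n → Q) → Fin n → ℝ) (hw : ∀ p i, |w p i| ≤ 1) :
    Fintype.card G * ∑ x : Fin n → G, (∑ i, w (r ∘ x) i * ψ (x i)) ^ 2
      ≤ n * Fintype.card G ^ n * ∑ z, ψ z ^ 2 := by
  classical
  have hup : ∀ (x : Fin n → G) i z, r ∘ Function.update x i z = Function.update (r ∘ x) i (r z) :=
    fun x i z => Function.comp_update r x i z
  have hoff : ∀ i j, i ≠ j → Fintype.card G * ∑ x : Fin n → G,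
      (w (r ∘ x) i * ψ (x i)) * (w (r ∘ x) j * ψ (x j)) = 0 := by
    intro i j hij
    rw [← sum_update i]
    refine Finset.sum_eq_zero fun x _ => ?_
    have : ∀ z, (w (r ∘ Function.update x i z) i * ψ (Function.update x i z i)) *
        (w (r ∘ Function.update x i z) j * ψ (Function.update x i z j))
        = (w (Function.update (r ∘ x) i q₀) i * w (Function.update (r ∘ x) i q₀) j * ψ (x j))
          * ψ z := by
      intro z
      rw [hup, Function.update_self, Function.update_of_ne hij.symm]
      by_cases hz : ψ z = 0
      · simp [hz]
      · rw [hq z hz]; ring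
    simp only [this]
    rw [← Finset.mul_sum, h0, mul_zero]
  have hdiag : ∀ i, Fintype.card G * ∑ x : Fin n → G,
      (w (r ∘ x) i * ψ (x i)) * (w (r ∘ x) i * ψ (x i)) ≤
        Fintype.card G ^ n * ∑ z, ψ z ^ 2 := by
    intro i
    calc _ ≤ Fintype.card G * ∑ x : Fin n → G, ψ (x i) ^ 2 := by
          refine mul_le_mul_of_nonneg_left (Finset.sum_le_sum fun x _ => ?_) (by positivity)
          have h1 := hw (r ∘ x) i
          have h2 : (w (r ∘ x) i) ^ 2 ≤ 1 := by
            rw [← sq_abs]; exact pow_le_one₀ (abs_nonneg _) h1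
          nlinarith [sq_nonneg (ψ (x i))]
      _ = _ := by
          rw [← sum_update i]
          simp
  calc _ = ∑ i, ∑ j, Fintype.card G * ∑ x : Fin n → G,
        (w (r ∘ x) i * ψ (x i)) * (w (r ∘ x) j * ψ (x j)) := by
        simp only [← Finset.mul_sum]
        congr 1
        rw [Finset.sum_congr rfl fun x _ => by rw [sq, Finset.sum_mul_sum]]
        rw [Finset.sum_comm]
        refine Finset.sum_congr rfl fun i _ => ?_
        rw [Finset.sum_comm]
    _ = ∑ i, Fintype.card G * ∑ x : Fin n → G,
        (w (r ∘ x) i * ψ (x i)) * (w (r ∘ x) i * ψ (x i)) := by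
        refine Finset.sum_congr rfl fun i _ => ?_
        exact Finset.sum_eq_single i (fun j _ hj => hoff i j hj.symm) (by simp)
    _ ≤ ∑ i : Fin n, (Fintype.card G ^ n * ∑ z, ψ z ^ 2 : ℝ) :=
        Finset.sum_le_sum fun i _ => hdiag i
    _ = _ := by simp; ring


/-- canonical subset of `A` of size `min |A| |B|` -/
noncomputable def sel {n : ℕ} (A B : Finset (Fin n)) : Finset (Fin n) :=
  (Finset.exists_subset_card_eq (min_le_left A.card B.card)).choose

lemma sel_sub {n : ℕ} (A B : Finset (Fin n)) : sel A B ⊆ A :=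
  (Finset.exists_subset_card_eq (min_le_left A.card B.card)).choose_spec.1

lemma sel_card {n : ℕ} (A B : Finset (Fin n)) : (sel A B).card = min A.card B.card :=
  (Finset.exists_subset_card_eq (min_le_left A.card B.card)).choose_spec.2

/-- indices with label `q` -/
def idx {n : ℕ} (p : Fin n → ℕ × ℕ) (q : ℕ × ℕ) : Finset (Fin n) :=
  Finset.univ.filter fun i => p i = q

/-- the linear statistic (flow value) -/
noncomputable def Tst {n : ℕ} (K : ℕ) (q : ℕ × ℕ) (ψ : ℕ × ℕ → ℝ) (x y : Fin n → ℕ × ℕ) : ℝ :=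
  ∑ i ∈ sel (idx (blk K ∘ x) q) (idx (blk K ∘ y) q), ψ (x i)
    - ∑ j ∈ sel (idx (blk K ∘ y) q) (idx (blk K ∘ x) q), ψ (y j)

lemma block_bound {n : ℕ} (b K : ℕ) (x y : Fin n → ℕ × ℕ)
    (hx : ∀ i, (x i).1 < b * 2 ^ K ∧ (x i).2 < b * 2 ^ K)
    (hy : ∀ i, (y i).1 < b * 2 ^ K ∧ (y i).2 < b * 2 ^ K) (q : ℕ × ℕ) :
    ∃ M : Finset (Fin n × Fin n),
      IsMaxLocalMatching (idx (blk K ∘ x) q : Set (Fin n)) (idx (blk K ∘ y) q : Set (Fin n)) M ∧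
      ((∑ p ∈ M, gd (x p.1) (y p.2) : ℤ) : ℝ) ≤
        ∑ s ∈ Finset.range (b * 2 ^ K), ∑ t ∈ Finset.range (b * 2 ^ K),
          if blk K (s, t) = q then
            |Tst K q (psx K (s, t)) x y| + |Tst K q (psy K (s, t)) x y| else 0 := by
  classical
  set A := idx (blk K ∘ x) q with hA
  set B := idx (blk K ∘ y) q with hB
  have hcard : (sel A B).card = (sel B A).card := by
    rw [sel_card, sel_card, min_comm]
  obtain ⟨φ, f, hφ, hf1, hf2, hsum⟩ := exists_potential (ι := sel A B) (κ := sel B A)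
    (by simpa using hcard) (fun i => x i) (fun j => y j)
  let g : sel A B → Fin n × Fin n := fun i => (i, φ i)
  have hg : Function.Injective g := by
    intro i j h
    exact Subtype.ext (congrArg Prod.fst h)
  refine ⟨Finset.univ.image g, ⟨?_, ?_, ?_, ?_⟩, ?_⟩
  · intro p hp
    obtain ⟨i, -, rfl⟩ := Finset.mem_image.1 hp
    exact ⟨Finset.mem_coe.2 (sel_sub _ _ i.2), Finset.mem_coe.2 (sel_sub _ _ (φ i).2)⟩
  · intro p hp p' hp' h
    obtain ⟨i, -, rfl⟩ := Finset.mem_image.1 hp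
    obtain ⟨j, -, rfl⟩ := Finset.mem_image.1 hp'
    exact congrArg g (Subtype.ext h)
  · intro p hp p' hp' h
    obtain ⟨i, -, rfl⟩ := Finset.mem_image.1 hp
    obtain ⟨j, -, rfl⟩ := Finset.mem_image.1 hp'
    exact congrArg g (hφ.1 (Subtype.ext h))
  · rw [Finset.card_image_of_injective _ hg]
    simp [sel_card, Nat.card_eq_fintype_card]
  · rw [Finset.sum_image (fun i _ j _ h => hg h)]
    refine le_trans (Int.cast_le.2 hsum) ?_
    push_cast
    rw [Finset.sum_coe_sort (sel A B) (fun i => ((f (x i) : ℤ) : ℝ)),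
      Finset.sum_coe_sort (sel B A) (fun i => ((f (y i) : ℤ) : ℝ))]
    set F : ℕ × ℕ → ℝ := fun z => (f z : ℝ) with hF
    have hF1 : ∀ a b, |F (a + 1, b) - F (a, b)| ≤ 1 := by
      intro a b; have := hf1 a b; simp only [hF]; exact_mod_cast this
    have hF2 : ∀ a b, |F (a, b + 1) - F (a, b)| ≤ 1 := by
      intro a b; have := hf2 a b; simp only [hF]; exact_mod_cast this
    -- the common constant
    obtain ⟨c, hcx, hcy⟩ : ∃ c : ℝ, (∀ i ∈ sel A B, Pk (b * 2 ^ K) K K F (x i) = c) ∧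
        (∀ j ∈ sel B A, Pk (b * 2 ^ K) K K F (y j) = c) := by
      refine ⟨Pk (b * 2 ^ K) K K F (q.1 * 2 ^ K, q.2 * 2 ^ K), ?_, ?_⟩
      · intro i hi
        have h := (Finset.mem_filter.1 (sel_sub _ _ hi)).2
        simp only [Function.comp, blk] at h
        apply Pk_congr
        · simp [← h]
        · simp [← h]
      · intro i hi
        have h := (Finset.mem_filter.1 (sel_sub _ _ hi)).2
        simp only [Function.comp, blk] at h
        apply Pk_congr
        · simp [← h]
        · simp [← h]
    have ex : ∑ i ∈ sel A B, F (x i) = (sel A B).card * c +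
        ∑ s ∈ Finset.range (b * 2 ^ K), ∑ t ∈ Finset.range (b * 2 ^ K),
        ((∑ i ∈ sel A B, psx K (s, t) (x i)) * (F (s + 1, t) - F (s, t)) +
          (∑ i ∈ sel A B, psy K (s, t) (x i)) * (F (s, t + 1) - F (s, t))) := by
      rw [Finset.sum_congr rfl fun i hi => by
        rw [repr_f b K F (x i) (hx i).1 (hx i).2, hcx i hi]]
      rw [Finset.sum_add_distrib, Finset.sum_const, nsmul_eq_mul, Finset.sum_comm]
      congr 1
      refine Finset.sum_congr rfl fun s _ => ?_
      rw [Finset.sum_comm]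
      refine Finset.sum_congr rfl fun t _ => ?_
      rw [Finset.sum_add_distrib, Finset.sum_mul, Finset.sum_mul]
    have ey : ∑ i ∈ sel B A, F (y i) = (sel B A).card * c +
        ∑ s ∈ Finset.range (b * 2 ^ K), ∑ t ∈ Finset.range (b * 2 ^ K),
        ((∑ i ∈ sel B A, psx K (s, t) (y i)) * (F (s + 1, t) - F (s, t)) +
          (∑ i ∈ sel B A, psy K (s, t) (y i)) * (F (s, t + 1) - F (s, t))) := by
      rw [Finset.sum_congr rfl fun i hi => by
        rw [repr_f b K F (y i) (hy i).1 (hy i).2, hcy i hi]]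
      rw [Finset.sum_add_distrib, Finset.sum_const, nsmul_eq_mul, Finset.sum_comm]
      congr 1
      refine Finset.sum_congr rfl fun s _ => ?_
      rw [Finset.sum_comm]
      refine Finset.sum_congr rfl fun t _ => ?_
      rw [Finset.sum_add_distrib, Finset.sum_mul, Finset.sum_mul]
    rw [ex, ey, hcard, add_sub_add_left_eq_sub, ← Finset.sum_sub_distrib]
    refine Finset.sum_le_sum fun s _ => ?_
    rw [← Finset.sum_sub_distrib]
    refine Finset.sum_le_sum fun t _ => ?_
    have key : ∀ T D : ℝ, |D| ≤ 1 → T * D ≤ |T| := by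
      intro T D hD
      calc T * D ≤ |T * D| := le_abs_self _
        _ = |T| * |D| := abs_mul _ _
        _ ≤ |T| := mul_le_of_le_one_right (abs_nonneg _) hD
    split_ifs with hq
    · have k1 := key (Tst K q (psx K (s, t)) x y) _ (hF1 s t)
      have k2 := key (Tst K q (psy K (s, t)) x y) _ (hF2 s t)
      refine le_trans (le_of_eq ?_) (add_le_add k1 k2)
      unfold Tst
      ring
    · have hxb : ∀ i ∈ sel A B, blk K (x i) ≠ blk K (s, t) := by
        intro i hi
        have h := (Finset.mem_filter.1 (sel_sub _ _ hi)).2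
        simp only [Function.comp] at h
        rw [h]; exact Ne.symm hq
      have hyb : ∀ i ∈ sel B A, blk K (y i) ≠ blk K (s, t) := by
        intro i hi
        have h := (Finset.mem_filter.1 (sel_sub _ _ hi)).2
        simp only [Function.comp] at h
        rw [h]; exact Ne.symm hq
      rw [Finset.sum_eq_zero fun i hi => psx_zero K _ _ (hxb i hi),
        Finset.sum_eq_zero fun i hi => psy_zero K _ _ (hxb i hi),
        Finset.sum_eq_zero fun i hi => psx_zero K _ _ (hyb i hi),
        Finset.sum_eq_zero fun i hi => psy_zero K _ _ (hyb i hi)]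
      simp

/-! ### second moments on the finite grid -/

/-- embedding of grid into `ℕ × ℕ` -/
def gv {N : ℕ} (z : Fin N × Fin N) : ℕ × ℕ := (z.1, z.2)

lemma sum_gv (N : ℕ) (F : ℕ × ℕ → ℝ) : ∑ z : Fin N × Fin N, F (gv z) =
    ∑ s ∈ Finset.range N, ∑ t ∈ Finset.range N, F (s, t) := by
  rw [Fintype.sum_prod_type, Finset.sum_range]
  refine Finset.sum_congr rfl fun s _ => ?_
  rw [Finset.sum_range]
  rfl

lemma second_moment {n : ℕ} (b K : ℕ) (hb : 1 ≤ b) (R : ℕ × ℕ) (ψ : ℕ × ℕ → ℝ)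
    (h0 : ∑ s ∈ Finset.range (b * 2 ^ K), ∑ t ∈ Finset.range (b * 2 ^ K), ψ (s, t) = 0)
    (h2 : ∑ s ∈ Finset.range (b * 2 ^ K), ∑ t ∈ Finset.range (b * 2 ^ K), ψ (s, t) ^ 2 ≤ 16 * K)
    (hψ : ∀ z, blk K z ≠ blk K R → ψ z = 0) :
    ∑ x : Fin n → Fin (b * 2 ^ K) × Fin (b * 2 ^ K),
      ∑ y : Fin n → Fin (b * 2 ^ K) × Fin (b * 2 ^ K),
        Tst K (blk K R) ψ (gv ∘ x) (gv ∘ y) ^ 2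
      ≤ (64 * n * K / ((b * 2 ^ K : ℕ) : ℝ) ^ 2) *
        ((((b * 2 ^ K : ℕ) : ℝ) ^ 2) ^ n * (((b * 2 ^ K : ℕ) : ℝ) ^ 2) ^ n) := by
  classical
  set N := b * 2 ^ K with hN
  have hNpos : 0 < N := by positivity
  set g : ℝ := (N : ℝ) ^ 2 with hg
  have hgpos : 0 < g := by positivity
  have hcardG : (Fintype.card (Fin N × Fin N) : ℝ) = g := by simp [hg, sq]
  have hsum : ∑ z : Fin N × Fin N, ψ (gv z) = 0 := by rw [sum_gv N ψ, h0]
  have hsum2 : ∑ z : Fin N × Fin N, ψ (gv z) ^ 2 ≤ 16 * K := by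
    rw [sum_gv N fun z => ψ z ^ 2]; exact h2
  have one : ∀ sl : (Fin n → ℕ × ℕ) → Finset (Fin n),
      ∑ x : Fin n → Fin N × Fin N,
        (∑ i ∈ sl (blk K ∘ gv ∘ x), ψ (gv (x i))) ^ 2 ≤ (16 * n * K / g) * g ^ n := by
    intro sl
    have := variance_bound (n := n) (G := Fin N × Fin N) (fun z => blk K (gv z)) (blk K R)
      (fun z => ψ (gv z)) hsum (fun z hz => by
        by_contra h; exact hz (hψ _ h))
      (fun p i => if i ∈ sl p then 1 else 0) (fun p i => by
        split_ifs <;> simp)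
    rw [hcardG] at this
    have e : ∀ x : Fin n → Fin N × Fin N,
        ∑ i, (if i ∈ sl ((fun z => blk K (gv z)) ∘ x) then (1 : ℝ) else 0) * ψ (gv (x i))
        = ∑ i ∈ sl (blk K ∘ gv ∘ x), ψ (gv (x i)) := by
      intro x
      simp only [ite_mul, one_mul, zero_mul, Finset.sum_ite_mem, Finset.univ_inter]
      rfl
    simp only [e] at this
    have h3 : n * g ^ n * ∑ z : Fin N × Fin N, ψ (gv z) ^ 2 ≤ n * g ^ n * (16 * K) :=
      mul_le_mul_of_nonneg_left hsum2 (by positivity)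
    rw [div_mul_eq_mul_div, le_div_iff₀ hgpos]
    nlinarith
  have hx : ∑ x : Fin n → Fin N × Fin N, ∑ y : Fin n → Fin N × Fin N,
      (∑ i ∈ sel (idx (blk K ∘ gv ∘ x) (blk K R)) (idx (blk K ∘ gv ∘ y) (blk K R)),
        ψ (gv (x i))) ^ 2 ≤ (16 * n * K / g) * g ^ n * g ^ n := by
    rw [Finset.sum_comm]
    refine (Finset.sum_le_sum fun y _ =>
      one (fun p => sel (idx p (blk K R)) (idx (blk K ∘ gv ∘ y) (blk K R)))).trans ?_
    rw [Finset.sum_const, nsmul_eq_mul, Finset.card_univ, Fintype.card_pi, Finset.prod_const]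
    push_cast
    rw [hcardG]
    simp [mul_comm]
  have hy : ∑ x : Fin n → Fin N × Fin N, ∑ y : Fin n → Fin N × Fin N,
      (∑ i ∈ sel (idx (blk K ∘ gv ∘ y) (blk K R)) (idx (blk K ∘ gv ∘ x) (blk K R)),
        ψ (gv (y i))) ^ 2 ≤ (16 * n * K / g) * g ^ n * g ^ n := by
    refine (Finset.sum_le_sum fun x _ =>
      one (fun p => sel (idx p (blk K R)) (idx (blk K ∘ gv ∘ x) (blk K R)))).trans ?_
    rw [Finset.sum_const, nsmul_eq_mul, Finset.card_univ, Fintype.card_pi, Finset.prod_const]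
    push_cast
    rw [hcardG]
    simp [mul_comm]
  have : ∑ x : Fin n → Fin N × Fin N, ∑ y : Fin n → Fin N × Fin N,
        Tst K (blk K R) ψ (gv ∘ x) (gv ∘ y) ^ 2 ≤
      2 * (∑ x : Fin n → Fin N × Fin N, ∑ y : Fin n → Fin N × Fin N,
      (∑ i ∈ sel (idx (blk K ∘ gv ∘ x) (blk K R)) (idx (blk K ∘ gv ∘ y) (blk K R)),
        ψ (gv (x i))) ^ 2) + 2 * (∑ x : Fin n → Fin N × Fin N, ∑ y : Fin n → Fin N × Fin N,
      (∑ i ∈ sel (idx (blk K ∘ gv ∘ y) (blk K R)) (idx (blk K ∘ gv ∘ x) (blk K R)),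
        ψ (gv (y i))) ^ 2) := by
    simp only [Finset.mul_sum, ← Finset.sum_add_distrib]
    refine Finset.sum_le_sum fun x _ => Finset.sum_le_sum fun y _ => ?_
    unfold Tst
    simp only [Function.comp_apply]
    generalize (∑ i ∈ sel (idx (blk K ∘ gv ∘ x) (blk K R)) (idx (blk K ∘ gv ∘ y) (blk K R)),
        ψ (gv (x i))) = a
    generalize (∑ i ∈ sel (idx (blk K ∘ gv ∘ y) (blk K R)) (idx (blk K ∘ gv ∘ x) (blk K R)),
        ψ (gv (y i))) = c
    nlinarith [sq_nonneg (a + c)]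
  refine this.trans ?_
  have e : 64 * n * K / g * (g ^ n * g ^ n) = 4 * ((16 * n * K / g) * g ^ n * g ^ n) := by ring
  rw [e]
  linarith


lemma vol_rect (s t : Set ℝ) (hs : MeasurableSet s) (ht : MeasurableSet t) :
    volume {p : EuclideanSpace ℝ (Fin 2) | p 0 ∈ s ∧ p 1 ∈ t} = volume s * volume t := by
  have e : {p : EuclideanSpace ℝ (Fin 2) | p 0 ∈ s ∧ p 1 ∈ t} =
      (MeasurableEquiv.toLp 2 (Fin 2 → ℝ)).symm ⁻¹' (Set.univ.pi ![s, t]) := by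
    ext p
    simp [Set.mem_pi, Fin.forall_fin_two]
  rw [e, (EuclideanSpace.volume_preserving_symm_measurableEquiv_toLp (Fin 2)).measure_preimage,
    volume_pi_pi]
  · simp
  · refine (MeasurableSet.univ_pi fun i => ?_).nullMeasurableSet
    fin_cases i <;> simp [hs, ht]

lemma unitSquare_eq : unitSquare = {p : EuclideanSpace ℝ (Fin 2) |
    p 0 ∈ Set.Icc (0 : ℝ) 1 ∧ p 1 ∈ Set.Icc (0 : ℝ) 1} := by
  ext p; simp [unitSquare, Fin.forall_fin_two]

lemma meas_coord (i : Fin 2) : Measurable fun p : EuclideanSpace ℝ (Fin 2) => p i := by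
  fun_prop

lemma measurableSet_unitSquare : MeasurableSet unitSquare := by
  rw [unitSquare_eq]
  exact ((meas_coord 0) measurableSet_Icc).inter ((meas_coord 1) measurableSet_Icc)

instance : IsProbabilityMeasure unifSquare := by
  constructor
  rw [unifSquare, Measure.restrict_apply_univ, unitSquare_eq,
    vol_rect _ _ measurableSet_Icc measurableSet_Icc]
  simp

lemma ae_unif : ∀ᵐ p ∂unifSquare, ∀ i, p i ∈ Set.Ico (0 : ℝ) 1 := by
  have h1 : ∀ᵐ p ∂unifSquare, p ∈ unitSquare :=
    ae_restrict_mem measurableSet_unitSquare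
  have h2 : ∀ᵐ p ∂unifSquare, p 0 ≠ 1 := by
    refine ae_restrict_of_ae ?_
    rw [ae_iff]
    have := vol_rect {1} Set.univ (measurableSet_singleton _) MeasurableSet.univ
    simpa using this
  have h3 : ∀ᵐ p ∂unifSquare, p 1 ≠ 1 := by
    refine ae_restrict_of_ae ?_
    rw [ae_iff]
    have := vol_rect Set.univ {1} MeasurableSet.univ (measurableSet_singleton _)
    simpa using this
  filter_upwards [h1, h2, h3] with p h1 h2 h3
  rw [Fin.forall_fin_two]
  exact ⟨⟨(h1 0).1, lt_of_le_of_ne (h1 0).2 h2⟩, ⟨(h1 1).1, lt_of_le_of_ne (h1 1).2 h3⟩⟩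

/-- one-dimensional cell index -/
noncomputable def cell1 (N : ℕ) [NeZero N] (t : ℝ) : Fin N :=
  ⟨min ⌊t * N⌋₊ (N - 1), by have := NeZero.pos N; omega⟩

lemma meas_cell1 (N : ℕ) [NeZero N] : Measurable (cell1 N) := by
  have h1 : Measurable fun t : ℝ => ⌊t * N⌋₊ := Nat.measurable_floor.comp (by fun_prop)
  have h2 : Measurable (fun m : ℕ => (⟨min m (N - 1), by have := NeZero.pos N; omega⟩ : Fin N)) :=
    measurable_from_top
  exact h2.comp h1

lemma cell1_val (N : ℕ) [NeZero N] (t : ℝ) (ht : t ∈ Set.Ico (0 : ℝ) 1) :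
    (cell1 N t : ℕ) = ⌊t * N⌋₊ := by
  have hN : 0 < N := NeZero.pos N
  have : ⌊t * N⌋₊ < N := by
    rw [Nat.floor_lt (mul_nonneg ht.1 (by positivity))]
    have : (0 : ℝ) < N := by exact_mod_cast hN
    nlinarith [ht.2]
  simp only [cell1]
  omega

lemma vol_cell1 (N : ℕ) [NeZero N] (z : Fin N) :
    volume (cell1 N ⁻¹' {z} ∩ Set.Icc 0 1) = ENNReal.ofReal (1 / N) := by
  have hN : 0 < N := NeZero.pos N
  have hN' : (0 : ℝ) < N := by exact_mod_cast hN
  have hz : ((z : ℕ) : ℝ) + 1 ≤ N := by exact_mod_cast z.2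
  apply le_antisymm
  · have hsub : cell1 N ⁻¹' {z} ∩ Set.Icc 0 1 ⊆ Set.Icc ((z : ℝ) / N) (((z : ℝ) + 1) / N) := by
      rintro t ⟨h, h0, h1⟩
      rcases h1.lt_or_eq with h1 | rfl
      · have h2 := cell1_val N t ⟨h0, h1⟩
        rw [Set.mem_preimage, Set.mem_singleton_iff] at h
        rw [h] at h2
        have h3 := Nat.floor_le (mul_nonneg h0 hN'.le)
        have h4 := Nat.lt_floor_add_one (t * N)
        rw [← h2] at h3 h4
        exact ⟨(div_le_iff₀ hN').2 h3, (le_div_iff₀ hN').2 h4.le⟩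
      · have h2 : (cell1 N 1 : ℕ) = N - 1 := by simp [cell1]
        rw [Set.mem_preimage, Set.mem_singleton_iff] at h
        rw [h] at h2
        have h3 : ((z : ℕ) : ℝ) + 1 = N := by
          have : (z : ℕ) + 1 = N := by omega
          exact_mod_cast this
        exact ⟨(div_le_iff₀ hN').2 (by linarith), (le_div_iff₀ hN').2 (by linarith)⟩
    refine (measure_mono hsub).trans (le_of_eq ?_)
    rw [Real.volume_Icc]; congr 1; ring
  · have hsub : Set.Ico ((z : ℝ) / N) (((z : ℝ) + 1) / N) ⊆ cell1 N ⁻¹' {z} ∩ Set.Icc 0 1 := by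
      rintro t ⟨h0, h1⟩
      rw [div_le_iff₀ hN'] at h0
      rw [lt_div_iff₀ hN'] at h1
      have h3 : 0 ≤ t := by
        by_contra h
        push Not at h
        have : ((z : ℕ) : ℝ) ≥ 0 := by positivity
        nlinarith
      have h4 : t < 1 := by
        by_contra h
        push Not at h
        nlinarith
      refine ⟨?_, h3, h4.le⟩
      rw [Set.mem_preimage, Set.mem_singleton_iff, Fin.ext_iff, cell1_val N t ⟨h3, h4⟩,
        Nat.floor_eq_iff (by positivity)]
      exact ⟨h0, h1⟩
    refine le_trans (le_of_eq ?_) (measure_mono hsub)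
    rw [Real.volume_Ico]; congr 1; ring

noncomputable def cell (N : ℕ) [NeZero N] (p : EuclideanSpace ℝ (Fin 2)) : Fin N × Fin N :=
  (cell1 N (p 0), cell1 N (p 1))

lemma meas_cell (N : ℕ) [NeZero N] : Measurable (cell N) :=
  ((meas_cell1 N).comp (meas_coord 0)).prodMk ((meas_cell1 N).comp (meas_coord 1))

lemma unif_cell (N : ℕ) [NeZero N] (z : Fin N × Fin N) :
    unifSquare (cell N ⁻¹' {z}) = ENNReal.ofReal (1 / (N : ℝ) ^ 2) := by
  have e : cell N ⁻¹' {z} ∩ unitSquare = {p : EuclideanSpace ℝ (Fin 2) |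
      p 0 ∈ cell1 N ⁻¹' {z.1} ∩ Set.Icc 0 1 ∧ p 1 ∈ cell1 N ⁻¹' {z.2} ∩ Set.Icc 0 1} := by
    rw [unitSquare_eq]
    ext p
    simp only [cell, Set.mem_inter_iff, Set.mem_preimage, Set.mem_singleton_iff, Prod.ext_iff,
      Set.mem_ofPred_eq]
    tauto
  rw [unifSquare, Measure.restrict_apply ((meas_cell N) (measurableSet_singleton _)), e,
    vol_rect, vol_cell1, vol_cell1, ← ENNReal.ofReal_mul (by positivity)]
  · congr 1; ring
  · exact ((meas_cell1 N) (measurableSet_singleton _)).inter measurableSet_Icc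
  · exact ((meas_cell1 N) (measurableSet_singleton _)).inter measurableSet_Icc

noncomputable def PP (n : ℕ) : Measure ((Fin n → EuclideanSpace ℝ (Fin 2)) ×
    (Fin n → EuclideanSpace ℝ (Fin 2))) :=
  (Measure.pi fun _ : Fin n => unifSquare).prod (Measure.pi fun _ : Fin n => unifSquare)

instance (n : ℕ) : IsProbabilityMeasure (PP n) := by unfold PP; infer_instance

noncomputable def Phi (n N : ℕ) [NeZero N] (ω : (Fin n → EuclideanSpace ℝ (Fin 2)) ×
    (Fin n → EuclideanSpace ℝ (Fin 2))) : (Fin n → Fin N × Fin N) × (Fin n → Fin N × Fin N) :=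
  (cell N ∘ ω.1, cell N ∘ ω.2)

lemma meas_Phi (n N : ℕ) [NeZero N] : Measurable (Phi n N) := by
  refine Measurable.prodMk ?_ ?_
  · exact measurable_pi_lambda _ fun i =>
      (meas_cell N).comp ((measurable_pi_apply i).comp measurable_fst)
  · exact measurable_pi_lambda _ fun i =>
      (meas_cell N).comp ((measurable_pi_apply i).comp measurable_snd)

lemma PP_Phi (n N : ℕ) [NeZero N] (p : (Fin n → Fin N × Fin N) × (Fin n → Fin N × Fin N)) :
    ((PP n).map (Phi n N)).real {p} = 1 / (((N : ℝ) ^ 2) ^ n * ((N : ℝ) ^ 2) ^ n) := by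
  have e : Phi n N ⁻¹' {p} = (Set.univ.pi fun i => cell N ⁻¹' {p.1 i}) ×ˢ
      (Set.univ.pi fun i => cell N ⁻¹' {p.2 i}) := by
    ext ω
    simp [Phi, Prod.ext_iff, funext_iff]
  rw [Measure.real, Measure.map_apply (meas_Phi n N) (measurableSet_singleton _), e, PP,
    Measure.prod_prod, Measure.pi_pi, Measure.pi_pi]
  simp only [unif_cell, Finset.prod_const, Finset.card_univ, Fintype.card_fin]
  rw [ENNReal.toReal_mul, ENNReal.toReal_pow, ENNReal.toReal_ofReal (by positivity)]
  rw [one_div, inv_pow, one_div, mul_inv]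

lemma integral_PP (n N : ℕ) [NeZero N]
    (H : (Fin n → Fin N × Fin N) → (Fin n → Fin N × Fin N) → ℝ) :
    Integrable (fun ω => H (Phi n N ω).1 (Phi n N ω).2) (PP n) ∧
    ∫ ω, H (Phi n N ω).1 (Phi n N ω).2 ∂(PP n) =
      (∑ x, ∑ y, H x y) / (((N : ℝ) ^ 2) ^ n * ((N : ℝ) ^ 2) ^ n) := by
  have : IsProbabilityMeasure ((PP n).map (Phi n N)) :=
    Measure.isProbabilityMeasure_map (meas_Phi n N).aemeasurable
  have hint : Integrable (fun p : (Fin n → Fin N × Fin N) × (Fin n → Fin N × Fin N) =>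
    H p.1 p.2) ((PP n).map (Phi n N)) := Integrable.of_finite
  refine ⟨hint.comp_measurable (meas_Phi n N), ?_⟩
  have h := integral_map (μ := PP n) (meas_Phi n N).aemeasurable hint.aestronglyMeasurable
  rw [← h, integral_fintype hint]
  simp only [PP_Phi, smul_eq_mul]
  rw [← Finset.mul_sum, Fintype.sum_prod_type]
  ring

lemma ae_PP (n : ℕ) : ∀ᵐ ω ∂(PP n), (∀ j i, ω.1 j i ∈ Set.Ico (0 : ℝ) 1) ∧
    (∀ j i, ω.2 j i ∈ Set.Ico (0 : ℝ) 1) := by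
  have h : ∀ᵐ x ∂(Measure.pi fun _ : Fin n => unifSquare), ∀ j i, x j i ∈ Set.Ico (0 : ℝ) 1 := by
    rw [ae_all_iff]
    intro j
    exact (Measure.quasiMeasurePreserving_eval (fun _ : Fin n => unifSquare) j).ae ae_unif
  unfold PP
  exact (Measure.quasiMeasurePreserving_fst.ae h).and (Measure.quasiMeasurePreserving_snd.ae h)


lemma minLocalCost_nonneg {n : ℕ} (x y : Fin n → EuclideanSpace ℝ (Fin 2)) (A B : Set (Fin n)) :
    0 ≤ minLocalCost x y A B := by
  apply Real.sInf_nonneg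
  rintro v ⟨M, -, rfl⟩
  positivity

lemma minLocalCost_le {n : ℕ} (x y : Fin n → EuclideanSpace ℝ (Fin 2)) (A B : Set (Fin n))
    (M : Finset (Fin n × Fin n)) (hM : IsMaxLocalMatching A B M) :
    minLocalCost x y A B ≤ ∑ p ∈ M, ‖x p.1 - y p.2‖ := by
  refine csInf_le ⟨0, ?_⟩ ⟨M, hM, rfl⟩
  rintro v ⟨M, -, rfl⟩
  positivity

lemma cell1_dist (N : ℕ) [NeZero N] (s t : ℝ) (hs : s ∈ Set.Ico (0 : ℝ) 1)
    (ht : t ∈ Set.Ico (0 : ℝ) 1) :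
    |s - t| ≤ (|((cell1 N s : ℕ) : ℝ) - (cell1 N t : ℕ)| + 1) / N := by
  have hN' : (0 : ℝ) < N := by exact_mod_cast NeZero.pos N
  rw [le_div_iff₀ hN', cell1_val N s hs, cell1_val N t ht]
  have h1 := Nat.floor_le (mul_nonneg hs.1 hN'.le)
  have h2 := Nat.lt_floor_add_one (s * N)
  have h3 := Nat.floor_le (mul_nonneg ht.1 hN'.le)
  have h4 := Nat.lt_floor_add_one (t * N)
  rw [← abs_of_pos hN', ← abs_mul, abs_of_pos hN', sub_mul, abs_le]
  have h5 := le_abs_self ((⌊s * N⌋₊ : ℝ) - ⌊t * N⌋₊)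
  have h6 := neg_abs_le ((⌊s * N⌋₊ : ℝ) - ⌊t * N⌋₊)
  constructor <;> linarith

lemma cell_dist (N : ℕ) [NeZero N] (p q : EuclideanSpace ℝ (Fin 2))
    (hp : ∀ i, p i ∈ Set.Ico (0 : ℝ) 1) (hq : ∀ i, q i ∈ Set.Ico (0 : ℝ) 1) :
    ‖p - q‖ ≤ ((gd (gv (cell N p)) (gv (cell N q)) : ℤ) + 2) / N := by
  have h1 := cell1_dist N _ _ (hp 0) (hq 0)
  have h2 := cell1_dist N _ _ (hp 1) (hq 1)
  have h3 : ‖p - q‖ ≤ |p 0 - q 0| + |p 1 - q 1| := by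
    rw [EuclideanSpace.norm_eq, Fin.sum_univ_two]
    refine Real.sqrt_le_iff.2 ⟨by positivity, ?_⟩
    simp only [PiLp.sub_apply, Real.norm_eq_abs]
    nlinarith [abs_nonneg (p 0 - q 0), abs_nonneg (p 1 - q 1)]
  refine h3.trans ((add_le_add h1 h2).trans (le_of_eq ?_))
  simp only [gd, gv, cell]
  push_cast
  ring

lemma grid_iff (b K : ℕ) (hb : 1 ≤ b) [NeZero (b * 2 ^ K)] (p : EuclideanSpace ℝ (Fin 2))
    (hp : ∀ i, p i ∈ Set.Ico (0 : ℝ) 1) (ij : Fin b × Fin b) :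
    p ∈ gridSquare b ij ↔ blk K (gv (cell (b * 2 ^ K) p)) = ((ij.1 : ℕ), (ij.2 : ℕ)) := by
  have hb' : (0 : ℝ) < b := by exact_mod_cast hb
  have one : ∀ (t : ℝ) (i : Fin b), t ∈ Set.Ico (0 : ℝ) 1 →
      (t ∈ Set.Ico ((i : ℝ) / b) (((i : ℝ) + 1) / b) ↔
        (cell1 (b * 2 ^ K) t : ℕ) / 2 ^ K = i) := by
    intro t i ht
    rw [cell1_val _ _ ht, ← Nat.cast_ofNat, ← Nat.cast_pow, ← Nat.cast_id (⌊_⌋₊)]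
    have : ⌊t * ((b * 2 ^ K : ℕ) : ℝ)⌋₊ / (2 ^ K) = ⌊t * b⌋₊ := by
      rw [← Nat.floor_div_natCast]
      congr 1
      push_cast
      field_simp
    simp only [Nat.cast_id]
    rw [this, Nat.floor_eq_iff (mul_nonneg ht.1 hb'.le), Set.mem_Ico, div_le_iff₀ hb',
      lt_div_iff₀ hb']
  simp only [gridSquare, blk, gv, cell, Set.mem_ofPred_eq, Prod.mk.injEq]
  rw [one _ _ (hp 0), one _ _ (hp 1)]

lemma sum_ite_blk (b : ℕ) (z : ℕ × ℕ) (c : ℝ) (hc : 0 ≤ c) :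
    ∑ ij : Fin b × Fin b, (if z = ((ij.1 : ℕ), (ij.2 : ℕ)) then c else 0) ≤ c := by
  by_cases h : ∃ ij : Fin b × Fin b, z = ((ij.1 : ℕ), (ij.2 : ℕ))
  · obtain ⟨ij, rfl⟩ := h
    rw [Finset.sum_eq_single ij]
    · simp
    · intro kl _ hne
      rw [if_neg]
      intro h
      apply hne
      simp only [Prod.mk.injEq] at h
      exact Prod.ext (Fin.ext h.1.symm) (Fin.ext h.2.symm)
    · simp
  · push Not at h
    rw [Finset.sum_eq_zero fun ij _ => if_neg (h ij)]
    exact hc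

noncomputable def HH (n b K : ℕ) (x y : Fin n → Fin (b * 2 ^ K) × Fin (b * 2 ^ K)) : ℝ :=
  (∑ s ∈ Finset.range (b * 2 ^ K), ∑ t ∈ Finset.range (b * 2 ^ K),
    (|Tst K (blk K (s, t)) (psx K (s, t)) (gv ∘ x) (gv ∘ y)| +
      |Tst K (blk K (s, t)) (psy K (s, t)) (gv ∘ x) (gv ∘ y)|) + 2 * n) / ((b * 2 ^ K : ℕ) : ℝ)

lemma pointwise_bound (n b K : ℕ) (hb : 1 ≤ b) [NeZero (b * 2 ^ K)]
    (x y : Fin n → EuclideanSpace ℝ (Fin 2)) (hx : ∀ j i, x j i ∈ Set.Ico (0 : ℝ) 1)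
    (hy : ∀ j i, y j i ∈ Set.Ico (0 : ℝ) 1) :
    ∑ ij : Fin b × Fin b, minLocalCost x y {j : Fin n | x j ∈ gridSquare b ij}
      {j : Fin n | y j ∈ gridSquare b ij} ≤
      HH n b K (cell (b * 2 ^ K) ∘ x) (cell (b * 2 ^ K) ∘ y) := by
  classical
  set N := b * 2 ^ K with hN
  have hN' : (0 : ℝ) < N := by exact_mod_cast NeZero.pos N
  set X : Fin n → ℕ × ℕ := gv ∘ (cell N ∘ x) with hX
  set Y : Fin n → ℕ × ℕ := gv ∘ (cell N ∘ y) with hY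
  set W : ℕ × ℕ → ℕ → ℕ → ℝ := fun q s t =>
    |Tst K q (psx K (s, t)) X Y| + |Tst K q (psy K (s, t)) X Y| with hW
  have hblock : ∀ ij : Fin b × Fin b, minLocalCost x y {j : Fin n | x j ∈ gridSquare b ij}
      {j : Fin n | y j ∈ gridSquare b ij} ≤
      ((∑ s ∈ Finset.range N, ∑ t ∈ Finset.range N,
        if blk K (s, t) = ((ij.1 : ℕ), (ij.2 : ℕ)) then W (blk K (s, t)) s t else 0)
        + ∑ k : Fin n, if blk K (X k) = ((ij.1 : ℕ), (ij.2 : ℕ)) then 2 else 0) / N := by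
    intro ij
    set q : ℕ × ℕ := ((ij.1 : ℕ), (ij.2 : ℕ)) with hq
    obtain ⟨M, hM, hle⟩ := block_bound b K X Y
      (fun i => ⟨(cell N (x i)).1.2, (cell N (x i)).2.2⟩)
      (fun i => ⟨(cell N (y i)).1.2, (cell N (y i)).2.2⟩) q
    have eA : {j : Fin n | x j ∈ gridSquare b ij} = (idx (blk K ∘ X) q : Set (Fin n)) := by
      ext j
      simp only [Set.mem_ofPred_eq, idx, Finset.coe_filter, Finset.mem_univ, true_and]
      exact grid_iff b K hb (x j) (hx j) ij
    have eB : {j : Fin n | y j ∈ gridSquare b ij} = (idx (blk K ∘ Y) q : Set (Fin n)) := by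
      ext j
      simp only [Set.mem_ofPred_eq, idx, Finset.coe_filter, Finset.mem_univ, true_and]
      exact grid_iff b K hb (y j) (hy j) ij
    rw [eA, eB]
    refine (minLocalCost_le x y _ _ M hM).trans ?_
    have hcard : (M.card : ℝ) ≤ (idx (blk K ∘ X) q).card := by
      have := hM.2.2.2
      have h2 : Nat.card (idx (blk K ∘ X) q : Set (Fin n)) = (idx (blk K ∘ X) q).card := by
        simp
      rw [h2] at this
      exact_mod_cast this.le.trans (min_le_left _ _)
    have hcard2 : (∑ k : Fin n, if blk K (X k) = q then (2 : ℝ) else 0)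
        = 2 * (idx (blk K ∘ X) q).card := by
      rw [← Finset.sum_filter, Finset.sum_const, nsmul_eq_mul, mul_comm]
      rfl
    calc ∑ p ∈ M, ‖x p.1 - y p.2‖ ≤ ∑ p ∈ M, (((gd (X p.1) (Y p.2) : ℤ) : ℝ) + 2) / N :=
          Finset.sum_le_sum fun p _ => cell_dist N _ _ (hx _) (hy _)
      _ = (((∑ p ∈ M, gd (X p.1) (Y p.2) : ℤ) : ℝ) + 2 * M.card) / N := by
          rw [← Finset.sum_div, Finset.sum_add_distrib]
          push_cast
          simp [mul_comm]
      _ ≤ _ := by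
          apply div_le_div_of_nonneg_right _ hN'.le
          rw [hcard2]
          refine add_le_add (hle.trans (le_of_eq ?_)) (by linarith)
          refine Finset.sum_congr rfl fun s _ => Finset.sum_congr rfl fun t _ => ?_
          split_ifs with h
          · simp only [hW, h]
          · rfl
  refine (Finset.sum_le_sum fun ij _ => hblock ij).trans ?_
  rw [← Finset.sum_div]
  unfold HH
  apply div_le_div_of_nonneg_right _ hN'.le
  rw [Finset.sum_add_distrib]
  refine add_le_add ?_ ?_
  · rw [Finset.sum_comm]
    refine Finset.sum_le_sum fun s _ => ?_
    rw [Finset.sum_comm]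
    refine Finset.sum_le_sum fun t _ => ?_
    exact sum_ite_blk b _ _ (by simp only [hW]; positivity)
  · rw [Finset.sum_comm]
    refine (Finset.sum_le_sum fun k _ => sum_ite_blk b _ 2 (by norm_num)).trans ?_
    simp [mul_comm]

lemma mean_abs {n : ℕ} (b K : ℕ) (hb : 1 ≤ b) (R : ℕ × ℕ) (ψ : ℕ × ℕ → ℝ)
    (h0 : ∑ s ∈ Finset.range (b * 2 ^ K), ∑ t ∈ Finset.range (b * 2 ^ K), ψ (s, t) = 0)
    (h2 : ∑ s ∈ Finset.range (b * 2 ^ K), ∑ t ∈ Finset.range (b * 2 ^ K), ψ (s, t) ^ 2 ≤ 16 * K)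
    (hψ : ∀ z, blk K z ≠ blk K R → ψ z = 0) :
    ∑ x : Fin n → Fin (b * 2 ^ K) × Fin (b * 2 ^ K),
      ∑ y : Fin n → Fin (b * 2 ^ K) × Fin (b * 2 ^ K),
        |Tst K (blk K R) ψ (gv ∘ x) (gv ∘ y)|
      ≤ (8 * Real.sqrt (n * K) / ((b * 2 ^ K : ℕ) : ℝ)) *
        ((((b * 2 ^ K : ℕ) : ℝ) ^ 2) ^ n * (((b * 2 ^ K : ℕ) : ℝ) ^ 2) ^ n) := by
  have h := second_moment (n := n) b K hb R ψ h0 h2 hψ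
  have hNpos : 0 < b * 2 ^ K := by positivity
  set N := b * 2 ^ K with hN
  have hN' : (0 : ℝ) < N := by exact_mod_cast hNpos
  rw [← Fintype.sum_prod_type'] at h ⊢
  set D : ℝ := ((N : ℝ) ^ 2) ^ n * ((N : ℝ) ^ 2) ^ n with hD
  have hDpos : 0 < D := by positivity
  refine abs_le_of_sq_le_sq' ?_ (by positivity) |>.2
  refine (sq_sum_le_card_mul_sum_sq).trans ?_
  have hc : ((Finset.univ : Finset ((Fin n → Fin N × Fin N) × (Fin n → Fin N × Fin N))).card : ℝ)
      = D := by
    simp [hD, sq]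
  rw [hc]
  simp only [sq_abs]
  refine (mul_le_mul_of_nonneg_left h hDpos.le).trans (le_of_eq ?_)
  rw [mul_pow, div_pow, mul_pow, Real.sq_sqrt (by positivity)]
  ring

lemma sum_HH (n b K : ℕ) (hb : 1 ≤ b) :
    (∑ x, ∑ y, HH n b K x y) /
      ((((b * 2 ^ K : ℕ) : ℝ) ^ 2) ^ n * (((b * 2 ^ K : ℕ) : ℝ) ^ 2) ^ n)
      ≤ 16 * Real.sqrt (n * K) + 2 * n / ((b * 2 ^ K : ℕ) : ℝ) := by
  have hNpos : 0 < b * 2 ^ K := by positivity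
  have hN' : (0 : ℝ) < ((b * 2 ^ K : ℕ) : ℝ) := by exact_mod_cast hNpos
  set D : ℝ := (((b * 2 ^ K : ℕ) : ℝ) ^ 2) ^ n * (((b * 2 ^ K : ℕ) : ℝ) ^ 2) ^ n with hD
  have hDpos : 0 < D := by positivity
  rw [div_le_iff₀ hDpos]
  have hone : ∑ x : Fin n → Fin (b * 2 ^ K) × Fin (b * 2 ^ K),
      ∑ y : Fin n → Fin (b * 2 ^ K) × Fin (b * 2 ^ K), (1 : ℝ) = D := by
    rw [← Fintype.sum_prod_type']
    simp [hD, sq]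
  have hst : ∀ s ∈ Finset.range (b * 2 ^ K), ∀ t ∈ Finset.range (b * 2 ^ K),
      ∑ x : Fin n → Fin (b * 2 ^ K) × Fin (b * 2 ^ K),
      ∑ y : Fin n → Fin (b * 2 ^ K) × Fin (b * 2 ^ K),
      (|Tst K (blk K (s, t)) (psx K (s, t)) (gv ∘ x) (gv ∘ y)| +
      |Tst K (blk K (s, t)) (psy K (s, t)) (gv ∘ x) (gv ∘ y)|) ≤
      2 * ((8 * Real.sqrt (n * K) / ((b * 2 ^ K : ℕ) : ℝ)) * D) := by
    intro s hs t ht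
    have hs := Finset.mem_range.1 hs
    have ht := Finset.mem_range.1 ht
    have m1 := mean_abs (n := n) b K hb (s, t) (psx K (s, t)) (sum_psx b K _ hs)
      (sum_ps_aux b K (s, t) hs ht _ (abs_psx_le K _)) (psx_zero K _)
    have m2 := mean_abs (n := n) b K hb (s, t) (psy K (s, t)) (sum_psy b K _ ht)
      (sum_ps_aux b K (s, t) hs ht _ (abs_psy_le K _)) (psy_zero K _)
    simp only [Finset.sum_add_distrib]
    linarith
  have e : ∑ x, ∑ y, HH n b K x y =
      ((∑ s ∈ Finset.range (b * 2 ^ K), ∑ t ∈ Finset.range (b * 2 ^ K),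
      ∑ x : Fin n → Fin (b * 2 ^ K) × Fin (b * 2 ^ K),
      ∑ y : Fin n → Fin (b * 2 ^ K) × Fin (b * 2 ^ K),
      (|Tst K (blk K (s, t)) (psx K (s, t)) (gv ∘ x) (gv ∘ y)| +
      |Tst K (blk K (s, t)) (psy K (s, t)) (gv ∘ x) (gv ∘ y)|)) + 2 * n * D)
        / ((b * 2 ^ K : ℕ) : ℝ) := by
    unfold HH
    simp only [← Finset.sum_div]
    congr 1
    simp only [← Fintype.sum_prod_type'] at hone ⊢
    rw [Finset.sum_add_distrib, ← hone, Finset.mul_sum]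
    congr 1
    · rw [Finset.sum_comm]
      refine Finset.sum_congr rfl fun s _ => ?_
      rw [Finset.sum_comm]
    · simp
  rw [e]
  have := Finset.sum_le_sum fun s hs => Finset.sum_le_sum fun t ht => hst s hs t ht
  simp only [Finset.sum_const, Finset.card_range, nsmul_eq_mul] at this
  rw [div_le_iff₀ hN']
  refine (add_le_add_left this _).trans (le_of_eq ?_)
  field_simp
  ring

theorem stmt_18 :
    ∃ C : ℝ, 0 < C ∧ ∀ n : ℕ, 2 ≤ n → ∀ b : ℕ, 1 ≤ b →
      ∫ ω : (Fin n → EuclideanSpace ℝ (Fin 2)) × (Fin n → EuclideanSpace ℝ (Fin 2)),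
          (∑ ij : Fin b × Fin b,
            minLocalCost ω.1 ω.2
              {j : Fin n | ω.1 j ∈ gridSquare b ij} {j : Fin n | ω.2 j ∈ gridSquare b ij})
          ∂((Measure.pi fun _ : Fin n => unifSquare).prod
              (Measure.pi fun _ : Fin n => unifSquare))
        ≤ C * Real.sqrt ((n : ℝ) * Real.log n) := by
  refine ⟨34, by norm_num, fun n hn b hb => ?_⟩
  set K := Nat.clog 2 n with hK
  have hnK : n ≤ 2 ^ K := Nat.le_pow_clog (by norm_num) n
  have hNpos : 0 < b * 2 ^ K := by positivity
  have : NeZero (b * 2 ^ K) := ⟨hNpos.ne'⟩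
  have hN' : (0 : ℝ) < ((b * 2 ^ K : ℕ) : ℝ) := by exact_mod_cast hNpos
  obtain ⟨hint, hval⟩ := integral_PP n (b * 2 ^ K) (HH n b K)
  change ∫ ω, _ ∂(PP n) ≤ _
  refine (integral_mono_of_nonneg (Filter.Eventually.of_forall fun ω =>
    Finset.sum_nonneg fun ij _ => minLocalCost_nonneg _ _ _ _) hint ?_).trans ?_
  · filter_upwards [ae_PP n] with ω hω
    exact pointwise_bound n b K hb ω.1 ω.2 hω.1 hω.2
  rw [hval]
  refine (sum_HH n b K hb).trans ?_
  have hn' : (2 : ℝ) ≤ n := by exact_mod_cast hn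
  have hl2 := Real.log_two_gt_d9
  have hlog : Real.log 2 ≤ Real.log n := Real.log_le_log (by norm_num) hn'
  have hKlog : (K : ℝ) ≤ 4 * Real.log n := by
    have h1 : 2 ^ K ≤ n * n := by
      have h3 : 2 ^ (K - 1) < n := Nat.pow_pred_clog_lt_self (by norm_num) hn
      have h4 : 0 < K := Nat.clog_pos (by norm_num) hn
      have h5 : 2 ^ K = 2 ^ (K - 1) * 2 := by rw [← pow_succ]; congr 1; omega
      rw [h5]; exact Nat.mul_le_mul h3.le hn
    have h2 : (2 : ℝ) ^ K ≤ n * n := by exact_mod_cast h1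
    have h3 := Real.log_le_log (by positivity) h2
    rw [Real.log_pow, Real.log_mul (by positivity) (by positivity)] at h3
    nlinarith [(Nat.cast_nonneg K : (0 : ℝ) ≤ K)]
  have h1 : Real.sqrt (n * K) ≤ 2 * Real.sqrt (n * Real.log n) := by
    rw [show (2 : ℝ) = Real.sqrt 4 by
      rw [show (4 : ℝ) = 2 ^ 2 by norm_num, Real.sqrt_sq (by norm_num)],
      ← Real.sqrt_mul (by norm_num)]
    apply Real.sqrt_le_sqrt
    nlinarith
  have h2 : 2 * (n : ℝ) / ((b * 2 ^ K : ℕ) : ℝ) ≤ 2 := by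
    rw [div_le_iff₀ hN']
    have : n ≤ b * 2 ^ K := hnK.trans (Nat.le_mul_of_pos_left _ hb)
    have : (n : ℝ) ≤ ((b * 2 ^ K : ℕ) : ℝ) := by exact_mod_cast this
    linarith
  have h3 : 1 ≤ Real.sqrt (n * Real.log n) := by
    rw [Real.one_le_sqrt]
    nlinarith
  linarith
end

section
/- There exists a constant C > 0 such that the following holds for every integer n ≥ 2 and every integer b ≥ 1 with m = b². Let x_1,…,x_n and y_1,…,y_n be 2n mutually independent uniformly distributed random points in the unit square [0,1]² ⊂ ℝ², partition [0,1]² into m congruent squares q_1,…,q_m of side 1/b (taken half-open so each point lies in exactly one square), and for each square q_i let A_i := { j : x_j ∈ q_i } and B_i := { j : y_j ∈ q_i }. Call a permutation σ of {1,…,n} locally maximal if for every i, #{ j ∈ A_i : σ(j) ∈ B_i } = min(|A_i|, |B_i|). Then E[ min over locally maximal permutations σ of Σ_{j=1}^n ‖x_j − y_{σ(j)}‖₂ ] ≤ C·sqrt( n·log n ) + sqrt( n(m−1) ). -/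
open MeasureTheory

/-- A permutation `σ` (assigning robot `j` at `x j` to target `σ j` at `y (σ j)`) is locally
maximal if within every grid square it matches the maximum possible number
`min (#A_i) (#B_i)` of robots in the square to targets in the same square, where
`A_i` (resp. `B_i`) is the set of indices of robots (resp. targets) in the square. -/
def IsLocallyMaximal {n b : ℕ} (x y : Fin n → EuclideanSpace ℝ (Fin 2))
    (σ : Equiv.Perm (Fin n)) : Prop :=
  ∀ ij : Fin b × Fin b,
    Nat.card {j : Fin n // x j ∈ gridSquare b ij ∧ y (σ j) ∈ gridSquare b ij} =
      min (Nat.card {j : Fin n // x j ∈ gridSquare b ij})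
        (Nat.card {j : Fin n // y j ∈ gridSquare b ij})
lemma hall_dual_s19 {k : ℕ} [NeZero k] (c : Fin k → Fin k → ℝ) (hc : ∀ j l, 0 ≤ c j l) :
    ∃ g : Fin k → ℝ, ∃ σ : Equiv.Perm (Fin k), ∀ j l, g (σ j) + c j (σ j) ≤ g l + c j l := by
  classical
  have hne : (Finset.univ : Finset (Fin k)).Nonempty := Finset.univ_nonempty
  set q : (Fin k → ℝ) → Fin k → ℝ := fun g j => Finset.univ.inf' hne (fun l => g l + c j l) with hq
  have qle : ∀ g j l, q g j ≤ g l + c j l := fun g j l => Finset.inf'_le _ (Finset.mem_univ l)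
  have leq : ∀ g j a, (∀ l, a ≤ g l + c j l) → a ≤ q g j := fun g j a h =>
    Finset.le_inf' _ _ (fun l _ => h l)
  set h : (Fin k → ℝ) → ℝ := fun g => ∑ j, q g j - ∑ l, g l with hh
  have qcont : ∀ j, Continuous (fun g => q g j) := by
    intro j
    have := Continuous.finset_inf' (s := Finset.univ) (f := fun (l : Fin k) (g : Fin k → ℝ) => g l + c j l) hne
      (fun l _ => by fun_prop)
    convert this using 1
    ext g
    simp [hq, Finset.inf'_apply]
  have hcont : Continuous h := by
    apply Continuous.sub
    · exact continuous_finsetSum _ (fun j _ => qcont j)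
    · fun_prop
  obtain ⟨C, hC⟩ : ∃ C : ℝ, ∀ j l, c j l ≤ C := by
    refine ⟨∑ j, ∑ l, c j l, fun j l => ?_⟩
    calc c j l ≤ ∑ l, c j l := Finset.single_le_sum (f := fun l => c j l) (fun l _ => hc j l) (Finset.mem_univ l)
      _ ≤ _ := Finset.single_le_sum (f := fun j => ∑ l, c j l)
        (fun j _ => Finset.sum_nonneg (fun l _ => hc j l)) (Finset.mem_univ j)
  have hC0 : 0 ≤ C := (hc 0 0).trans (hC 0 0)
  set B : ℝ := k * C with hB
  have hB0 : 0 ≤ B := by positivity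
  obtain ⟨g, -, hg⟩ := (isCompact_Icc (a := (0 : Fin k → ℝ)) (b := fun _ => B)).exists_isMaxOn
    ⟨0, by simp, fun _ => hB0⟩ hcont.continuousOn
  have hmax : ∀ g', h g' ≤ h g := by
    intro g'
    obtain ⟨l0, -, hl0⟩ := Finset.exists_min_image Finset.univ g' hne
    set m := g' l0
    set g2 : Fin k → ℝ := fun l => g' l - m with hg2
    have e : h g' = h g2 := by
      have : ∀ j, q g2 j = q g' j - m := by
        intro j
        apply le_antisymm
        · have : q g2 j + m ≤ q g' j := leq _ _ _ (fun l => by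
            have := qle g2 j l
            simp only [hg2] at this ⊢; linarith)
          linarith
        · exact leq _ _ _ (fun l => by
            have := qle g' j l
            simp only [hg2] at this ⊢; linarith)
      simp only [hh]
      rw [Finset.sum_congr rfl (fun j _ => this j)]
      simp only [hg2, Finset.sum_sub_distrib]
      ring
    rw [e]
    have g2nn : ∀ l, 0 ≤ g2 l := fun l => by simpa [hg2] using hl0 l (Finset.mem_univ l)
    by_cases hin : ∀ l, g2 l ≤ B
    · exact hg ⟨fun l => g2nn l, fun l => hin l⟩
    · push Not at hin
      obtain ⟨l, hl⟩ := hin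
      have h1 : ∑ j, q g2 j ≤ B := by
        calc ∑ j, q g2 j ≤ ∑ j : Fin k, C := Finset.sum_le_sum (fun j _ => by
              have := qle g2 j l0
              have e0 : g2 l0 = 0 := by simp [hg2, m]
              rw [e0] at this
              linarith [hC j l0])
          _ = B := by simp [hB]
      have h2 : g2 l ≤ ∑ l, g2 l := Finset.single_le_sum (fun l _ => g2nn l) (Finset.mem_univ l)
      have h3 : 0 ≤ h 0 := by
        simp only [hh]
        have : 0 ≤ ∑ j, q 0 j := Finset.sum_nonneg (fun j _ => leq _ _ _ (fun l => by simpa using hc j l))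
        simpa using this
      have h4 : h 0 ≤ h g := hg ⟨le_refl _, fun _ => hB0⟩
      have : h g2 ≤ 0 := by simp only [hh]; linarith
      linarith
  set t : Fin k → Finset (Fin k) := fun j => Finset.univ.filter (fun l => g l + c j l = q g j) with ht
  have hall : ∀ s : Finset (Fin k), s.card ≤ (s.biUnion t).card := by
    intro s
    by_contra hlt
    push Not at hlt
    set N := s.biUnion t
    obtain ⟨δ, hδ, hδ'⟩ : ∃ δ : ℝ, 0 < δ ∧ ∀ j l, l ∉ t j → q g j + δ ≤ g l + c j l := by
      have hfin : ((Finset.univ : Finset (Fin k × Fin k)).filter (fun p => p.2 ∉ t p.1)).Nonempty ∨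
          ¬ ((Finset.univ : Finset (Fin k × Fin k)).filter (fun p => p.2 ∉ t p.1)).Nonempty := em _
      rcases hfin with hf | hf
      · obtain ⟨p, hp, hp2⟩ := Finset.exists_min_image _ (fun p : Fin k × Fin k => g p.2 + c p.1 p.2 - q g p.1) hf
        refine ⟨g p.2 + c p.1 p.2 - q g p.1, ?_, ?_⟩
        · have h1 := qle g p.1 p.2
          have h2 : g p.2 + c p.1 p.2 ≠ q g p.1 := by
            simpa [ht] using hp
          have := lt_of_le_of_ne h1 (Ne.symm h2)
          linarith
        · intro j l hl
          have := hp2 (j, l) (by simp [hl])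
          simp only at this
          linarith
      · refine ⟨1, one_pos, fun j l hl => ?_⟩
        exact absurd ⟨(j, l), by simp [hl]⟩ hf
    set g' : Fin k → ℝ := fun l => g l + if l ∈ N then δ else 0 with hg'
    have hq' : ∀ j, q g j + (if j ∈ s then δ else 0) ≤ q g' j := by
      intro j
      refine leq _ _ _ (fun l => ?_)
      have h1 := qle g j l
      by_cases hj : j ∈ s
      · by_cases hl : l ∈ N
        · simp only [hg', hj, hl, if_true]; linarith
        · have : l ∉ t j := fun hlt => hl (Finset.mem_biUnion.2 ⟨j, hj, hlt⟩)
          have := hδ' j l this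
          simp only [hg', hj, hl, if_true, if_false]; linarith
      · simp only [hg', hj, if_false]
        split_ifs <;> linarith
    have h1 := Finset.sum_le_sum (fun j (_ : j ∈ Finset.univ) => hq' j)
    have h2 := hmax g'
    simp only [hh, hg', Finset.sum_add_distrib] at h1 h2
    have e1 : ∑ j : Fin k, (if j ∈ s then δ else 0) = s.card * δ := by simp
    have e2 : ∑ j : Fin k, (if j ∈ N then δ else 0) = N.card * δ := by simp
    rw [e1] at h1
    rw [e2] at h2
    have h3 : (N.card : ℝ) < s.card := by exact_mod_cast hlt
    nlinarith
  obtain ⟨f, hf, hft⟩ := (Finset.all_card_le_biUnion_card_iff_exists_injective t).1 hall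
  refine ⟨g, Equiv.ofBijective f (Finite.injective_iff_bijective.1 hf), fun j l => ?_⟩
  have := hft j
  simp only [ht, Finset.mem_filter, Finset.mem_univ, true_and] at this
  simp only [Equiv.ofBijective_apply]
  rw [this]
  exact qle g j l

lemma matching_duality {X : Type*} [PseudoMetricSpace X] {k : ℕ} (w v : Fin k → X) :
    ∃ σ : Equiv.Perm (Fin k), ∃ f : X → ℝ, LipschitzWith 1 f ∧
      ∑ j, dist (w j) (v (σ j)) ≤ ∑ j, f (w j) - ∑ j, f (v j) := by
  rcases Nat.eq_zero_or_pos k with rfl | hk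
  · exact ⟨1, fun _ => 0, LipschitzWith.const' 0, by simp⟩
  have : NeZero k := ⟨hk.ne'⟩
  have hne : (Finset.univ : Finset (Fin k)).Nonempty := Finset.univ_nonempty
  obtain ⟨g, σ, h⟩ := hall_dual_s19 (fun j l => dist (w j) (v l)) (fun _ _ => dist_nonneg)
  set f : X → ℝ := fun x => Finset.univ.inf' hne (fun l => g l + dist x (v l)) with hf
  have fle : ∀ x l, f x ≤ g l + dist x (v l) := fun x l => Finset.inf'_le _ (Finset.mem_univ l)
  refine ⟨σ, f, ?_, ?_⟩
  · apply LipschitzWith.of_le_add_mul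
    intro x y
    have : f x - dist x y ≤ f y := by
      refine Finset.le_inf' _ _ (fun l _ => ?_)
      have := fle x l
      have := dist_triangle x y (v l)
      linarith
    simp
    linarith
  · rw [← Equiv.sum_comp σ (fun j => f (v j)), ← Finset.sum_sub_distrib]
    refine Finset.sum_le_sum (fun j _ => ?_)
    have h1 : g (σ j) + dist (w j) (v (σ j)) ≤ f (w j) :=
      Finset.le_inf' _ _ (fun l _ => h j l)
    have h2 := fle (v (σ j)) (σ j)
    rw [dist_self] at h2
    linarith

lemma exists_smooth_lipschitz {f : EuclideanSpace ℝ (Fin 2) → ℝ} (hf : LipschitzWith 1 f)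
    {δ : ℝ} (hδ : 0 < δ) :
    ∃ g : EuclideanSpace ℝ (Fin 2) → ℝ, ContDiff ℝ 1 g ∧ LipschitzWith 1 g ∧
      ∀ x, |g x - f x| ≤ δ := by
  let φ : ContDiffBump (0 : EuclideanSpace ℝ (Fin 2)) := ⟨δ / 2, δ, by linarith, by linarith⟩
  have hfc := hf.continuous
  refine ⟨convolution (φ.normed volume) f (ContinuousLinearMap.lsmul ℝ ℝ) volume, ?_, ?_, ?_⟩
  · have := HasCompactSupport.contDiff_convolution_left (𝕜 := ℝ) (n := 1) (μ := volume) (ContinuousLinearMap.lsmul ℝ ℝ) (φ.hasCompactSupport_normed (μ := volume))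
      (φ.contDiff_normed (μ := volume)) hfc.locallyIntegrable
    exact_mod_cast this
  · apply LipschitzWith.of_dist_le_mul
    intro x y
    have hIntg : ∀ x, Integrable (fun t => φ.normed volume t * f (x - t)) volume := by
      intro x
      apply Continuous.integrable_of_hasCompactSupport
      · exact φ.continuous_normed.mul (by fun_prop)
      · exact (φ.hasCompactSupport_normed (μ := volume)).mul_right
    simp only [convolution, ContinuousLinearMap.lsmul_apply, smul_eq_mul]
    rw [Real.dist_eq, ← integral_sub (hIntg x) (hIntg y)]
    calc |∫ t, (φ.normed volume t * f (x - t) - φ.normed volume t * f (y - t))|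
        ≤ ∫ t, |φ.normed volume t * f (x - t) - φ.normed volume t * f (y - t)| := abs_integral_le_integral_abs
      _ ≤ ∫ t, φ.normed volume t * dist x y := by
          apply integral_mono ((hIntg x).sub (hIntg y)).abs (φ.integrable_normed.mul_const _)
          intro t
          change |φ.normed volume t * f (x - t) - φ.normed volume t * f (y - t)| ≤ _
          rw [← mul_sub, abs_mul, abs_of_nonneg (φ.nonneg_normed t)]
          apply mul_le_mul_of_nonneg_left _ (φ.nonneg_normed t)
          have := hf.dist_le_mul (x - t) (y - t)
          simpa [Real.dist_eq] using this
      _ = (1 : NNReal) * dist x y := by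
          rw [integral_mul_const, φ.integral_normed]; simp
  · intro x
    have := ContDiffBump.dist_normed_convolution_le (φ := φ) (μ := volume) (x₀ := x) (ε := δ)
      (hfc.aestronglyMeasurable) (fun y hy => by
        have h1 := hf.dist_le_mul y x
        have h2 : dist y x < δ := hy
        simp at h1
        linarith)
    rwa [Real.dist_eq] at this


abbrev E2 := EuclideanSpace ℝ (Fin 2)

lemma unitSquare_eq_s19 : unitSquare = (MeasurableEquiv.toLp 2 (Fin 2 → ℝ)).symm ⁻¹' (Set.Icc 0 1) := by
  ext p
  simp only [unitSquare, Set.mem_ofPred_eq, Set.mem_preimage, Set.mem_Icc, Pi.le_def]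
  constructor
  · intro h; exact ⟨fun i => (h i).1, fun i => (h i).2⟩
  · intro h i; exact ⟨h.1 i, h.2 i⟩

lemma volume_unitSquare : volume unitSquare = 1 := by
  rw [unitSquare_eq_s19, (EuclideanSpace.volume_preserving_symm_measurableEquiv_toLp (Fin 2)).measure_preimage
    measurableSet_Icc.nullMeasurableSet, Real.volume_Icc_pi]
  simp

instance inst_s19 : IsProbabilityMeasure unifSquare := ⟨by
  rw [unifSquare, Measure.restrict_apply_univ, volume_unitSquare]⟩

lemma isCompact_unitSquare : IsCompact unitSquare := by
  have : unitSquare = (EuclideanSpace.equiv (Fin 2) ℝ).toHomeomorph ⁻¹' (Set.Icc 0 1) := by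
    rw [unitSquare_eq_s19]; rfl
  rw [this]
  exact (Homeomorph.isCompact_preimage _).2 isCompact_Icc

lemma convex_unitSquare : Convex ℝ unitSquare := by
  intro x hx y hy a b ha hb hab i
  have h1 := hx i
  have h2 := hy i
  simp only [PiLp.add_apply, PiLp.smul_apply, smul_eq_mul, Set.mem_Icc] at *
  constructor <;> nlinarith

lemma norm_sub_le_unitSquare {x y : E2} (hx : x ∈ unitSquare) (hy : y ∈ unitSquare) :
    ‖x - y‖ ≤ √2 := by
  rw [EuclideanSpace.norm_eq]
  apply Real.sqrt_le_sqrt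
  simp only [Fin.sum_univ_two, PiLp.sub_apply, Real.norm_eq_abs, sq_abs]
  have := hx 0; have := hx 1; have := hy 0; have := hy 1
  simp only [Set.mem_Icc] at *
  nlinarith

lemma ae_unifSquare : ∀ᵐ x ∂unifSquare, x ∈ unitSquare :=
  ae_restrict_mem measurableSet_unitSquare

/-- change of variables -/
lemma cov_square (G : E2 → ℝ) (x : E2) {s : ℝ} (hs : 0 < s) :
    ∫ y, G (x + s • (y - x)) ∂unifSquare =
      (s ^ 2)⁻¹ * ∫ z, unitSquare.indicator 1 (x + s⁻¹ • (z - x)) * G z := by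
  set Φ : E2 → ℝ := fun u => unitSquare.indicator 1 (x + s⁻¹ • u) * G (x + u) with hΦ
  have h1 : ∫ y, G (x + s • (y - x)) ∂unifSquare = ∫ y, Φ (s • (y - x)) := by
    rw [unifSquare, ← integral_indicator measurableSet_unitSquare]
    congr 1
    ext y
    have e : x + s⁻¹ • s • (y - x) = y := by
      rw [smul_smul, inv_mul_cancel₀ hs.ne', one_smul, add_sub_cancel]
    change _ = unitSquare.indicator 1 (x + s⁻¹ • s • (y - x)) * G (x + s • (y - x))
    rw [e]
    by_cases hy : y ∈ unitSquare <;> simp [hy]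
  rw [h1, integral_sub_right_eq_self (fun y => Φ (s • y)) x, Measure.integral_comp_smul]
  have h2 : ∫ z, unitSquare.indicator 1 (x + s⁻¹ • (z - x)) * G z = ∫ z, Φ (z - x) := by
    congr 1; ext z; simp [hΦ]
  rw [h2, integral_sub_right_eq_self (fun y => Φ y) x]
  simp [abs_of_pos hs]

/-- scalar kernel -/
noncomputable def ker (ε : ℝ) (z x : E2) : ℝ :=
  ∫ s in Set.Ioc ε 1, (s ^ 3)⁻¹ * unitSquare.indicator 1 (x + s⁻¹ • (z - x))

noncomputable def kerV (ε : ℝ) (c : Fin 2) (z x : E2) : ℝ := (x c - z c) * ker ε z x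

lemma measurable_kerIntegrand : Measurable (fun q : (E2 × E2) × ℝ =>
    (q.2 ^ 3)⁻¹ * unitSquare.indicator (1 : E2 → ℝ) (q.1.2 + q.2⁻¹ • (q.1.1 - q.1.2))) := by
  apply Measurable.mul (by fun_prop)
  apply (measurable_one.indicator measurableSet_unitSquare).comp
  fun_prop

lemma measurable_ker (ε : ℝ) : Measurable (fun p : E2 × E2 => ker ε p.1 p.2) := by
  have := measurable_kerIntegrand.stronglyMeasurable.integral_prod_right' (ν := volume.restrict (Set.Ioc ε 1))
  exact this.measurable

lemma measurable_kerV (ε : ℝ) (c : Fin 2) : Measurable (fun p : E2 × E2 => kerV ε c p.1 p.2) := by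
  apply Measurable.mul (by fun_prop) (measurable_ker ε)

lemma ind_nonneg (y : E2) : 0 ≤ unitSquare.indicator (1 : E2 → ℝ) y :=
  Set.indicator_nonneg (fun _ _ => zero_le_one) _

lemma ind_le_one (y : E2) : unitSquare.indicator (1 : E2 → ℝ) y ≤ 1 :=
  Set.indicator_le_self' (fun _ _ => zero_le_one) _

lemma kerInt_nonneg {ε s : ℝ} (hε : 0 < ε) (hs : s ∈ Set.Ioc ε 1) (y : E2) :
    0 ≤ (s ^ 3)⁻¹ * unitSquare.indicator (1 : E2 → ℝ) y := by
  have : 0 < s := hε.trans hs.1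
  have := ind_nonneg y
  positivity

lemma kerInt_le {ε s : ℝ} (hε : 0 < ε) (hs : s ∈ Set.Ioc ε 1) (y : E2) :
    (s ^ 3)⁻¹ * unitSquare.indicator (1 : E2 → ℝ) y ≤ (ε ^ 3)⁻¹ := by
  have h0 : 0 < s := hε.trans hs.1
  have h1 := ind_le_one y
  have h2 : (s ^ 3)⁻¹ ≤ (ε ^ 3)⁻¹ := by
    have := hs.1.le
    gcongr
  calc _ ≤ (s ^ 3)⁻¹ * 1 := by gcongr
    _ ≤ _ := by simpa using h2

lemma ker_nonneg {ε : ℝ} (hε : 0 < ε) (z x : E2) : 0 ≤ ker ε z x :=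
  setIntegral_nonneg measurableSet_Ioc (fun _ hs => kerInt_nonneg hε hs _)

lemma integrable_kerInt {ε : ℝ} (hε : 0 < ε) (z x : E2) :
    IntegrableOn (fun s : ℝ => (s ^ 3)⁻¹ * unitSquare.indicator (1 : E2 → ℝ) (x + s⁻¹ • (z - x))) (Set.Ioc ε 1) := by
  refine Integrable.of_bound (C := (ε ^ 3)⁻¹) ?_ ?_
  · exact (measurable_kerIntegrand.comp (measurable_prodMk_left (x := ((z, x) : E2 × E2)))).aestronglyMeasurable
  · filter_upwards [ae_restrict_mem measurableSet_Ioc] with s hs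
    rw [Real.norm_of_nonneg (kerInt_nonneg hε hs _)]
    exact kerInt_le hε hs _

lemma ker_le {ε : ℝ} (hε : 0 < ε) (hε1 : ε ≤ 1) (z x : E2) : ker ε z x ≤ (ε ^ 3)⁻¹ := by
  calc ker ε z x ≤ ∫ s in Set.Ioc ε 1, (ε ^ 3)⁻¹ :=
        setIntegral_mono_on (integrable_kerInt hε z x) (by simp) measurableSet_Ioc
          (fun s hs => kerInt_le hε hs _)
    _ ≤ (ε ^ 3)⁻¹ := by
      simp only [integral_const, MeasurableSet.univ, measureReal_restrict_apply, Set.univ_inter,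
        Real.volume_real_Ioc_of_le hε1, smul_eq_mul]
      have : 0 < (ε ^ 3)⁻¹ := by positivity
      nlinarith

lemma integral_cube_inv {ρ : ℝ} (hρ : 0 < ρ) (hρ1 : ρ ≤ 1) :
    ∫ s in Set.Icc ρ 1, (s ^ 3)⁻¹ = ((ρ ^ 2)⁻¹ - 1) / 2 := by
  rw [integral_Icc_eq_integral_Ioc, ← intervalIntegral.integral_of_le hρ1]
  have := integral_zpow (a := ρ) (b := 1) (n := -3) (Or.inr ⟨by norm_num, by
    rw [Set.uIcc_of_le hρ1]; simp [hρ]⟩)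
  have e : ∀ s : ℝ, (s ^ 3)⁻¹ = s ^ (-3 : ℤ) := fun s => by
    rw [zpow_neg]; norm_cast
  simp only [e]
  rw [this]
  have e2 : ρ ^ ((-3 : ℤ) + 1) = (ρ ^ 2)⁻¹ := by
    norm_num [zpow_neg]
  rw [e2]
  norm_num
  ring

lemma kerV_sq_le {ε : ℝ} (hε : 0 < ε) (c : Fin 2) {z x : E2}
    (hz : z ∈ unitSquare) (hx : x ∈ unitSquare) : (kerV ε c z x) ^ 2 ≤ ker ε z x / 2 := by
  have hk := ker_nonneg hε z x
  have key : (x c - z c) ^ 2 * ker ε z x ≤ 1 / 2 := by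
    rcases eq_or_ne (x c) (z c) with h | h
    · simp [h]
    set ρ := |x c - z c| with hρ
    have hρ0 : 0 < ρ := abs_pos.2 (sub_ne_zero.2 h)
    have hρ1 : ρ ≤ 1 := by
      have := hx c; have := hz c
      simp only [Set.mem_Icc] at *
      rw [hρ, abs_le]; constructor <;> linarith
    have hker : ker ε z x ≤ (ρ ^ 2)⁻¹ / 2 := by
      have hInt : IntegrableOn (fun s : ℝ => (s ^ 3)⁻¹) (Set.Icc ρ 1) := by
        apply ContinuousOn.integrableOn_compact isCompact_Icc
        apply ContinuousOn.inv₀ (by fun_prop)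
        intro s hs
        have : 0 < s := hρ0.trans_le hs.1
        positivity
      calc ker ε z x ≤ ∫ s in Set.Ioc ε 1, (Set.Icc ρ 1).indicator (fun s : ℝ => (s ^ 3)⁻¹) s := by
            apply setIntegral_mono_on (integrable_kerInt hε z x)
            · exact ((integrable_indicator_iff measurableSet_Icc).2 hInt).integrableOn
            · exact measurableSet_Ioc
            · intro s hs
              have hs0 : 0 < s := hε.trans hs.1
              by_cases hmem : s ∈ Set.Icc ρ 1
              · rw [Set.indicator_of_mem hmem]
                have := ind_le_one (x + s⁻¹ • (z - x))
                calc _ ≤ (s ^ 3)⁻¹ * 1 := by gcongr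
                  _ = _ := mul_one _
              · rw [Set.indicator_of_notMem hmem, Set.indicator_of_notMem]
                · simp
                · intro hy
                  apply hmem
                  refine ⟨?_, hs.2⟩
                  have h1 := hy c
                  have h2 := hx c
                  simp only [PiLp.add_apply, PiLp.smul_apply, PiLp.sub_apply, smul_eq_mul, Set.mem_Icc] at h1 h2
                  have e : s * (s⁻¹ * (z c - x c)) = z c - x c := by
                    field_simp
                  rw [hρ, abs_le]
                  constructor <;> nlinarith
        _ = ∫ s in Set.Ioc ε 1 ∩ Set.Icc ρ 1, (s ^ 3)⁻¹ := by
            rw [setIntegral_indicator measurableSet_Icc]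
        _ ≤ ∫ s in Set.Icc ρ 1, (s ^ 3)⁻¹ := by
            apply setIntegral_mono_set hInt
            · filter_upwards [ae_restrict_mem measurableSet_Icc] with s hs
              have : 0 < s := hρ0.trans_le hs.1
              simp only [Pi.zero_apply]
              positivity
            · exact Set.inter_subset_right.eventuallyLE
        _ ≤ _ := by rw [integral_cube_inv hρ0 hρ1]; linarith
    have e : (x c - z c) ^ 2 = ρ ^ 2 := by rw [hρ, sq_abs]
    rw [e]
    calc ρ ^ 2 * ker ε z x ≤ ρ ^ 2 * ((ρ ^ 2)⁻¹ / 2) := by gcongr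
      _ = 1 / 2 := by field_simp
  calc (kerV ε c z x) ^ 2 = ((x c - z c) ^ 2 * ker ε z x) * ker ε z x := by rw [kerV]; ring
    _ ≤ 1 / 2 * ker ε z x := by gcongr
    _ = _ := by ring

lemma integral_ker_le {ε : ℝ} (hε : 0 < ε) (hε1 : ε ≤ 1) (x : E2) :
    ∫ z, ker ε z x ∂unifSquare ≤ - Real.log ε := by
  have hmeas : Measurable (fun p : E2 × ℝ => (p.2 ^ 3)⁻¹ * unitSquare.indicator (1 : E2 → ℝ) (x + p.2⁻¹ • (p.1 - x))) :=
    measurable_kerIntegrand.comp (f := fun p : E2 × ℝ => ((p.1, x), p.2)) (by fun_prop)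
  unfold ker
  rw [integral_integral_swap]
  · calc ∫ s in Set.Ioc ε 1, ∫ z, (s ^ 3)⁻¹ * unitSquare.indicator (1 : E2 → ℝ) (x + s⁻¹ • (z - x)) ∂unifSquare
        ≤ ∫ s in Set.Ioc ε 1, s⁻¹ := by
          apply integral_mono_of_nonneg
          · filter_upwards [ae_restrict_mem measurableSet_Ioc] with s hs
            exact integral_nonneg (fun z => kerInt_nonneg hε hs _)
          · apply IntegrableOn.mono_set _ Set.Ioc_subset_Icc_self
            apply ContinuousOn.integrableOn_compact isCompact_Icc
            apply ContinuousOn.inv₀ (by fun_prop)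
            intro s hs
            exact (hε.trans_le hs.1).ne'
          · filter_upwards [ae_restrict_mem measurableSet_Ioc] with s hs
            have hs0 : 0 < s := hε.trans hs.1
            have := cov_square (fun _ => 1) x hs0
            simp only [integral_const, probReal_univ, smul_eq_mul, mul_one] at this
            rw [integral_const_mul]
            have hI : Integrable (fun z => unitSquare.indicator (1 : E2 → ℝ) (x + s⁻¹ • (z - x))) volume := by
              by_contra hcon
              rw [integral_undef hcon] at this
              simp at this
            have h2 : ∫ z, unitSquare.indicator (1 : E2 → ℝ) (x + s⁻¹ • (z - x)) ∂unifSquare ≤ s ^ 2 := by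
              calc _ ≤ ∫ z, unitSquare.indicator (1 : E2 → ℝ) (x + s⁻¹ • (z - x)) :=
                    setIntegral_le_integral hI (Filter.Eventually.of_forall (fun z => ind_nonneg _))
                _ = s ^ 2 := by
                    rw [eq_comm, inv_mul_eq_one₀ (by positivity)] at this
                    exact this.symm
            calc _ ≤ (s ^ 3)⁻¹ * s ^ 2 := by gcongr
              _ = s⁻¹ := by field_simp
      _ = - Real.log ε := by
          rw [← intervalIntegral.integral_of_le hε1, integral_inv_of_pos hε one_pos]
          simp
  · refine Integrable.of_bound (C := (ε ^ 3)⁻¹) ?_ ?_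
    · exact hmeas.aestronglyMeasurable
    · have : ∀ᵐ p ∂(unifSquare.prod (volume.restrict (Set.Ioc ε 1))), p.2 ∈ Set.Ioc ε 1 :=
        Measure.quasiMeasurePreserving_snd.ae (ae_restrict_mem measurableSet_Ioc)
      filter_upwards [this] with p hp
      simp only [Function.uncurry]
      rw [Real.norm_of_nonneg (kerInt_nonneg hε hp _)]
      exact kerInt_le hε hp _

lemma abs_kerV_le {ε : ℝ} (hε : 0 < ε) (hε1 : ε ≤ 1) (c : Fin 2) {z x : E2}
    (hz : z ∈ unitSquare) (hx : x ∈ unitSquare) : |kerV ε c z x| ≤ (ε ^ 3)⁻¹ := by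
  rw [kerV, abs_mul, abs_of_nonneg (ker_nonneg hε z x)]
  have h1 : |x c - z c| ≤ 1 := by
    have := hx c; have := hz c
    simp only [Set.mem_Icc] at *
    rw [abs_le]; constructor <;> linarith
  calc _ ≤ 1 * (ε ^ 3)⁻¹ := by
        gcongr
        · exact ker_nonneg hε z x
        · exact ker_le hε hε1 z x
    _ = _ := one_mul _

lemma integral_kerV_sq_le {ε : ℝ} (hε : 0 < ε) (hε1 : ε ≤ 1) (c : Fin 2) {x : E2}
    (hx : x ∈ unitSquare) :
    ∫ z, (kerV ε c z x) ^ 2 ∂unifSquare ≤ - Real.log ε / 2 := by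
  calc _ ≤ ∫ z, ker ε z x / 2 ∂unifSquare := by
        apply integral_mono_of_nonneg
        · exact Filter.Eventually.of_forall (fun z => sq_nonneg _)
        · apply Integrable.div_const
          refine Integrable.of_bound (C := (ε ^ 3)⁻¹) ?_ ?_
          · exact ((measurable_ker ε).comp measurable_prodMk_right).aestronglyMeasurable
          · refine Filter.Eventually.of_forall (fun z => ?_)
            rw [Real.norm_of_nonneg (ker_nonneg hε _ _)]
            exact ker_le hε hε1 _ _
        · filter_upwards [ae_unifSquare] with z hz
          exact kerV_sq_le hε c hz hx
    _ ≤ _ := by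
        rw [integral_div]
        have := integral_ker_le hε hε1 x
        linarith


lemma integrable_unif_of_continuous {f : E2 → ℝ} (hf : Continuous f) : Integrable f unifSquare :=
  hf.continuousOn.integrableOn_compact isCompact_unitSquare

lemma mem_of_ind_ne {x z : E2} {s : ℝ} (hx : x ∈ unitSquare) (hs : 0 < s) (hs1 : s ≤ 1)
    (h : x + s⁻¹ • (z - x) ∈ unitSquare) : z ∈ unitSquare := by
  have := convex_unitSquare hx h (a := 1 - s) (b := s) (by linarith) hs.le (by ring)
  convert this using 1
  rw [smul_add, smul_smul, mul_inv_cancel₀ hs.ne', one_smul, sub_smul, one_smul]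
  abel

lemma representation {f : E2 → ℝ} (hf : ContDiff ℝ 1 f) (hL : LipschitzWith 1 f)
    {ε : ℝ} (hε : 0 < ε) (hε1 : ε ≤ 1) {x : E2} (hx : x ∈ unitSquare) :
    ∫ y, f (x + ε • (y - x)) ∂unifSquare - ∫ y, f y ∂unifSquare
      = ∫ z, fderiv ℝ f z (x - z) * ker ε z x ∂unifSquare := by
  have hfc := hf.continuous
  have hd : Continuous (fderiv ℝ f) := hf.continuous_fderiv (by norm_num)
  have hdiff : Differentiable ℝ f := hf.differentiable (by norm_num)
  rw [← integral_sub (integrable_unif_of_continuous (by fun_prop)) (integrable_unif_of_continuous hfc)]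
  have hI : ∀ y, f (x + ε • (y - x)) - f y
      = ∫ s in Set.Ioc ε 1, fderiv ℝ f (x + s • (y - x)) (x - y) := by
    intro y
    have hderiv : ∀ s ∈ Set.uIcc ε 1, HasDerivAt (fun s : ℝ => f (x + s • (y - x)))
        (fderiv ℝ f (x + s • (y - x)) (y - x)) s := by
      intro s _
      have h1 : HasDerivAt (fun s : ℝ => x + s • (y - x)) (y - x) s := by
        simpa using ((hasDerivAt_id s).smul_const (y - x)).const_add x
      exact (hdiff _).hasFDerivAt.comp_hasDerivAt s h1
    have hcont : Continuous (fun s : ℝ => fderiv ℝ f (x + s • (y - x)) (y - x)) :=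
      (hd.comp (by fun_prop)).clm_apply continuous_const
    have := intervalIntegral.integral_eq_sub_of_hasDerivAt hderiv (hcont.intervalIntegrable _ _)
    rw [intervalIntegral.integral_of_le hε1] at this
    have e : ∀ s : ℝ, fderiv ℝ f (x + s • (y - x)) (x - y) = - fderiv ℝ f (x + s • (y - x)) (y - x) := by
      intro s; rw [← map_neg, neg_sub]
    simp only [e]
    rw [integral_neg, this]
    simp
  simp only [hI]
  rw [integral_integral_swap]
  swap
  · have hc : Continuous (Function.uncurry fun (y : E2) (s : ℝ) => fderiv ℝ f (x + s • (y - x)) (x - y)) := by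
      apply Continuous.clm_apply (hd.comp (by fun_prop)) (by fun_prop)
    rw [unifSquare, Measure.prod_restrict]
    exact (hc.continuousOn.integrableOn_compact (isCompact_unitSquare.prod (isCompact_Icc (a := ε) (b := 1)))).mono_set
      (Set.prod_mono le_rfl Set.Ioc_subset_Icc_self)
  have h2 : ∀ s ∈ Set.Ioc ε 1, ∫ y, fderiv ℝ f (x + s • (y - x)) (x - y) ∂unifSquare
      = ∫ z, fderiv ℝ f z (x - z) * ((s ^ 3)⁻¹ * unitSquare.indicator 1 (x + s⁻¹ • (z - x))) ∂unifSquare := by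
    intro s hs
    have hs0 : 0 < s := hε.trans hs.1
    have := cov_square (fun z => s⁻¹ * fderiv ℝ f z (x - z)) x hs0
    have e : ∀ y : E2, s⁻¹ * fderiv ℝ f (x + s • (y - x)) (x - (x + s • (y - x)))
        = fderiv ℝ f (x + s • (y - x)) (x - y) := by
      intro y
      have : x - (x + s • (y - x)) = s • (x - y) := by rw [smul_sub, smul_sub]; abel
      rw [this, map_smul, smul_eq_mul, inv_mul_cancel_left₀ hs0.ne']
    simp only [e] at this
    rw [this, ← integral_const_mul, unifSquare, ← integral_indicator measurableSet_unitSquare]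
    congr 1
    ext z
    by_cases hz : z ∈ unitSquare
    · rw [Set.indicator_of_mem hz]
      field_simp
    · rw [Set.indicator_of_notMem hz, Set.indicator_of_notMem (fun h => hz (mem_of_ind_ne hx hs0 hs.2 h))]
      simp
  rw [setIntegral_congr_fun measurableSet_Ioc h2, integral_integral_swap]
  · congr 1
    ext z
    rw [integral_const_mul]
    rfl
  · refine Integrable.of_bound (C := √2 * (ε ^ 3)⁻¹) ?_ ?_
    · apply Measurable.aestronglyMeasurable
      apply Measurable.mul
      · have : Continuous (fun z : E2 => fderiv ℝ f z (x - z)) := hd.clm_apply (by fun_prop)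
        exact this.measurable.comp measurable_snd
      · exact measurable_kerIntegrand.comp (f := fun p : ℝ × E2 => ((p.2, x), p.1)) (by fun_prop)
    · have h1 : ∀ᵐ p ∂((volume.restrict (Set.Ioc ε 1)).prod unifSquare), p.1 ∈ Set.Ioc ε 1 :=
        Measure.quasiMeasurePreserving_fst.ae (ae_restrict_mem measurableSet_Ioc)
      have h2 : ∀ᵐ p ∂((volume.restrict (Set.Ioc ε 1)).prod unifSquare), p.2 ∈ unitSquare :=
        Measure.quasiMeasurePreserving_snd.ae ae_unifSquare
      filter_upwards [h1, h2] with p hp hp2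
      simp only [Function.uncurry]
      rw [norm_mul, Real.norm_of_nonneg (kerInt_nonneg hε hp _)]
      apply mul_le_mul _ (kerInt_le hε hp _) (kerInt_nonneg hε hp _) (by positivity)
      calc _ ≤ ‖fderiv ℝ f p.2‖ * ‖x - p.2‖ := ContinuousLinearMap.le_opNorm _ _
        _ ≤ 1 * √2 := by
          gcongr
          · simpa using norm_fderiv_le_of_lipschitz ℝ hL
          · exact norm_sub_le_unitSquare hx hp2
        _ = _ := one_mul _

/-- smoothing error -/
lemma smoothing_error {f : E2 → ℝ} (hL : LipschitzWith 1 f)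
    {ε : ℝ} (hε : 0 < ε) {x : E2} (hx : x ∈ unitSquare) :
    |∫ y, f (x + ε • (y - x)) ∂unifSquare - f x| ≤ √2 * ε := by
  have hc := hL.continuous
  have h0 : f x = ∫ _y, f x ∂unifSquare := by simp
  rw [h0, ← integral_sub (integrable_unif_of_continuous (by fun_prop)) (integrable_const _)]
  have : ∀ᵐ y ∂unifSquare, ‖f (x + ε • (y - x)) - f x‖ ≤ √2 * ε := by
    filter_upwards [ae_unifSquare] with y hy
    have h1 := hL.dist_le_mul (x + ε • (y - x)) x
    rw [dist_eq_norm, dist_eq_norm] at h1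
    simp only [NNReal.coe_one, one_mul, add_sub_cancel_left, norm_smul, Real.norm_of_nonneg hε.le] at h1
    have := norm_sub_le_unitSquare hy hx
    nlinarith
  have := norm_integral_le_of_norm_le_const this
  simpa using this

lemma fderiv_expand (L : E2 →L[ℝ] ℝ) (u : E2) :
    L u = ∑ c : Fin 2, L (EuclideanSpace.single c 1) * u c := by
  have : u = ∑ c : Fin 2, u c • EuclideanSpace.single c (1 : ℝ) := by
    ext i
    fin_cases i <;> simp [Fin.sum_univ_two]
  conv_lhs => rw [this]
  simp [mul_comm]

lemma integrable_kerV {ε : ℝ} (hε : 0 < ε) (hε1 : ε ≤ 1) (c : Fin 2) {x : E2}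
    (hx : x ∈ unitSquare) : Integrable (fun z => kerV ε c z x) unifSquare := by
  refine Integrable.of_bound (C := (ε ^ 3)⁻¹) ?_ ?_
  · exact ((measurable_kerV ε c).comp measurable_prodMk_right).aestronglyMeasurable
  · filter_upwards [ae_unifSquare] with z hz
    exact abs_kerV_le hε hε1 c hz hx

/-- Deterministic matching bound. -/
lemma matching_bound {k : ℕ} (w v : Fin k → E2) (hw : ∀ j, w j ∈ unitSquare)
    (hv : ∀ j, v j ∈ unitSquare) {ε : ℝ} (hε : 0 < ε) (hε1 : ε ≤ 1) :
    ∃ σ : Equiv.Perm (Fin k), ∑ j, ‖w j - v (σ j)‖ ≤ 2 * √2 * ε * k +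
      ∫ z, ∑ c : Fin 2, |∑ j, kerV ε c z (w j) - ∑ j, kerV ε c z (v j)| ∂unifSquare := by
  obtain ⟨σ, f, hfL, hσ⟩ := matching_duality w v
  refine ⟨σ, ?_⟩
  simp only [dist_eq_norm] at hσ
  apply le_of_forall_pos_le_add
  intro δ hδ
  set δ' : ℝ := δ / (2 * (k + 1)) with hδ'
  have hδ'0 : 0 < δ' := by positivity
  obtain ⟨g, hg, hgL, hgf⟩ := exists_smooth_lipschitz hfL hδ'0
  set R : E2 → ℝ := fun x => ∫ z, fderiv ℝ g z (x - z) * ker ε z x ∂unifSquare with hR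
  set m := ∫ y, g y ∂unifSquare with hm
  have hup : ∀ x ∈ unitSquare, |f x - m - R x| ≤ √2 * ε + δ' := by
    intro x hx
    have h1 := representation hg hgL hε hε1 hx
    have h2 := smoothing_error hgL hε hx
    have h3 := hgf x
    rw [abs_le] at *
    simp only [hR, hm]
    constructor <;> linarith
  have hsum : ∑ j, f (w j) - ∑ j, f (v j) ≤ ∑ j, R (w j) - ∑ j, R (v j) + 2 * k * (√2 * ε + δ') := by
    have h1 : ∑ j, f (w j) ≤ ∑ j, (R (w j) + m + (√2 * ε + δ')) :=
      Finset.sum_le_sum (fun j _ => by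
        have := abs_le.1 (hup _ (hw j)); linarith)
    have h2 : ∑ j, (R (v j) + m - (√2 * ε + δ')) ≤ ∑ j, f (v j) :=
      Finset.sum_le_sum (fun j _ => by
        have := abs_le.1 (hup _ (hv j)); linarith)
    simp only [Finset.sum_add_distrib, Finset.sum_sub_distrib, Finset.sum_const, Finset.card_univ,
      Fintype.card_fin, nsmul_eq_mul] at h1 h2
    linarith
  have hd : Continuous (fderiv ℝ g) := hg.continuous_fderiv (by norm_num)
  have hbd : ∀ z c, |fderiv ℝ g z (EuclideanSpace.single c 1)| ≤ 1 := by
    intro z c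
    calc _ ≤ ‖fderiv ℝ g z‖ * ‖(EuclideanSpace.single c (1 : ℝ) : E2)‖ := ContinuousLinearMap.le_opNorm _ _
      _ ≤ 1 * 1 := by
        gcongr
        · simpa using norm_fderiv_le_of_lipschitz ℝ hgL
        · simp
      _ = 1 := by norm_num
  have hexp : ∀ z x, fderiv ℝ g z (x - z) * ker ε z x
      = ∑ c : Fin 2, fderiv ℝ g z (EuclideanSpace.single c 1) * kerV ε c z x := by
    intro z x
    rw [fderiv_expand, Finset.sum_mul]
    refine Finset.sum_congr rfl (fun c _ => ?_)
    simp [kerV, mul_assoc]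
  have hRint : ∀ x ∈ unitSquare, Integrable (fun z => fderiv ℝ g z (x - z) * ker ε z x) unifSquare := by
    intro x hx
    simp only [hexp]
    refine integrable_finsetSum _ (fun c _ => ?_)
    refine (integrable_kerV hε hε1 c hx).bdd_mul (c := 1) ?_ ?_
    · exact (hd.clm_apply continuous_const).aestronglyMeasurable
    · exact Filter.Eventually.of_forall (fun z => hbd z c)
  have hV : ∀ c, Integrable (fun z => ∑ j, kerV ε c z (w j) - ∑ j, kerV ε c z (v j)) unifSquare :=
    fun c => (integrable_finsetSum _ (fun j _ => integrable_kerV hε hε1 c (hw j))).sub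
      (integrable_finsetSum _ (fun j _ => integrable_kerV hε hε1 c (hv j)))
  have hRR : ∑ j, R (w j) - ∑ j, R (v j) ≤
      ∫ z, ∑ c : Fin 2, |∑ j, kerV ε c z (w j) - ∑ j, kerV ε c z (v j)| ∂unifSquare := by
    simp only [hR]
    rw [← integral_finsetSum _ (fun j _ => hRint _ (hw j)), ← integral_finsetSum _ (fun j _ => hRint _ (hv j)),
      ← integral_sub (integrable_finsetSum _ (fun j _ => hRint _ (hw j)))
        (integrable_finsetSum _ (fun j _ => hRint _ (hv j)))]
    apply integral_mono
    · exact (integrable_finsetSum _ (fun j _ => hRint _ (hw j))).sub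
        (integrable_finsetSum _ (fun j _ => hRint _ (hv j)))
    · exact integrable_finsetSum _ (fun c _ => (hV c).abs)
    · intro z
      change ∑ j, fderiv ℝ g z (w j - z) * ker ε z (w j) - ∑ j, fderiv ℝ g z (v j - z) * ker ε z (v j) ≤
        ∑ c : Fin 2, |∑ j, kerV ε c z (w j) - ∑ j, kerV ε c z (v j)|
      simp only [hexp]
      rw [Finset.sum_comm, Finset.sum_comm (s := Finset.univ) (t := Finset.univ) (f := fun (j : Fin k) (c : Fin 2) => fderiv ℝ g z (EuclideanSpace.single c 1) * kerV ε c z (v j)), ← Finset.sum_sub_distrib]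
      refine Finset.sum_le_sum (fun c _ => ?_)
      rw [← Finset.mul_sum, ← Finset.mul_sum, ← mul_sub]
      refine (le_abs_self _).trans ?_
      rw [abs_mul]
      exact mul_le_of_le_one_left (abs_nonneg _) (hbd z c)
  have hδk : 2 * k * δ' ≤ δ := by
    rw [hδ']
    rw [mul_div_assoc', div_le_iff₀ (by positivity)]
    nlinarith
  linarith


lemma integral_abs_le_sqrt {Ω : Type*} [MeasurableSpace Ω] {μ : Measure Ω} [IsProbabilityMeasure μ]
    {X : Ω → ℝ} (hX : MemLp X 2 μ) : ∫ ω, |X ω| ∂μ ≤ √(∫ ω, X ω ^ 2 ∂μ) := by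
  apply Real.le_sqrt_of_sq_le
  have h1 := ProbabilityTheory.variance_nonneg |X| μ
  rw [ProbabilityTheory.variance_eq_sub hX.abs] at h1
  simp only [Pi.pow_apply, Pi.abs_apply, sq_abs] at h1
  linarith

noncomputable def kbar (ε : ℝ) (c : Fin 2) (z : E2) : ℝ := ∫ x, kerV ε c z x ∂unifSquare

noncomputable def dev (ε : ℝ) (c : Fin 2) {n : ℕ} (A : Finset (Fin n)) (w : Fin n → E2) : ℝ :=
  ∫ z, |∑ j ∈ A, (kerV ε c z (w j) - kbar ε c z)| ∂unifSquare

lemma measurable_kbar (ε : ℝ) (c : Fin 2) : Measurable (kbar ε c) :=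
  ((measurable_kerV ε c).stronglyMeasurable.integral_prod_right' (ν := unifSquare)).measurable

lemma abs_kbar_le {ε : ℝ} (hε : 0 < ε) (hε1 : ε ≤ 1) (c : Fin 2) {z : E2}
    (hz : z ∈ unitSquare) : |kbar ε c z| ≤ (ε ^ 3)⁻¹ := by
  have : ∀ᵐ x ∂unifSquare, ‖kerV ε c z x‖ ≤ (ε ^ 3)⁻¹ := by
    filter_upwards [ae_unifSquare] with x hx
    exact abs_kerV_le hε hε1 c hz hx
  have := norm_integral_le_of_norm_le_const this
  simpa [kbar] using this

/-- law of `n` iid uniform points -/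
noncomputable abbrev unifPi (n : ℕ) : Measure (Fin n → E2) := Measure.pi fun _ : Fin n => unifSquare

lemma ae_unifPi (n : ℕ) : ∀ᵐ w ∂(unifPi n), ∀ j, w j ∈ unitSquare := by
  rw [ae_all_iff]
  intro j
  exact (Measure.quasiMeasurePreserving_eval (fun _ : Fin n => unifSquare) j).ae ae_unifSquare

noncomputable def devS (ε : ℝ) (c : Fin 2) {n : ℕ} (A : Finset (Fin n)) (p : (Fin n → E2) × E2) : ℝ :=
  ∑ j ∈ A, (kerV ε c p.2 (p.1 j) - kbar ε c p.2)

lemma measurable_devS (ε : ℝ) (c : Fin 2) {n : ℕ} (A : Finset (Fin n)) : Measurable (devS ε c A) := by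
  unfold devS
  refine Finset.measurable_fun_sum _ (fun j _ => Measurable.sub ?_ ?_)
  · exact (measurable_kerV ε c).comp (f := fun p : (Fin n → E2) × E2 => (p.2, p.1 j)) (by fun_prop)
  · exact (measurable_kbar ε c).comp measurable_snd

lemma abs_devS_le {ε : ℝ} (hε : 0 < ε) (hε1 : ε ≤ 1) (c : Fin 2) {n : ℕ} (A : Finset (Fin n))
    (p : (Fin n → E2) × E2) (h1 : ∀ j, p.1 j ∈ unitSquare) (h2 : p.2 ∈ unitSquare) :
    ‖devS ε c A p‖ ≤ A.card * (2 * (ε ^ 3)⁻¹) := by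
  unfold devS
  rw [← nsmul_eq_mul]
  refine norm_sum_le_of_le _ (fun j _ => ?_) |>.trans_eq (Finset.sum_const _)
  have a := abs_kerV_le hε hε1 c h2 (h1 j)
  have b := abs_kbar_le hε hε1 c h2
  rw [Real.norm_eq_abs]
  have := abs_sub (kerV ε c p.2 (p.1 j)) (kbar ε c p.2)
  linarith

lemma ae_bound_devS {ε : ℝ} (hε : 0 < ε) (hε1 : ε ≤ 1) (c : Fin 2) {n : ℕ} (A : Finset (Fin n)) :
    ∀ᵐ p ∂((unifPi n).prod unifSquare), ‖devS ε c A p‖ ≤ A.card * (2 * (ε ^ 3)⁻¹) := by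
  have h1 : ∀ᵐ p ∂((unifPi n).prod unifSquare), ∀ j, p.1 j ∈ unitSquare :=
    Measure.quasiMeasurePreserving_fst.ae (ae_unifPi n)
  have h2 : ∀ᵐ p ∂((unifPi n).prod unifSquare), p.2 ∈ unitSquare :=
    Measure.quasiMeasurePreserving_snd.ae ae_unifSquare
  filter_upwards [h1, h2] with p hp1 hp2
  exact abs_devS_le hε hε1 c A p hp1 hp2

lemma memLp_devS {ε : ℝ} (hε : 0 < ε) (hε1 : ε ≤ 1) (c : Fin 2) {n : ℕ} (A : Finset (Fin n)) (q : ENNReal) :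
    MemLp (devS ε c A) q ((unifPi n).prod unifSquare) :=
  MemLp.of_bound (measurable_devS ε c A).aestronglyMeasurable _ (ae_bound_devS hε hε1 c A)

lemma integrable_dev {ε : ℝ} (hε : 0 < ε) (hε1 : ε ≤ 1) (c : Fin 2) {n : ℕ} (A : Finset (Fin n)) :
    Integrable (dev ε c A) (unifPi n) := by
  have := (memLp_one_iff_integrable.1 (memLp_devS hε hε1 c A 1)).abs
  exact this.integral_prod_left

lemma memLp_kerV {ε : ℝ} (hε : 0 < ε) (hε1 : ε ≤ 1) (c : Fin 2) {z : E2} (hz : z ∈ unitSquare) :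
    MemLp (fun x => kerV ε c z x) 2 unifSquare := by
  refine MemLp.of_bound ((measurable_kerV ε c).comp measurable_prodMk_left).aestronglyMeasurable ((ε ^ 3)⁻¹) ?_
  filter_upwards [ae_unifSquare] with x hx
  exact abs_kerV_le hε hε1 c hz hx

lemma integral_devS_sq {ε : ℝ} (hε : 0 < ε) (hε1 : ε ≤ 1) (c : Fin 2) {n : ℕ} (A : Finset (Fin n))
    {z : E2} (hz : z ∈ unitSquare) :
    ∫ w, (devS ε c A (w, z)) ^ 2 ∂(unifPi n) ≤ A.card * ∫ x, (kerV ε c z x) ^ 2 ∂unifSquare := by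
  classical
  set X : Fin n → E2 → ℝ := fun j x => if j ∈ A then kerV ε c z x - kbar ε c z else 0 with hX
  have hXm : ∀ j, MemLp (X j) 2 unifSquare := by
    intro j
    by_cases hj : j ∈ A
    · simp only [hX, hj, if_true]
      exact (memLp_kerV hε hε1 c hz).sub (memLp_const _)
    · simp only [hX, hj, if_false]
      exact memLp_const _
  have hX0 : ∀ j, ∫ x, X j x ∂unifSquare = 0 := by
    intro j
    by_cases hj : j ∈ A
    · simp only [hX, hj, if_true]
      rw [integral_sub ((memLp_kerV hε hε1 c hz).integrable (by norm_num)) (integrable_const _)]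
      simp [kbar]
    · simp [hX, hj]
  have hv := ProbabilityTheory.variance_sum_pi (μ := fun _ : Fin n => unifSquare) hXm
  have hvX : ∀ j, ProbabilityTheory.variance (X j) unifSquare ≤
      if j ∈ A then ∫ x, (kerV ε c z x) ^ 2 ∂unifSquare else 0 := by
    intro j
    by_cases hj : j ∈ A
    · simp only [hX, hj, if_true]
      rw [ProbabilityTheory.variance_sub_const ((memLp_kerV hε hε1 c hz).aestronglyMeasurable)]
      exact ProbabilityTheory.variance_le_expectation_sq (memLp_kerV hε hε1 c hz).aestronglyMeasurable
    · simp only [hX, hj, if_false]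
      have := ProbabilityTheory.variance_zero unifSquare
      exact this.le
  have hS : (∑ j, fun w : Fin n → E2 => X j (w j)) = fun w => devS ε c A (w, z) := by
    ext w
    simp [hX, devS, Finset.sum_ite_mem]
  have hmean : ∫ w, devS ε c A (w, z) ∂(unifPi n) = 0 := by
    have hS2 : (fun w => devS ε c A (w, z)) = fun w => ∑ j, X j (w j) := by
      rw [← hS]; ext w; simp
    rw [hS2, integral_finsetSum]
    · refine Finset.sum_eq_zero (fun j _ => ?_)
      have := integral_comp_eval (μ := fun _ : Fin n => unifSquare) (i := j) (f := X j) (hXm j).aestronglyMeasurable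
      rw [this, hX0]
    · intro j _
      exact integrable_comp_eval (μ := fun _ : Fin n => unifSquare) ((hXm j).integrable (by norm_num))
  rw [hS, ProbabilityTheory.variance_of_integral_eq_zero _ hmean] at hv
  · change ∫ w, (devS ε c A (w, z)) ^ 2 ∂(unifPi n) = _ at hv
    rw [hv]
    refine (Finset.sum_le_sum (fun j _ => hvX j)).trans_eq ?_
    simp
  · exact ((measurable_devS ε c A).comp measurable_prodMk_right).aemeasurable

lemma integral_dev_le {ε : ℝ} (hε : 0 < ε) (hε1 : ε ≤ 1) (c : Fin 2) {n : ℕ} (A : Finset (Fin n)) :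
    ∫ w, dev ε c A w ∂(unifPi n) ≤ √(A.card * (- Real.log ε / 2)) := by
  have hm := memLp_devS hε hε1 c A 2
  have h1 : ∫ w, dev ε c A w ∂(unifPi n) = ∫ p, |devS ε c A p| ∂((unifPi n).prod unifSquare) := by
    rw [integral_prod _ (memLp_one_iff_integrable.1 (memLp_devS hε hε1 c A 1)).abs]
    rfl
  rw [h1]
  refine (integral_abs_le_sqrt hm).trans (Real.sqrt_le_sqrt ?_)
  have hker2 : Integrable (fun p : E2 × E2 => (kerV ε c p.1 p.2) ^ 2) (unifSquare.prod unifSquare) := by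
    refine Integrable.of_bound (C := ((ε ^ 3)⁻¹) ^ 2) ((measurable_kerV ε c).pow_const 2).aestronglyMeasurable ?_
    have h1 : ∀ᵐ p ∂(unifSquare.prod unifSquare), p.1 ∈ unitSquare :=
      Measure.quasiMeasurePreserving_fst.ae ae_unifSquare
    have h2 : ∀ᵐ p ∂(unifSquare.prod unifSquare), p.2 ∈ unitSquare :=
      Measure.quasiMeasurePreserving_snd.ae ae_unifSquare
    filter_upwards [h1, h2] with p hp1 hp2
    rw [norm_pow, Real.norm_eq_abs]
    gcongr
    exact abs_kerV_le hε hε1 c hp1 hp2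
  rw [integral_prod_symm _ hm.integrable_sq]
  calc ∫ z, ∫ w, (devS ε c A (w, z)) ^ 2 ∂(unifPi n) ∂unifSquare
      ≤ ∫ z, A.card * ∫ x, (kerV ε c z x) ^ 2 ∂unifSquare ∂unifSquare := by
        apply integral_mono_ae
        · exact hm.integrable_sq.integral_prod_right
        · exact hker2.integral_prod_left.const_mul _
        · filter_upwards [ae_unifSquare] with z hz
          exact integral_devS_sq hε hε1 c A hz
    _ = A.card * ∫ z, ∫ x, (kerV ε c z x) ^ 2 ∂unifSquare ∂unifSquare := by rw [integral_const_mul]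
    _ = A.card * ∫ x, ∫ z, (kerV ε c z x) ^ 2 ∂unifSquare ∂unifSquare := by
        rw [integral_integral_swap hker2]
    _ ≤ A.card * ∫ x, (- Real.log ε / 2) ∂unifSquare := by
        apply mul_le_mul_of_nonneg_left _ (Nat.cast_nonneg _)
        apply integral_mono_ae hker2.integral_prod_right (integrable_const _)
        filter_upwards [ae_unifSquare] with x hx
        exact integral_kerV_sq_le hε hε1 c hx
    _ = _ := by simp


/-- uniform measure on cells -/
noncomputable abbrev unifCell (b : ℕ) : Measure (Fin b × Fin b) := ProbabilityTheory.uniformOn Set.univ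

instance (b : ℕ) [NeZero b] : IsProbabilityMeasure (unifCell b) :=
  ProbabilityTheory.isProbabilityMeasure_uniformOn Set.finite_univ Set.univ_nonempty

noncomputable abbrev cellPi (n b : ℕ) : Measure (Fin n → Fin b × Fin b) := Measure.pi fun _ : Fin n => unifCell b

def cnt {n b : ℕ} (i : Fin b × Fin b) (s : Fin n → Fin b × Fin b) : ℕ :=
  (Finset.univ.filter (fun j => s j = i)).card

lemma unifCell_singleton (b : ℕ) [NeZero b] (i : Fin b × Fin b) :
    (unifCell b).real {i} = ((b : ℝ) ^ 2)⁻¹ := by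
  simp [unifCell, Measure.real, ProbabilityTheory.uniformOn_univ]
  ring

lemma cnt_eq {n b : ℕ} (i : Fin b × Fin b) (s : Fin n → Fin b × Fin b) :
    (cnt i s : ℝ) = ∑ j, if s j = i then 1 else 0 := by
  simp [cnt]

lemma integral_ind (b : ℕ) [NeZero b] (i : Fin b × Fin b) :
    ∫ c, (if c = i then (1 : ℝ) else 0) ∂(unifCell b) = ((b : ℝ) ^ 2)⁻¹ := by
  rw [← unifCell_singleton b i, ← integral_indicator_one (MeasurableSet.singleton i)]
  congr 1
  ext c
  simp [Set.indicator]

lemma integral_cnt (n b : ℕ) [NeZero b] (i : Fin b × Fin b) :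
    ∫ s, (cnt i s : ℝ) ∂(cellPi n b) = n * ((b : ℝ) ^ 2)⁻¹ := by
  simp only [cnt_eq]
  rw [integral_finsetSum _ (fun j _ => Integrable.of_finite)]
  have : ∀ j : Fin n, ∫ s : Fin n → Fin b × Fin b, (if s j = i then (1 : ℝ) else 0) ∂(cellPi n b) = ((b : ℝ) ^ 2)⁻¹ := by
    intro j
    have := integral_comp_eval (μ := fun _ : Fin n => unifCell b) (i := j)
      (f := fun c => if c = i then (1 : ℝ) else 0) (measurable_of_finite _).aestronglyMeasurable
    rw [this, integral_ind]
  simp [this]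

lemma integral_cnt_sq (n b : ℕ) [NeZero b] (i : Fin b × Fin b) :
    ∫ s, ((cnt i s : ℝ) - n * ((b : ℝ) ^ 2)⁻¹) ^ 2 ∂(cellPi n b)
      = n * (((b : ℝ) ^ 2)⁻¹ * (1 - ((b : ℝ) ^ 2)⁻¹)) := by
  set X : Fin n → Fin b × Fin b → ℝ := fun _ c => if c = i then 1 else 0 with hX
  have hXm : ∀ j, MemLp (X j) 2 (unifCell b) := fun j =>
    MemLp.of_bound (measurable_of_finite _).aestronglyMeasurable 1
      (Filter.Eventually.of_forall (fun c => by simp only [hX]; split_ifs <;> simp))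
  have hv := ProbabilityTheory.variance_sum_pi (μ := fun _ : Fin n => unifCell b) hXm
  have hS : (∑ j, fun s : Fin n → Fin b × Fin b => X j (s j)) = fun s => (cnt i s : ℝ) := by
    ext s
    simp only [cnt_eq, hX, Finset.sum_apply]
  rw [hS, ProbabilityTheory.variance_eq_integral (measurable_of_finite _).aemeasurable, integral_cnt] at hv
  rw [hv]
  have : ∀ j, ProbabilityTheory.variance (X j) (unifCell b) = ((b : ℝ) ^ 2)⁻¹ * (1 - ((b : ℝ) ^ 2)⁻¹) := by
    intro j
    rw [ProbabilityTheory.variance_eq_sub (hXm j)]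
    have : (X j) ^ 2 = X j := by
      ext c; simp only [hX, Pi.pow_apply]; split_ifs <;> simp
    rw [this]
    simp only [hX, integral_ind]
    ring
  simp [this]

lemma integral_cnt_diff (n b : ℕ) [NeZero b] (i : Fin b × Fin b) :
    ∫ p, |(cnt i p.1 : ℝ) - cnt i p.2| ∂((cellPi n b).prod (cellPi n b))
      ≤ √(2 * n * (((b : ℝ) ^ 2)⁻¹ * (1 - ((b : ℝ) ^ 2)⁻¹))) := by
  set N : (Fin n → Fin b × Fin b) → ℝ := fun s => (cnt i s : ℝ) - n * ((b : ℝ) ^ 2)⁻¹ with hN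
  have hN0 : ∫ s, N s ∂(cellPi n b) = 0 := by
    simp only [hN]
    rw [integral_sub Integrable.of_finite Integrable.of_finite, integral_cnt]
    simp
  have hm : MemLp (fun p : (Fin n → Fin b × Fin b) × (Fin n → Fin b × Fin b) => (cnt i p.1 : ℝ) - cnt i p.2) 2
      ((cellPi n b).prod (cellPi n b)) := by
    refine MemLp.of_bound (measurable_of_finite _).aestronglyMeasurable (n : ℝ) 
      (Filter.Eventually.of_forall (fun p => ?_))
    have h1 : (cnt i p.1 : ℝ) ≤ n := by
      exact_mod_cast (Finset.card_le_univ _).trans_eq (Fintype.card_fin n)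
    have h2 : (cnt i p.2 : ℝ) ≤ n := by
      exact_mod_cast (Finset.card_le_univ _).trans_eq (Fintype.card_fin n)
    have h3 : (0 : ℝ) ≤ cnt i p.1 := Nat.cast_nonneg _
    have h4 : (0 : ℝ) ≤ cnt i p.2 := Nat.cast_nonneg _
    rw [Real.norm_eq_abs, abs_le]
    constructor <;> linarith
  refine (integral_abs_le_sqrt hm).trans (Real.sqrt_le_sqrt ?_)
  have e : ∀ p : (Fin n → Fin b × Fin b) × (Fin n → Fin b × Fin b),
      ((cnt i p.1 : ℝ) - cnt i p.2) ^ 2 = (N p.1 ^ 2 - 2 * (N p.1 * N p.2)) + N p.2 ^ 2 := by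
    intro p; simp only [hN]; ring
  simp only [e]
  rw [integral_add Integrable.of_finite Integrable.of_finite,
    integral_sub Integrable.of_finite Integrable.of_finite, integral_const_mul,
    integral_prod_mul (μ := cellPi n b) (ν := cellPi n b) N N, hN0]
  have h1 : ∫ p : (Fin n → Fin b × Fin b) × (Fin n → Fin b × Fin b), N p.1 ^ 2 ∂((cellPi n b).prod (cellPi n b))
      = ∫ s, N s ^ 2 ∂(cellPi n b) := by
    rw [integral_prod _ Integrable.of_finite]; simp
  have h2 : ∫ p : (Fin n → Fin b × Fin b) × (Fin n → Fin b × Fin b), N p.2 ^ 2 ∂((cellPi n b).prod (cellPi n b))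
      = ∫ s, N s ^ 2 ∂(cellPi n b) := by
    rw [integral_prod _ Integrable.of_finite]; simp
  rw [h1, h2]
  simp only [hN]
  rw [integral_cnt_sq]
  apply le_of_eq
  ring

lemma integral_sqrt_min (n b : ℕ) [NeZero b] (i : Fin b × Fin b) (L : ℝ) (hL : 0 ≤ L) :
    ∫ p, √((min (cnt i p.1) (cnt i p.2) : ℕ) * L) ∂((cellPi n b).prod (cellPi n b))
      ≤ √(n * ((b : ℝ) ^ 2)⁻¹ * L) := by
  set X : (Fin n → Fin b × Fin b) × (Fin n → Fin b × Fin b) → ℝ := fun p => √((min (cnt i p.1) (cnt i p.2) : ℕ) * L) with hX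
  have hm : MemLp X 2 ((cellPi n b).prod (cellPi n b)) := by
    obtain ⟨C, hC⟩ := (Set.finite_range X).bddAbove
    refine MemLp.of_bound (measurable_of_finite _).aestronglyMeasurable C
      (Filter.Eventually.of_forall (fun p => ?_))
    rw [Real.norm_of_nonneg (Real.sqrt_nonneg _)]
    exact hC ⟨p, rfl⟩
  have h1 := integral_abs_le_sqrt hm
  have h2 : ∀ p, |X p| = X p := fun p => abs_of_nonneg (Real.sqrt_nonneg _)
  simp only [h2] at h1
  refine h1.trans (Real.sqrt_le_sqrt ?_)
  have h3 : ∀ p, X p ^ 2 = (min (cnt i p.1) (cnt i p.2) : ℕ) * L := fun p => Real.sq_sqrt (by positivity)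
  simp only [h3]
  rw [integral_mul_const]
  gcongr
  calc ∫ p : (Fin n → Fin b × Fin b) × (Fin n → Fin b × Fin b), ((min (cnt i p.1) (cnt i p.2) : ℕ) : ℝ) ∂((cellPi n b).prod (cellPi n b))
      ≤ ∫ p, (cnt i p.1 : ℝ) ∂((cellPi n b).prod (cellPi n b)) := by
        apply integral_mono Integrable.of_finite Integrable.of_finite
        intro p
        exact Nat.cast_le.2 (min_le_left _ _)
    _ = ∫ s, (cnt i s : ℝ) ∂(cellPi n b) := by
        rw [integral_prod _ Integrable.of_finite]; simp
    _ = _ := integral_cnt n b i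


/-- half-open unit square -/
def openSq : Set E2 := {p | ∀ i, p i ∈ Set.Ico (0 : ℝ) 1}

lemma openSq_eq : openSq = (MeasurableEquiv.toLp 2 (Fin 2 → ℝ)).symm ⁻¹' (Set.univ.pi fun _ => Set.Ico 0 1) := by
  ext p
  simp only [openSq, Set.mem_ofPred_eq, Set.mem_preimage, Set.mem_pi, Set.mem_univ, true_imp_iff]
  rfl

lemma measurableSet_openSq : MeasurableSet openSq := by
  rw [openSq_eq]
  exact (MeasurableEquiv.measurable _) (MeasurableSet.univ_pi (fun _ => measurableSet_Ico))

lemma openSq_ae : openSq =ᵐ[volume] unitSquare := by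
  rw [openSq_eq, unitSquare_eq_s19]
  apply (EuclideanSpace.volume_preserving_symm_measurableEquiv_toLp (Fin 2)).quasiMeasurePreserving.preimage_ae_eq
  exact Measure.univ_pi_Ico_ae_eq_Icc (f := (0 : Fin 2 → ℝ)) (g := 1)

lemma unifSquare_eq : unifSquare = volume.restrict openSq :=
  Measure.restrict_congr_set openSq_ae.symm

lemma ae_openSq : ∀ᵐ x ∂unifSquare, x ∈ openSq := by
  rw [unifSquare_eq]; exact ae_restrict_mem measurableSet_openSq

/-- embedding of the unit square as the cell `c` -/
noncomputable def cellMap (b : ℕ) (c : Fin b × Fin b) (w : E2) : E2 :=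
  (b : ℝ)⁻¹ • (w + !₂[(c.1 : ℝ), (c.2 : ℝ)])

lemma measurable_cellMap (b : ℕ) (c : Fin b × Fin b) : Measurable (cellMap b c) := by
  unfold cellMap; fun_prop

lemma preimage_grid (b : ℕ) [NeZero b] (c : Fin b × Fin b) : cellMap b c ⁻¹' gridSquare b c = openSq := by
  have hb : (0 : ℝ) < b := Nat.cast_pos.2 (NeZero.pos b)
  ext w
  simp only [cellMap, gridSquare, openSq, Set.mem_preimage, Set.mem_ofPred_eq, Fin.forall_fin_two, Set.mem_Ico,
    PiLp.smul_apply, PiLp.add_apply, smul_eq_mul, ← div_eq_inv_mul]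
  rw [div_le_div_iff_of_pos_right hb, div_le_div_iff_of_pos_right hb, div_lt_div_iff_of_pos_right hb, div_lt_div_iff_of_pos_right hb]
  simp [add_comm]

lemma measurableSet_grid (b : ℕ) (c : Fin b × Fin b) : MeasurableSet (gridSquare b c) := by
  unfold gridSquare
  apply MeasurableSet.inter
  · exact (by fun_prop : Measurable fun p : E2 => p 0) measurableSet_Ico
  · exact (by fun_prop : Measurable fun p : E2 => p 1) measurableSet_Ico

lemma ico_unique {b i i' : ℕ} {t : ℝ} (hb : (0 : ℝ) < b) (h : t ∈ Set.Ico ((i : ℝ) / b) (((i : ℝ) + 1) / b))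
    (h' : t ∈ Set.Ico ((i' : ℝ) / b) (((i' : ℝ) + 1) / b)) : i = i' := by
  simp only [Set.mem_Ico, div_le_iff₀ hb, lt_div_iff₀ hb] at h h'
  have h1 : (i : ℝ) < i' + 1 := by linarith
  have h2 : (i' : ℝ) < i + 1 := by linarith
  have h3 : i < i' + 1 := by exact_mod_cast h1
  have h4 : i' < i + 1 := by exact_mod_cast h2
  omega

lemma grid_unique {b : ℕ} [NeZero b] {c c' : Fin b × Fin b} {p : E2} (h : p ∈ gridSquare b c)
    (h' : p ∈ gridSquare b c') : c = c' := by
  have hb : (0 : ℝ) < b := Nat.cast_pos.2 (NeZero.pos b)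
  exact Prod.ext (Fin.ext (ico_unique hb h.1 h'.1)) (Fin.ext (ico_unique hb h.2 h'.2))

lemma ico_exists {b : ℕ} {t : ℝ} (hb : (0 : ℝ) < b) (ht : t ∈ Set.Ico (0 : ℝ) 1) :
    ∃ i : Fin b, t ∈ Set.Ico ((i : ℝ) / b) (((i : ℝ) + 1) / b) := by
  have h0 : 0 ≤ t * b := mul_nonneg ht.1 hb.le
  refine ⟨⟨⌊t * b⌋₊, ?_⟩, ?_⟩
  · rw [Nat.floor_lt h0]
    have := ht.2
    nlinarith
  · simp only [Set.mem_Ico, div_le_iff₀ hb, lt_div_iff₀ hb]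
    exact ⟨Nat.floor_le h0, Nat.lt_floor_add_one _⟩

lemma iUnion_grid (b : ℕ) [NeZero b] : ⋃ c, gridSquare b c = openSq := by
  have hb : (0 : ℝ) < b := Nat.cast_pos.2 (NeZero.pos b)
  ext p
  simp only [Set.mem_iUnion]
  constructor
  · rintro ⟨c, h⟩
    have key : ∀ (i : Fin b) (t : ℝ), t ∈ Set.Ico ((i : ℝ) / b) (((i : ℝ) + 1) / b) → t ∈ Set.Ico (0 : ℝ) 1 := by
      intro i t ht
      refine ⟨le_trans (by positivity) ht.1, lt_of_lt_of_le ht.2 ?_⟩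
      rw [div_le_one hb]
      exact_mod_cast i.2
    intro i
    fin_cases i
    · exact key _ _ h.1
    · exact key _ _ h.2
  · intro h
    obtain ⟨i, hi⟩ := ico_exists hb (h 0)
    obtain ⟨j, hj⟩ := ico_exists hb (h 1)
    exact ⟨(i, j), hi, hj⟩

lemma volume_preimage_cellMap (b : ℕ) [NeZero b] (c : Fin b × Fin b) (S : Set E2) :
    volume (cellMap b c ⁻¹' S) = ENNReal.ofReal ((b : ℝ) ^ 2) * volume S := by
  have hb : (0 : ℝ) < b := Nat.cast_pos.2 (NeZero.pos b)
  have : cellMap b c ⁻¹' S = (fun w => w + !₂[(c.1 : ℝ), (c.2 : ℝ)]) ⁻¹' ((fun w => (b : ℝ)⁻¹ • w) ⁻¹' S) := rfl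
  rw [this, measure_preimage_add_right, Measure.addHaar_preimage_smul _ (by positivity)]
  simp

lemma unifCell_singleton' (b : ℕ) [NeZero b] (i : Fin b × Fin b) :
    (unifCell b) {i} = ENNReal.ofReal (((b : ℝ) ^ 2)⁻¹) := by
  rw [← unifCell_singleton b i, ofReal_measureReal]

lemma measurePreserving_cell (b : ℕ) [NeZero b] :
    MeasurePreserving (fun q : (Fin b × Fin b) × E2 => cellMap b q.1 q.2) ((unifCell b).prod unifSquare) unifSquare := by
  have hb : (0 : ℝ) < b := Nat.cast_pos.2 (NeZero.pos b)
  have hmeas : Measurable (fun q : (Fin b × Fin b) × E2 => cellMap b q.1 q.2) :=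
    measurable_from_prod_countable_right (fun c => measurable_cellMap b c)
  refine ⟨hmeas, ?_⟩
  ext S hS
  rw [Measure.map_apply hmeas hS, Measure.prod_apply (hmeas hS), lintegral_fintype]
  have h1 : ∀ c : Fin b × Fin b, unifSquare (Prod.mk c ⁻¹' ((fun q : (Fin b × Fin b) × E2 => cellMap b q.1 q.2) ⁻¹' S))
      * (unifCell b) {c} = volume (S ∩ gridSquare b c) := by
    intro c
    have e : Prod.mk c ⁻¹' ((fun q : (Fin b × Fin b) × E2 => cellMap b q.1 q.2) ⁻¹' S) = cellMap b c ⁻¹' S := rfl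
    rw [e, unifSquare_eq, Measure.restrict_apply (measurable_cellMap b c hS), ← preimage_grid b c,
      ← Set.preimage_inter, volume_preimage_cellMap, unifCell_singleton', mul_right_comm,
      ← ENNReal.ofReal_mul (by positivity), mul_inv_cancel₀ (by positivity)]
    simp
  simp only [h1]
  rw [unifSquare_eq, Measure.restrict_apply hS, ← iUnion_grid b, Set.inter_iUnion, measure_iUnion, tsum_fintype]
  · intro c c' hcc
    apply Set.disjoint_left.2
    intro p hp hp'
    exact hcc (grid_unique hp.2 hp'.2)
  · exact fun c => hS.inter (measurableSet_grid b c)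

lemma measurePreserving_cellPi (n b : ℕ) [NeZero b] :
    MeasurePreserving (fun (q : (Fin n → Fin b × Fin b) × (Fin n → E2)) (j : Fin n) => cellMap b (q.1 j) (q.2 j))
      ((cellPi n b).prod (unifPi n)) (unifPi n) := by
  have h1 := (measurePreserving_arrowProdEquivProdArrow (Fin b × Fin b) E2 (Fin n) (fun _ => unifCell b) (fun _ => unifSquare)).symm
  have h2 := measurePreserving_pi (fun _ : Fin n => (unifCell b).prod unifSquare) (fun _ => unifSquare)
    (fun _ => measurePreserving_cell b)
  exact h2.comp h1

lemma measurePreserving_mid {α β γ δ : Type*} [MeasurableSpace α] [MeasurableSpace β] [MeasurableSpace γ]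
    [MeasurableSpace δ] (μ : Measure α) (ν : Measure β) (ρ : Measure γ) (τ : Measure δ)
    [IsProbabilityMeasure μ] [IsProbabilityMeasure ν] [IsProbabilityMeasure ρ] [IsProbabilityMeasure τ] :
    MeasurePreserving (fun q : (α × β) × (γ × δ) => ((q.1.1, q.2.1), (q.1.2, q.2.2)))
      ((μ.prod ν).prod (ρ.prod τ)) ((μ.prod ρ).prod (ν.prod τ)) := by
  have s1 := measurePreserving_prodAssoc μ ν (ρ.prod τ)
  have s2 := (MeasurePreserving.id μ).prod (measurePreserving_prodAssoc ν ρ τ).symm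
  have s3 := (MeasurePreserving.id μ).prod ((Measure.measurePreserving_swap (μ := ν) (ν := ρ)).prod (MeasurePreserving.id τ))
  have s4 := (MeasurePreserving.id μ).prod (measurePreserving_prodAssoc ρ ν τ)
  have s5 := (measurePreserving_prodAssoc μ ρ (ν.prod τ)).symm
  exact s5.comp (s4.comp (s3.comp (s2.comp s1)))

lemma measurePreserving_all (n b : ℕ) [NeZero b] :
    MeasurePreserving (fun q : ((Fin n → Fin b × Fin b) × (Fin n → Fin b × Fin b)) × ((Fin n → E2) × (Fin n → E2)) =>
      ((fun j => cellMap b (q.1.1 j) (q.2.1 j), fun j => cellMap b (q.1.2 j) (q.2.2 j)) : (Fin n → E2) × (Fin n → E2)))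
      (((cellPi n b).prod (cellPi n b)).prod ((unifPi n).prod (unifPi n))) ((unifPi n).prod (unifPi n)) :=
  ((measurePreserving_cellPi n b).prod (measurePreserving_cellPi n b)).comp
    (measurePreserving_mid (cellPi n b) (cellPi n b) (unifPi n) (unifPi n))


lemma openSq_sub {p : E2} (h : p ∈ openSq) : p ∈ unitSquare := fun i => ⟨(h i).1, (h i).2.le⟩

lemma integrable_devterm {ε : ℝ} (hε : 0 < ε) (hε1 : ε ≤ 1) (c : Fin 2) {n : ℕ} (A : Finset (Fin n))
    (w : Fin n → E2) (hw : ∀ j, w j ∈ unitSquare) :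
    Integrable (fun z => |∑ j ∈ A, (kerV ε c z (w j) - kbar ε c z)|) unifSquare := by
  apply Integrable.abs
  refine integrable_finsetSum _ (fun j _ => Integrable.sub (integrable_kerV hε hε1 c (hw j)) ?_)
  refine Integrable.of_bound (C := (ε ^ 3)⁻¹) (measurable_kbar ε c).aestronglyMeasurable ?_
  filter_upwards [ae_unifSquare] with z hz
  exact abs_kbar_le hε hε1 c hz

lemma cell_match {n k : ℕ} (A B : Finset (Fin n)) (hA : A.card = k) (hB : B.card = k)
    (w v : Fin n → E2) (hw : ∀ j, w j ∈ unitSquare) (hv : ∀ j, v j ∈ unitSquare)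
    {ε : ℝ} (hε : 0 < ε) (hε1 : ε ≤ 1) :
    ∃ e : A ≃ B, ∑ a : A, ‖w a - v (e a)‖ ≤ 2 * √2 * ε * k +
      ∑ c : Fin 2, (dev ε c A w + dev ε c B v) := by
  classical
  let α := (A.equivFinOfCardEq hA).symm
  let β := (B.equivFinOfCardEq hB).symm
  obtain ⟨σ, hσ⟩ := matching_bound (fun j => w (α j)) (fun j => v (β j)) (fun j => hw _)
    (fun j => hv _) hε hε1
  refine ⟨(α.symm.trans σ).trans β, ?_⟩
  have h1 : ∑ a : A, ‖w a - v (((α.symm.trans σ).trans β) a)‖ = ∑ j, ‖w (α j) - v (β (σ j))‖ := by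
    rw [← Equiv.sum_comp α]
    simp
  rw [h1]
  refine hσ.trans (add_le_add le_rfl ?_)
  have h2 : ∑ c : Fin 2, (dev ε c A w + dev ε c B v) = ∫ z, ∑ c : Fin 2,
      (|∑ j ∈ A, (kerV ε c z (w j) - kbar ε c z)| + |∑ j ∈ B, (kerV ε c z (v j) - kbar ε c z)|) ∂unifSquare := by
    refine Eq.symm ((integral_finsetSum _ (fun c _ => (integrable_devterm hε hε1 c A w hw).add (integrable_devterm hε hε1 c B v hv))).trans ?_)
    refine Finset.sum_congr rfl (fun c _ => ?_)
    exact integral_add (integrable_devterm hε hε1 c A w hw) (integrable_devterm hε hε1 c B v hv)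
  rw [h2]
  refine integral_mono_of_nonneg (Filter.Eventually.of_forall fun z => Finset.sum_nonneg fun c _ => abs_nonneg _)
    (integrable_finsetSum _ (fun c _ => (integrable_devterm hε hε1 c A w hw).add (integrable_devterm hε hε1 c B v hv)))
    (Filter.Eventually.of_forall fun z => ?_)
  refine Finset.sum_le_sum (fun c _ => ?_)
  have h3 : ∑ j, kerV ε c z (w (α j)) = ∑ j ∈ A, kerV ε c z (w j) := by
    rw [Equiv.sum_comp α (fun a : A => kerV ε c z (w a)), Finset.sum_coe_sort A (fun a => kerV ε c z (w a))]
  have h4 : ∑ j, kerV ε c z (v (β j)) = ∑ j ∈ B, kerV ε c z (v j) := by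
    rw [Equiv.sum_comp β (fun a : B => kerV ε c z (v a)), Finset.sum_coe_sort B (fun a => kerV ε c z (v a))]
  rw [h3, h4]
  simp only [Finset.sum_sub_distrib, Finset.sum_const, hA, hB]
  refine le_trans (le_of_eq ?_) (abs_sub _ _)
  congr 1; ring

lemma exists_sets {n b : ℕ} (s t : Fin n → Fin b × Fin b) :
    ∃ P : Fin b × Fin b → Finset (Fin n) × Finset (Fin n), ∀ i,
      (P i).1 ⊆ Finset.univ.filter (fun j => s j = i) ∧ (P i).2 ⊆ Finset.univ.filter (fun j => t j = i) ∧
      (P i).1.card = min (cnt i s) (cnt i t) ∧ (P i).2.card = min (cnt i s) (cnt i t) := by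
  have : ∀ i, ∃ P : Finset (Fin n) × Finset (Fin n), 
      P.1 ⊆ Finset.univ.filter (fun j => s j = i) ∧ P.2 ⊆ Finset.univ.filter (fun j => t j = i) ∧
      P.1.card = min (cnt i s) (cnt i t) ∧ P.2.card = min (cnt i s) (cnt i t) := by
    intro i
    obtain ⟨A, h1, h2⟩ := Finset.exists_subset_card_eq (s := Finset.univ.filter (fun j => s j = i))
      (n := min (cnt i s) (cnt i t)) (min_le_left _ _)
    obtain ⟨B, h3, h4⟩ := Finset.exists_subset_card_eq (s := Finset.univ.filter (fun j => t j = i))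
      (n := min (cnt i s) (cnt i t)) (min_le_right _ _)
    exact ⟨(A, B), h1, h3, h2, h4⟩
  choose P hP using this
  exact ⟨P, hP⟩

lemma cellMap_mem_grid {b : ℕ} [NeZero b] {c : Fin b × Fin b} {w : E2} (hw : w ∈ openSq) (i : Fin b × Fin b) :
    cellMap b c w ∈ gridSquare b i ↔ c = i := by
  have h : cellMap b c w ∈ gridSquare b c := by
    rw [← Set.mem_preimage, preimage_grid]; exact hw
  exact ⟨fun h' => grid_unique h h', fun h' => h' ▸ h⟩

lemma cellMap_mem_unit {b : ℕ} [NeZero b] {c : Fin b × Fin b} {w : E2} (hw : w ∈ openSq) :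
    cellMap b c w ∈ unitSquare := by
  apply openSq_sub
  rw [← iUnion_grid b]
  exact Set.mem_iUnion.2 ⟨c, (cellMap_mem_grid hw c).2 rfl⟩

lemma norm_cellMap_sub (b : ℕ) (c : Fin b × Fin b) (w v : E2) :
    ‖cellMap b c w - cellMap b c v‖ = (b : ℝ)⁻¹ * ‖w - v‖ := by
  unfold cellMap
  rw [← smul_sub, norm_smul, add_sub_add_right_eq_sub]
  simp

lemma natCard_eq_cnt {n b : ℕ} (s : Fin n → Fin b × Fin b) (i : Fin b × Fin b) (p : Fin n → Prop)
    (h : ∀ j, p j ↔ s j = i) : Nat.card {j : Fin n // p j} = cnt i s := by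
  classical
  rw [Nat.card_eq_fintype_card, Fintype.card_subtype, cnt]
  congr 1
  ext j; simp [h]

lemma sum_cnt {n b : ℕ} (s : Fin n → Fin b × Fin b) : ∑ i, cnt i s = n := by
  have := Finset.card_eq_sum_card_fiberwise (s := (Finset.univ : Finset (Fin n))) (t := Finset.univ) (f := s)
    (fun _ _ => by simp)
  simpa [cnt] using this.symm

lemma sum_leftover {n b : ℕ} (s t : Fin n → Fin b × Fin b) :
    ∑ i, ((cnt i s : ℝ) - (min (cnt i s) (cnt i t) : ℕ)) = 1 / 2 * ∑ i, |(cnt i s : ℝ) - cnt i t| := by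
  have h1 : ∑ i, (cnt i s : ℝ) = ∑ i, (cnt i t : ℝ) := by
    have := (sum_cnt s).trans (sum_cnt t).symm
    exact_mod_cast this
  have h2 : ∀ i, ((cnt i s : ℝ) - (min (cnt i s) (cnt i t) : ℕ)) =
      1 / 2 * |(cnt i s : ℝ) - cnt i t| + 1 / 2 * ((cnt i s : ℝ) - cnt i t) := by
    intro i
    rw [Nat.cast_min]
    rcases le_total (cnt i s : ℝ) (cnt i t : ℝ) with h | h
    · rw [min_eq_left h, abs_of_nonpos (by linarith)]; ring
    · rw [min_eq_right h, abs_of_nonneg (by linarith)]; ring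
  simp only [h2, Finset.sum_add_distrib, ← Finset.mul_sum, Finset.sum_sub_distrib, h1]
  ring

noncomputable def selP {n b : ℕ} (s t : Fin n → Fin b × Fin b) : Fin b × Fin b → Finset (Fin n) × Finset (Fin n) :=
  Classical.choose (exists_sets s t)

lemma selP_spec {n b : ℕ} (s t : Fin n → Fin b × Fin b) (i : Fin b × Fin b) :
      (selP s t i).1 ⊆ Finset.univ.filter (fun j => s j = i) ∧ (selP s t i).2 ⊆ Finset.univ.filter (fun j => t j = i) ∧
      (selP s t i).1.card = min (cnt i s) (cnt i t) ∧ (selP s t i).2.card = min (cnt i s) (cnt i t) :=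
  Classical.choose_spec (exists_sets s t) i

/-- deterministic upper bound -/
noncomputable def bnd (ε : ℝ) {n b : ℕ} (s t : Fin n → Fin b × Fin b) (w v : Fin n → E2) : ℝ :=
  ∑ i, (b : ℝ)⁻¹ * (2 * √2 * ε * (min (cnt i s) (cnt i t) : ℕ) +
      ∑ c : Fin 2, (dev ε c (selP s t i).1 w + dev ε c (selP s t i).2 v)) +
    √2 / 2 * ∑ i, |(cnt i s : ℝ) - cnt i t|

lemma exists_perm {n b : ℕ} [NeZero b] (s t : Fin n → Fin b × Fin b) (w v : Fin n → E2)
    (hw : ∀ j, w j ∈ openSq) (hv : ∀ j, v j ∈ openSq) {ε : ℝ} (hε : 0 < ε) (hε1 : ε ≤ 1) :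
    ∃ σ : Equiv.Perm (Fin n), IsLocallyMaximal (b := b) (fun j => cellMap b (s j) (w j))
      (fun j => cellMap b (t j) (v j)) σ ∧
      ∑ j, ‖cellMap b (s j) (w j) - cellMap b (t (σ j)) (v (σ j))‖ ≤ bnd ε s t w v := by
  classical
  have hs := selP_spec s t
  have hsA : ∀ i j, j ∈ (selP s t i).1 → s j = i := fun i j h => by simpa using (hs i).1 h
  have hsB : ∀ i j, j ∈ (selP s t i).2 → t j = i := fun i j h => by simpa using (hs i).2.1 h
  have he := fun i => cell_match (selP s t i).1 (selP s t i).2 (hs i).2.2.1 (hs i).2.2.2 w v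
    (fun j => openSq_sub (hw j)) (fun j => openSq_sub (hv j)) hε hε1
  choose e he using he
  let f : Fin n → Fin n := fun j => if h : j ∈ (selP s t (s j)).1 then (e (s j) ⟨j, h⟩ : Fin n) else j
  have hf : ∀ i j (h : j ∈ (selP s t i).1), f j = e i ⟨j, h⟩ := by
    intro i j h
    obtain rfl := hsA i j h
    simp [f, h]
  have hinj : Set.InjOn f {j | j ∈ (selP s t (s j)).1} := by
    intro j hj l hl hjl
    have hj' : j ∈ (selP s t (s j)).1 := hj
    have hl' : l ∈ (selP s t (s l)).1 := hl
    rw [hf _ j hj', hf _ l hl'] at hjl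
    have h1 := hsB _ _ (e (s j) ⟨j, hj'⟩).2
    have h2 := hsB _ _ (e (s l) ⟨l, hl'⟩).2
    have h3 : s j = s l := by rw [← h1, ← h2, hjl]
    have hl2 : l ∈ (selP s t (s j)).1 := h3 ▸ hl'
    have h4 : (e (s l) ⟨l, hl'⟩ : Fin n) = e (s j) ⟨l, hl2⟩ := by
      rw [← hf _ l hl', ← hf _ l hl2]
    rw [h4] at hjl
    have := (e (s j)).injective (Subtype.ext hjl)
    simpa using this
  obtain ⟨g, hg⟩ := Set.MapsTo.exists_equiv_extend_of_card_eq (t := (Finset.univ : Finset (Fin n)))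
    (f := f) (by simp) (s := {j | j ∈ (selP s t (s j)).1}) (fun _ _ => by simp) hinj
  let σ : Equiv.Perm (Fin n) := g.trans (Equiv.subtypeUnivEquiv (by simp))
  have hσ : ∀ i j (h : j ∈ (selP s t i).1), σ j = e i ⟨j, h⟩ := by
    intro i j h
    rw [← hf i j h]
    refine hg j ?_
    show j ∈ (selP s t (s j)).1
    rw [hsA i j h]; exact h
  refine ⟨σ, ?_, ?_⟩
  · intro i
    rw [natCard_eq_cnt s i _ (fun j => cellMap_mem_grid (hw j) i),
      natCard_eq_cnt t i _ (fun j => cellMap_mem_grid (hv j) i)]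
    simp only [cellMap_mem_grid (hw _), cellMap_mem_grid (hv _)]
    rw [Nat.card_eq_fintype_card, Fintype.card_subtype]
    apply le_antisymm
    · apply le_min
      · exact Finset.card_le_card (fun j => by simp; tauto)
      · unfold cnt
        apply Finset.card_le_card_of_injOn σ
        · intro j; simp
        · exact σ.injective.injOn
    · rw [← (hs i).2.2.1]
      apply Finset.card_le_card
      intro j hj
      have : t (σ j) = i := by
        rw [hσ i j hj]; exact hsB _ _ (e i ⟨j, hj⟩).2
      simp [hsA i j hj, this]
  · rw [← Finset.sum_fiberwise (Finset.univ : Finset (Fin n)) s]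
    have hb : bnd ε s t w v = ∑ i, ((b : ℝ)⁻¹ * (2 * √2 * ε * (min (cnt i s) (cnt i t) : ℕ) +
      ∑ c : Fin 2, (dev ε c (selP s t i).1 w + dev ε c (selP s t i).2 v)) +
        √2 * ((cnt i s : ℝ) - (min (cnt i s) (cnt i t) : ℕ))) := by
      rw [Finset.sum_add_distrib, ← Finset.mul_sum (f := fun i => (cnt i s : ℝ) - (min (cnt i s) (cnt i t) : ℕ)), sum_leftover, bnd]
      ring
    rw [hb]
    refine Finset.sum_le_sum (fun i _ => ?_)
    rw [← Finset.sum_sdiff (hs i).1, add_comm]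
    apply add_le_add
    · refine le_trans (le_of_eq ?_) (mul_le_mul_of_nonneg_left (he i) (by positivity))
      rw [Finset.mul_sum, ← Finset.sum_coe_sort]
      refine Finset.sum_congr rfl (fun a _ => ?_)
      rw [hσ i a a.2, hsA i a a.2, hsB i _ (e i a).2, norm_cellMap_sub]
    · have : ∀ j ∈ (Finset.univ.filter (fun j => s j = i)) \ (selP s t i).1,
          ‖cellMap b (s j) (w j) - cellMap b (t (σ j)) (v (σ j))‖ ≤ √2 := fun j _ =>
        norm_sub_le_unitSquare (cellMap_mem_unit (hw _)) (cellMap_mem_unit (hv _))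
      refine (Finset.sum_le_card_nsmul _ _ _ this).trans (le_of_eq ?_)
      rw [Finset.card_sdiff_of_subset (hs i).1, (hs i).2.2.1, nsmul_eq_mul, Nat.cast_sub, mul_comm]
      · rfl
      · exact min_le_left _ _


noncomputable def val (ε : ℝ) {n b : ℕ} (s t : Fin n → Fin b × Fin b) : ℝ :=
  ∑ i, (b : ℝ)⁻¹ * (2 * √2 * ε * (min (cnt i s) (cnt i t) : ℕ) +
      4 * √((min (cnt i s) (cnt i t) : ℕ) * (-Real.log ε / 2))) +
    √2 / 2 * ∑ i, |(cnt i s : ℝ) - cnt i t|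

lemma integrable_bnd {n b : ℕ} {ε : ℝ} (hε : 0 < ε) (hε1 : ε ≤ 1) (s t : Fin n → Fin b × Fin b) :
    Integrable (fun q : (Fin n → E2) × (Fin n → E2) => bnd ε s t q.1 q.2) ((unifPi n).prod (unifPi n)) := by
  unfold bnd
  refine Integrable.add (integrable_finsetSum _ fun i _ => Integrable.const_mul (Integrable.add
    (integrable_const _) (integrable_finsetSum _ fun c _ => Integrable.add ?_ ?_)) _) (integrable_const _)
  · exact (integrable_dev hε hε1 c _).comp_fst _
  · exact (integrable_dev hε hε1 c _).comp_snd _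

lemma integral_bnd {n b : ℕ} {ε : ℝ} (hε : 0 < ε) (hε1 : ε ≤ 1) (s t : Fin n → Fin b × Fin b) :
    ∫ q : (Fin n → E2) × (Fin n → E2), bnd ε s t q.1 q.2 ∂((unifPi n).prod (unifPi n)) ≤ val ε s t := by
  have hD : ∀ i c, Integrable (fun q : (Fin n → E2) × (Fin n → E2) => dev ε c (selP s t i).1 q.1 + dev ε c (selP s t i).2 q.2)
      ((unifPi n).prod (unifPi n)) := fun i c =>
    ((integrable_dev hε hε1 c _).comp_fst _).add ((integrable_dev hε hε1 c _).comp_snd _)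
  have hS : ∀ i, Integrable (fun q : (Fin n → E2) × (Fin n → E2) => ∑ c : Fin 2, (dev ε c (selP s t i).1 q.1 + dev ε c (selP s t i).2 q.2))
      ((unifPi n).prod (unifPi n)) := fun i => integrable_finsetSum _ fun c _ => hD i c
  have hT : ∀ i, Integrable (fun q : (Fin n → E2) × (Fin n → E2) => (b : ℝ)⁻¹ * (2 * √2 * ε * (min (cnt i s) (cnt i t) : ℕ) +
      ∑ c : Fin 2, (dev ε c (selP s t i).1 q.1 + dev ε c (selP s t i).2 q.2)))
      ((unifPi n).prod (unifPi n)) := fun i => ((integrable_const _).add (hS i)).const_mul _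
  unfold bnd val
  rw [integral_add (integrable_finsetSum _ fun i _ => hT i) (integrable_const _),
    integral_finsetSum _ (fun i _ => hT i), integral_const]
  simp only [probReal_univ, one_smul]
  refine add_le_add (Finset.sum_le_sum fun i _ => ?_) le_rfl
  rw [integral_const_mul, integral_add (integrable_const _) (hS i), integral_finsetSum _ (fun c _ => hD i c), integral_const]
  simp only [probReal_univ, one_smul]
  refine mul_le_mul_of_nonneg_left (add_le_add le_rfl ?_) (by positivity)
  have key : ∀ c, ∫ q : (Fin n → E2) × (Fin n → E2), (dev ε c (selP s t i).1 q.1 + dev ε c (selP s t i).2 q.2)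
      ∂((unifPi n).prod (unifPi n)) ≤ 2 * √((min (cnt i s) (cnt i t) : ℕ) * (-Real.log ε / 2)) := by
    intro c
    rw [integral_add ((integrable_dev hε hε1 c _).comp_fst _) ((integrable_dev hε hε1 c _).comp_snd _),
      integral_fun_fst, integral_fun_snd]
    simp only [probReal_univ, one_smul]
    have h1 := integral_dev_le hε hε1 c (selP s t i).1
    have h2 := integral_dev_le hε hε1 c (selP s t i).2
    rw [(selP_spec s t i).2.2.1] at h1
    rw [(selP_spec s t i).2.2.2] at h2
    linarith
  rw [Fin.sum_univ_two]
  linarith [key 0, key 1]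

lemma integral_val (n b : ℕ) [NeZero b] {ε : ℝ} (hε : 0 < ε) (hε1 : ε ≤ 1) :
    ∫ p : (Fin n → Fin b × Fin b) × (Fin n → Fin b × Fin b), val ε p.1 p.2 ∂((cellPi n b).prod (cellPi n b)) ≤
      (b : ℝ) ^ 2 * ((b : ℝ)⁻¹ * (2 * √2 * ε * (n * ((b : ℝ) ^ 2)⁻¹) + 4 * √(n * ((b : ℝ) ^ 2)⁻¹ * (-Real.log ε / 2))))
      + √2 / 2 * ((b : ℝ) ^ 2 * √(2 * n * (((b : ℝ) ^ 2)⁻¹ * (1 - ((b : ℝ) ^ 2)⁻¹)))) := by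
  have hL : 0 ≤ -Real.log ε / 2 := by have := Real.log_nonpos hε.le hε1; linarith
  have hcard : ((Finset.univ : Finset (Fin b × Fin b)).card : ℝ) = (b : ℝ) ^ 2 := by simp; ring
  unfold val
  rw [integral_add Integrable.of_finite Integrable.of_finite, integral_finsetSum _ (fun _ _ => Integrable.of_finite),
    integral_const_mul, integral_finsetSum _ (fun _ _ => Integrable.of_finite)]
  apply add_le_add
  · rw [← hcard, ← nsmul_eq_mul]
    refine Finset.sum_le_card_nsmul _ _ _ (fun i _ => ?_)
    rw [integral_const_mul, integral_add Integrable.of_finite Integrable.of_finite, integral_const_mul, integral_const_mul, hcard]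
    have h1 := integral_sqrt_min n b i _ hL
    have h2 : ∫ p : (Fin n → Fin b × Fin b) × (Fin n → Fin b × Fin b), ((min (cnt i p.1) (cnt i p.2) : ℕ) : ℝ)
        ∂((cellPi n b).prod (cellPi n b)) ≤ n * ((b : ℝ) ^ 2)⁻¹ := by
      calc _ ≤ ∫ p : (Fin n → Fin b × Fin b) × (Fin n → Fin b × Fin b), (cnt i p.1 : ℝ) ∂((cellPi n b).prod (cellPi n b)) := by
            refine integral_mono Integrable.of_finite Integrable.of_finite (fun p => ?_)
            exact Nat.cast_le.2 (min_le_left _ _)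
        _ = _ := by
            rw [integral_fun_fst (f := fun s => (cnt i s : ℝ))]
            simp only [probReal_univ, one_smul, integral_cnt]
    gcongr
  · refine mul_le_mul_of_nonneg_left ?_ (by positivity)
    rw [← hcard, ← nsmul_eq_mul]
    refine Finset.sum_le_card_nsmul _ _ _ (fun i _ => ?_)
    rw [hcard]
    exact integral_cnt_diff n b i

lemma ae_unifPi_open (n : ℕ) : ∀ᵐ w ∂(unifPi n), ∀ j, w j ∈ openSq := by
  rw [ae_all_iff]
  intro j
  exact (Measure.quasiMeasurePreserving_eval (fun _ : Fin n => unifSquare) j).ae ae_openSq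

noncomputable def costF (n b : ℕ) (ω : (Fin n → E2) × (Fin n → E2)) : ℝ :=
  sInf {v : ℝ | ∃ σ : Equiv.Perm (Fin n),
            IsLocallyMaximal (b := b) ω.1 ω.2 σ ∧ v = ∑ j : Fin n, ‖ω.1 j - ω.2 (σ j)‖}

lemma costF_nonneg (n b : ℕ) (ω : (Fin n → E2) × (Fin n → E2)) : 0 ≤ costF n b ω := by
  apply Real.sInf_nonneg
  rintro _ ⟨σ, -, rfl⟩
  positivity

lemma costF_le {n b : ℕ} {ω : (Fin n → E2) × (Fin n → E2)} {B : ℝ} (σ : Equiv.Perm (Fin n))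
    (h : IsLocallyMaximal (b := b) ω.1 ω.2 σ) (hB : ∑ j : Fin n, ‖ω.1 j - ω.2 (σ j)‖ ≤ B) : costF n b ω ≤ B := by
  refine le_trans (csInf_le ⟨0, ?_⟩ ⟨σ, h, rfl⟩) hB
  rintro _ ⟨σ, -, rfl⟩
  positivity

lemma integral_cost (n b : ℕ) [NeZero b] {ε : ℝ} (hε : 0 < ε) (hε1 : ε ≤ 1)
    (hi : Integrable (costF n b) ((unifPi n).prod (unifPi n))) :
    ∫ ω, costF n b ω ∂((unifPi n).prod (unifPi n)) ≤
      ∫ p : (Fin n → Fin b × Fin b) × (Fin n → Fin b × Fin b), val ε p.1 p.2 ∂((cellPi n b).prod (cellPi n b)) := by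
  have mp := measurePreserving_all n b
  rw [← mp.map_eq, integral_map mp.measurable.aemeasurable (by rw [mp.map_eq]; exact hi.aestronglyMeasurable)]
  have hi2 := mp.integrable_comp_of_integrable hi
  refine (le_of_eq (integral_prod _ hi2)).trans ?_
  refine integral_mono Integrable.of_finite Integrable.of_finite (fun p => ?_)
  refine le_trans (integral_mono_of_nonneg (Filter.Eventually.of_forall fun q => costF_nonneg _ _ _)
    (integrable_bnd hε hε1 p.1 p.2) ?_) (integral_bnd hε hε1 p.1 p.2)
  have h1 : ∀ᵐ q ∂((unifPi n).prod (unifPi n)), ∀ j, q.1 j ∈ openSq :=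
    Measure.quasiMeasurePreserving_fst.ae (ae_unifPi_open n)
  have h2 : ∀ᵐ q ∂((unifPi n).prod (unifPi n)), ∀ j, q.2 j ∈ openSq :=
    Measure.quasiMeasurePreserving_snd.ae (ae_unifPi_open n)
  filter_upwards [h1, h2] with q hq1 hq2
  obtain ⟨σ, hσ, hc⟩ := exists_perm p.1 p.2 q.1 q.2 hq1 hq2 hε hε1
  exact costF_le σ hσ hc

lemma final_arith (n b : ℕ) (hn : 2 ≤ n) (hb : 1 ≤ b) :
    (b : ℝ) ^ 2 * ((b : ℝ)⁻¹ * (2 * √2 * (n : ℝ)⁻¹ * (n * ((b : ℝ) ^ 2)⁻¹) + 4 * √(n * ((b : ℝ) ^ 2)⁻¹ * (-Real.log (n : ℝ)⁻¹ / 2))))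
      + √2 / 2 * ((b : ℝ) ^ 2 * √(2 * n * (((b : ℝ) ^ 2)⁻¹ * (1 - ((b : ℝ) ^ 2)⁻¹)))) ≤
    10 * √(n * Real.log n) + √(n * ((b : ℝ) ^ 2 - 1)) := by
  have hb' : (1 : ℝ) ≤ b := by exact_mod_cast hb
  have hn' : (2 : ℝ) ≤ n := by exact_mod_cast hn
  have hb0 : (0 : ℝ) < b := by linarith
  have hn0 : (0 : ℝ) < n := by linarith
  have hlog : Real.log 2 ≤ Real.log n := Real.log_le_log (by norm_num) hn'
  have hl2 := Real.log_two_gt_d9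
  have hX : 1 ≤ √(n * Real.log n) := by
    rw [Real.one_le_sqrt]
    nlinarith
  have e1 : √(n * ((b : ℝ) ^ 2)⁻¹ * (-Real.log (n : ℝ)⁻¹ / 2)) ≤ (b : ℝ)⁻¹ * √(n * Real.log n) := by
    rw [Real.log_inv]
    apply Real.sqrt_le_iff.2 ⟨by positivity, ?_⟩
    rw [mul_pow, Real.sq_sqrt (by nlinarith), inv_pow]
    have : 0 ≤ n * ((b : ℝ) ^ 2)⁻¹ * Real.log n := by
      have : 0 ≤ Real.log n := by linarith
      positivity
    nlinarith
  have e2 : √(2 * n * (((b : ℝ) ^ 2)⁻¹ * (1 - ((b : ℝ) ^ 2)⁻¹))) = √2 * (((b : ℝ) ^ 2)⁻¹ * √(n * ((b : ℝ) ^ 2 - 1))) := by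
    have : 2 * n * (((b : ℝ) ^ 2)⁻¹ * (1 - ((b : ℝ) ^ 2)⁻¹)) = 2 * ((((b : ℝ) ^ 2)⁻¹) ^ 2 * (n * ((b : ℝ) ^ 2 - 1))) := by
      field_simp
    rw [this, Real.sqrt_mul (by norm_num), Real.sqrt_mul (by positivity), Real.sqrt_sq (by positivity)]
  have s2 : √2 * √2 = 2 := Real.mul_self_sqrt (by norm_num)
  have s3 : √2 ≤ 3 / 2 := by rw [Real.sqrt_le_iff]; norm_num
  rw [e2]
  apply add_le_add
  · calc _ ≤ (b : ℝ) ^ 2 * ((b : ℝ)⁻¹ * (2 * √2 * (n : ℝ)⁻¹ * (n * ((b : ℝ) ^ 2)⁻¹) + 4 * ((b : ℝ)⁻¹ * √(n * Real.log n)))) := by gcongr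
      _ = 2 * √2 * (b : ℝ)⁻¹ + 4 * √(n * Real.log n) := by field_simp
      _ ≤ 3 * 1 + 4 * √(n * Real.log n) := by
        have := inv_le_one_of_one_le₀ hb'
        have : √2 * (b : ℝ)⁻¹ ≤ 3 / 2 * 1 := by gcongr
        linarith
      _ ≤ _ := by linarith
  · apply le_of_eq
    rw [show √2 / 2 * ((b : ℝ) ^ 2 * (√2 * (((b : ℝ) ^ 2)⁻¹ * √(n * ((b : ℝ) ^ 2 - 1))))) =
      (√2 * √2) / 2 * ((b : ℝ) ^ 2 * ((b : ℝ) ^ 2)⁻¹) * √(n * ((b : ℝ) ^ 2 - 1)) by ring, s2, mul_inv_cancel₀ (by positivity)]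
    ring

lemma final_bound (n b : ℕ) (hn : 2 ≤ n) (hb : 1 ≤ b) :
    ∫ ω, costF n b ω ∂((unifPi n).prod (unifPi n)) ≤ 10 * √(n * Real.log n) + √(n * ((b : ℝ) ^ 2 - 1)) := by
  haveI : NeZero b := ⟨by omega⟩
  by_cases hi : Integrable (costF n b) ((unifPi n).prod (unifPi n))
  · have hn' : (1 : ℝ) ≤ n := by exact_mod_cast (by omega : 1 ≤ n)
    have h0 : (0 : ℝ) < (n : ℝ)⁻¹ := by positivity
    have h1 := inv_le_one_of_one_le₀ hn'
    exact (integral_cost n b h0 h1 hi).trans ((integral_val n b h0 h1).trans (final_arith n b hn hb))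
  · rw [integral_undef hi]; positivity

/-- there is a constant `C > 0` such that for all `n ≥ 2` and `b ≥ 1`
(with `m = b²`), for `2n` mutually independent uniform points `x₁,…,x_n, y₁,…,y_n` in the
unit square (modeled by the product measure on pairs of configurations `ω = (x, y)`),
partitioning the unit square into the `m` half-open congruent squares of side `1/b`, the
expectation of the minimum, over all locally maximal permutations `σ`, of the total distance
`Σ_j ‖x_j − y_{σ(j)}‖₂` is at most `C·sqrt(n·log n) + sqrt(n·(m−1))`. -/
theorem stmt_19 :
    ∃ C : ℝ, 0 < C ∧ ∀ n : ℕ, 2 ≤ n → ∀ b : ℕ, 1 ≤ b →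
      ∫ ω : (Fin n → EuclideanSpace ℝ (Fin 2)) × (Fin n → EuclideanSpace ℝ (Fin 2)),
          sInf {v : ℝ | ∃ σ : Equiv.Perm (Fin n),
            IsLocallyMaximal (b := b) ω.1 ω.2 σ ∧ v = ∑ j : Fin n, ‖ω.1 j - ω.2 (σ j)‖}
          ∂((Measure.pi fun _ : Fin n => unifSquare).prod
              (Measure.pi fun _ : Fin n => unifSquare))
        ≤ C * Real.sqrt ((n : ℝ) * Real.log n) +
            Real.sqrt ((n : ℝ) * (((b : ℝ) ^ 2) - 1)) := by
  exact ⟨10, by norm_num, fun n hn b hb => final_bound n b hn hb⟩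
end
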